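/- (Theorem 1.3(ii): lower Harnack inequality in the good fast diffusion range.) Let d ≥ 3 and m_c < m < 1, where m_c = (d−2)/d. There exist positive constants c₀′ and c depending only on m and d with the following property. Let u be a classical solution of the FDE ∂ₜu = Δ(u^m) on (0,T′) × Ω taking nonnegative initial data u₀ ∈ L¹_loc(Ω), and let x₀ ∈ Ω, R > 0 be such that the closed ball of radius 3R about x₀ is contained in Ω and ∫_{B_R(x₀)} u₀ dx > 0. Set t_* = c₀′ R^{2−d(1−m)} ‖u₀‖_{L¹(B_R(x₀))}^{1−m}. Then for every 0 < t < min{T′, t_*}: u(t,x₀) ≥ c (t/R²)^{1/(1−m)}. -/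

import Mathlib

open MeasureTheory Metric Set Real

/-- The spatial Laplacian of `f : ℝ^d → ℝ` at a point, as the sum of second
coordinate derivatives. -/
noncomputable def spaceLap {d : ℕ} (f : EuclideanSpace ℝ (Fin d) → ℝ)
    (x : EuclideanSpace ℝ (Fin d)) : ℝ :=
  ∑ i : Fin d, fderiv ℝ (fun y => fderiv ℝ f y (EuclideanSpace.single i 1)) x
    (EuclideanSpace.single i 1)

/-- `u` is a classical solution of the fast diffusion equation `∂ₜ u = Δ(u^m)`
on the space-time set `Q`: it is positive and smooth on `Q` and satisfies the
equation pointwise on `Q`. -/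
def IsFDESol {d : ℕ} (m : ℝ) (Q : Set (ℝ × EuclideanSpace ℝ (Fin d)))
    (u : ℝ → EuclideanSpace ℝ (Fin d) → ℝ) : Prop :=
  (∀ p ∈ Q, 0 < u p.1 p.2) ∧
  ContDiffOn ℝ (⊤ : ℕ∞) (fun p : ℝ × EuclideanSpace ℝ (Fin d) => u p.1 p.2) Q ∧
  ∀ p ∈ Q, deriv (fun s => u s p.2) p.1 = spaceLap (fun y => u p.1 y ^ m) p.2

/-- `u` (defined for `0 < t < T` on `Ω`) takes the initial data `u₀`:
it extends continuously to `{0} × Ω` with value `u₀` there. -/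
def TakesInit {d : ℕ} (T : ℝ) (Ω : Set (EuclideanSpace ℝ (Fin d)))
    (u : ℝ → EuclideanSpace ℝ (Fin d) → ℝ) (u₀ : EuclideanSpace ℝ (Fin d) → ℝ) : Prop :=
  ContinuousOn (fun p : ℝ × EuclideanSpace ℝ (Fin d) => u p.1 p.2) (Ico 0 T ×ˢ Ω) ∧
  ∀ x ∈ Ω, u 0 x = u₀ x




/-! ### Discrete part -/

/-- lattice box -/
noncomputable def bx (d : ℕ) (N : ℕ) : Finset (Fin d → ℤ) :=
  Fintype.piFinset fun _ => Finset.Icc (-(N : ℤ)) N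

lemma mem_bx {d N : ℕ} {k : Fin d → ℤ} : k ∈ bx d N ↔ ∀ i, -(N : ℤ) ≤ k i ∧ k i ≤ N := by
  simp [bx]

lemma card_bx (d N : ℕ) : ((bx d N).card : ℝ) = (2 * N + 1 : ℝ) ^ d := by
  have h : (N + 1 + N : ℤ) = 2 * N + 1 := by ring
  have h2 : (bx d N).card = (2 * N + 1) ^ d := by
    simp only [bx, Fintype.card_piFinset, Int.card_Icc, sub_neg_eq_add, Finset.prod_const,
      Finset.card_univ, Fintype.card_fin]
    congr 1
    omega
  rw [h2]; push_cast; ring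

/-- unit vector -/
def eu {d : ℕ} (i : Fin d) : Fin d → ℤ := Pi.single i 1

lemma eu_self {d : ℕ} (i : Fin d) : eu i i = 1 := by simp [eu]
lemma eu_ne {d : ℕ} {i j : Fin d} (h : j ≠ i) : eu i j = 0 := by simp [eu, h]

/-- discrete Laplacian -/
noncomputable def dLap {d : ℕ} (g : (Fin d → ℤ) → ℝ) (k : Fin d → ℤ) : ℝ :=
  ∑ i, (g (k + eu i) + g (k - eu i) - 2 * g k)

/-- one step of the scheme -/
noncomputable def st {d : ℕ} (φ : ℝ → ℝ) (ε lam : ℝ) (N : ℕ) (a : (Fin d → ℤ) → ℝ) :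
    (Fin d → ℤ) → ℝ :=
  fun k => if k ∈ bx d N then a k + lam * dLap (fun l => φ (a l)) k else ε

lemma st_in {d : ℕ} {φ : ℝ → ℝ} {ε lam : ℝ} {N : ℕ} {a : (Fin d → ℤ) → ℝ} {k : Fin d → ℤ}
    (hk : k ∈ bx d N) : st φ ε lam N a k = a k + lam * dLap (fun l => φ (a l)) k := by
  simp [st, hk]
lemma st_out {d : ℕ} {φ : ℝ → ℝ} {ε lam : ℝ} {N : ℕ} {a : (Fin d → ℤ) → ℝ} {k : Fin d → ℤ}
    (hk : k ∉ bx d N) : st φ ε lam N a k = ε := by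
  simp [st, hk]

lemma sub_mem_bx {d N : ℕ} {k : Fin d → ℤ} (hk : k ∈ bx d N) (i : Fin d) :
    k - eu i ∈ bx d (N + 1) := by
  rw [mem_bx] at *
  intro j
  have := hk j
  by_cases h : j = i
  · subst h; simp only [Pi.sub_apply, eu_self]; push_cast; omega
  · simp only [Pi.sub_apply, eu_ne h]; push_cast; omega

lemma add_mem_bx {d N : ℕ} {k : Fin d → ℤ} (hk : k ∈ bx d N) (i : Fin d) :
    k + eu i ∈ bx d (N + 1) := by
  rw [mem_bx] at *
  intro j
  have := hk j
  by_cases h : j = i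
  · subst h; simp only [Pi.add_apply, eu_self]; push_cast; omega
  · simp only [Pi.add_apply, eu_ne h]; push_cast; omega

lemma bx_subset {d N : ℕ} : bx d N ⊆ bx d (N + 1) := by
  intro k hk
  rw [mem_bx] at *
  intro j
  have := hk j
  push_cast; omega

/-- The CFL condition. -/
def CFL (d : ℕ) (φ : ℝ → ℝ) (ε lam : ℝ) : Prop :=
  0 < lam ∧ ∀ A B, ε ≤ B → B ≤ A → 0 ≤ φ A - φ B ∧ 4 * d * lam * (φ A - φ B) ≤ A - B

lemma comp_step {d : ℕ} {φ : ℝ → ℝ} {ε lam : ℝ} (hC : CFL d φ ε lam)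
    {a b : (Fin d → ℤ) → ℝ} (ha : ∀ k, ε ≤ a k) (k : Fin d → ℤ) (hk : a k ≤ b k)
    (hn : ∀ i, a (k + eu i) ≤ b (k + eu i) ∧ a (k - eu i) ≤ b (k - eu i)) :
    a k + lam * dLap (fun l => φ (a l)) k ≤ b k + lam * dLap (fun l => φ (b l)) k := by
  obtain ⟨hl, hC⟩ := hC
  have h1 : dLap (fun l => φ (a l)) k - 2 * d * (φ (b k) - φ (a k))
      ≤ dLap (fun l => φ (b l)) k := by
    have h2 : (2 * d * (φ (b k) - φ (a k)) : ℝ) = ∑ i : Fin d, 2 * (φ (b k) - φ (a k)) := by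
      simp; ring
    rw [h2, dLap, dLap, ← Finset.sum_sub_distrib]
    apply Finset.sum_le_sum
    intro i _
    have e1 := (hC _ _ (ha _) (hn i).1).1
    have e2 := (hC _ _ (ha _) (hn i).2).1
    linarith
  have h3 := hC _ _ (ha _) hk
  have h4 : 0 ≤ (d : ℝ) * lam * (φ (b k) - φ (a k)) := by
    have := h3.1; positivity
  nlinarith [mul_le_mul_of_nonneg_left h1 hl.le]

lemma dLap_const {d : ℕ} (c : ℝ) (k : Fin d → ℤ) : dLap (fun _ => c) k = 0 := by
  simp [dLap]; ring

lemma st_ge {d : ℕ} {φ : ℝ → ℝ} {ε lam : ℝ} {N : ℕ} (hC : CFL d φ ε lam)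
    {a : (Fin d → ℤ) → ℝ} (ha : ∀ k, ε ≤ a k) (k : Fin d → ℤ) : ε ≤ st φ ε lam N a k := by
  by_cases hk : k ∈ bx d N
  · rw [st_in hk]
    have := comp_step hC (a := fun _ => ε) (b := a) (fun _ => le_rfl) k (ha k)
      (fun i => ⟨ha _, ha _⟩)
    rw [dLap_const] at this
    linarith
  · rw [st_out hk]

lemma st_le {d : ℕ} {φ : ℝ → ℝ} {ε lam Y : ℝ} {N : ℕ} (hC : CFL d φ ε lam)
    {a : (Fin d → ℤ) → ℝ} (ha : ∀ k, ε ≤ a k) (hY : ∀ k, a k ≤ Y) (k : Fin d → ℤ) :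
    st φ ε lam N a k ≤ Y := by
  by_cases hk : k ∈ bx d N
  · rw [st_in hk]
    have := comp_step hC (a := a) (b := fun _ => Y) ha k (hY k)
      (fun i => ⟨hY _, hY _⟩)
    rw [dLap_const] at this
    linarith
  · rw [st_out hk]; exact (ha 0).trans (hY 0)

/-- reflection in coordinate `i`, `k_i ↦ A - k_i` -/
def rfl' {d : ℕ} (i : Fin d) (A : ℤ) (k : Fin d → ℤ) : Fin d → ℤ := Function.update k i (A - k i)

lemma refl_step {d : ℕ} {φ : ℝ → ℝ} {ε lam : ℝ} {N : ℕ} (hC : CFL d φ ε lam)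
    {a : (Fin d → ℤ) → ℝ} (ha : ∀ k, ε ≤ a k) (i : Fin d) (A s : ℤ) (hA : 0 < A)
    (hs : s = 1 ∨ s = -1)
    (h : ∀ k, s * (2 * k i) ≤ A → a (rfl' i (s * A) k) ≤ a k) :
    ∀ k, s * (2 * k i) ≤ A → st φ ε lam N a (rfl' i (s * A) k) ≤ st φ ε lam N a k := by
  intro k hk
  by_cases heq : s * (2 * k i) = A
  · have q1 : rfl' i (s * A) k = k := by
      ext l
      by_cases hl : l = i
      · subst hl; simp only [rfl', Function.update_self]
        rcases hs with rfl | rfl <;> omega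
      · simp [rfl', hl]
    rw [q1]
  by_cases hkD : rfl' i (s * A) k ∈ bx d N
  swap
  · rw [st_out hkD]; exact st_ge hC ha k
  have hkD' : k ∈ bx d N := by
    rw [mem_bx] at *
    intro j
    have := hkD j
    by_cases hj : j = i
    · subst hj
      simp only [rfl', Function.update_self] at this
      rcases hs with rfl | rfl <;> omega
    · simpa only [rfl', Function.update_of_ne hj] using this
  rw [st_in hkD, st_in hkD']
  set σ := rfl' i (s * A) with hσ
  have hX := h k hk
  obtain ⟨hl, hC⟩ := hC
  have h3 := hC _ _ (ha (σ k)) hX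
  have key : ∀ j : Fin d, -(2 * (φ (a k) - φ (a (σ k)))) ≤ (φ (a (k + eu j)) + φ (a (k - eu j)))
      - (φ (a (σ k + eu j)) + φ (a (σ k - eu j))) := by
    intro j
    by_cases hj : j = i
    · subst hj
      have e1 : ∀ t : ℤ, σ k - t • eu j = σ (k + t • eu j) := by
        intro t
        ext l
        by_cases hl : l = j
        · subst hl; simp [hσ, rfl', eu_self]; ring
        · simp [hσ, rfl', hl, eu_ne hl]
      have f1 : σ k - eu j = σ (k + eu j) := by simpa using e1 1
      have f2 : σ k + eu j = σ (k - eu j) := by simpa [sub_eq_add_neg] using e1 (-1)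
      rw [f1, f2]
      have g : ∀ t : ℤ, (t = 1 ∨ t = -1) → -(φ (a k) - φ (a (σ k))) ≤
          φ (a (k + t • eu j)) - φ (a (σ (k + t • eu j))) := by
        intro t ht
        by_cases hh : s * (2 * (k + t • eu j) j) ≤ A
        · have := (hC _ _ (ha _) (h _ hh)).1
          linarith [h3.1]
        · have q : k + t • eu j = σ k := by
            ext l
            by_cases hl : l = j
            · subst hl
              simp only [hσ, rfl', Function.update_self, Pi.add_apply, Pi.smul_apply, eu_self,
                smul_eq_mul, mul_one] at hh ⊢
              rcases hs with rfl | rfl <;> rcases ht with rfl | rfl <;> omega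
            · simp [hσ, rfl', hl, eu_ne hl]
          have q2 : σ (k + t • eu j) = k := by
            rw [q]; ext l
            by_cases hl : l = j
            · subst hl; simp [hσ, rfl']
            · simp [hσ, rfl', hl]
          rw [q2, q]; linarith
      have g1 := g 1 (Or.inl rfl)
      have g2 := g (-1) (Or.inr rfl)
      simp only [one_smul, neg_smul, ← sub_eq_add_neg] at g1 g2
      linarith
    · have e1 : σ k + eu j = σ (k + eu j) := by
        ext l
        by_cases hl : l = i
        · subst hl; simp [hσ, rfl', eu_ne (Ne.symm hj)]
        · simp [hσ, rfl', hl]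
      have e2 : σ k - eu j = σ (k - eu j) := by
        ext l
        by_cases hl : l = i
        · subst hl; simp [hσ, rfl', eu_ne (Ne.symm hj)]
        · simp [hσ, rfl', hl]
      rw [e1, e2]
      have c1 := (hC _ _ (ha _) (h (k + eu j) (by simpa [eu_ne (Ne.symm hj)] using hk))).1
      have c2 := (hC _ _ (ha _) (h (k - eu j) (by simpa [eu_ne (Ne.symm hj)] using hk))).1
      linarith [h3.1]
  have h1 : dLap (fun l => φ (a l)) (σ k) - 4 * d * (φ (a k) - φ (a (σ k)))
      ≤ dLap (fun l => φ (a l)) k := by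
    have h2 : (4 * d * (φ (a k) - φ (a (σ k))) : ℝ)
        = ∑ i : Fin d, 4 * (φ (a k) - φ (a (σ k))) := by
      simp; ring
    rw [h2, dLap, dLap, ← Finset.sum_sub_distrib]
    apply Finset.sum_le_sum
    intro j _
    have := key j
    linarith [h3.1]
  nlinarith [mul_le_mul_of_nonneg_left h1 hl.le, h3.2]


lemma sum_shift_add {d N : ℕ} (i : Fin d) (G : (Fin d → ℤ) → ℝ) (hG : ∀ k, k ∉ bx d N → G k = 0) :
    ∑ k ∈ bx d (N + 1), G (k + eu i) = ∑ k ∈ bx d N, G k := by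
  symm
  refine Finset.sum_of_injOn (fun k => k - eu i) ?_ ?_ ?_ ?_
  · intro a _ b _ h; simpa using h
  · intro a ha; exact sub_mem_bx ha i
  · intro k _ hk
    apply hG
    intro hk'
    exact hk ⟨k + eu i, hk', by simp⟩
  · intro k _; simp

lemma sum_shift_sub {d N : ℕ} (i : Fin d) (G : (Fin d → ℤ) → ℝ) (hG : ∀ k, k ∉ bx d N → G k = 0) :
    ∑ k ∈ bx d (N + 1), G (k - eu i) = ∑ k ∈ bx d N, G k := by
  symm
  refine Finset.sum_of_injOn (fun k => k + eu i) ?_ ?_ ?_ ?_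
  · intro a _ b _ h; simpa using h
  · intro a ha; exact add_mem_bx ha i
  · intro k _ hk
    apply hG
    intro hk'
    exact hk ⟨k - eu i, hk', by simp⟩
  · intro k _; simp

lemma sum_big {d N : ℕ} (G : (Fin d → ℤ) → ℝ) (hG : ∀ k, k ∉ bx d N → G k = 0) :
    ∑ k ∈ bx d (N + 1), G k = ∑ k ∈ bx d N, G k := by
  symm
  apply Finset.sum_subset bx_subset
  intro k _ hk; exact hG k hk

lemma sbp {d N : ℕ} (f g : (Fin d → ℤ) → ℝ) (hf : ∀ k, k ∉ bx d N → f k = 0) :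
    ∑ k ∈ bx d N, f k * dLap g k =
      -∑ k ∈ bx d (N + 1), ∑ i, (f (k + eu i) - f k) * (g (k + eu i) - g k) := by
  simp only [dLap, Finset.mul_sum]
  rw [Finset.sum_comm, Finset.sum_comm (s := bx d (N + 1)), ← Finset.sum_neg_distrib]
  apply Finset.sum_congr rfl
  intro i _
  have h1 := sum_shift_add (N := N) i (fun k => f k * (g k - g (k - eu i)))
    (fun k hk => by simp [hf k hk])
  have h2 := sum_big (N := N) (fun k => f k * (g (k + eu i) - g k))
    (fun k hk => by simp [hf k hk])
  simp only [add_sub_cancel_right] at h1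
  have h3 : ∑ k ∈ bx d (N + 1), (f (k + eu i) - f k) * (g (k + eu i) - g k)
     = ∑ k ∈ bx d (N + 1), f (k + eu i) * (g (k + eu i) - g k)
       - ∑ k ∈ bx d (N + 1), f k * (g (k + eu i) - g k) := by
    rw [← Finset.sum_sub_distrib]; apply Finset.sum_congr rfl; intros; ring
  rw [h3, h1, h2, neg_sub, ← Finset.sum_sub_distrib]
  apply Finset.sum_congr rfl; intros; ring

lemma sum_dLap_le {d N : ℕ} (g : (Fin d → ℤ) → ℝ) (c : ℝ) (hg : ∀ k, c ≤ g k)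
    (hg0 : ∀ k, k ∉ bx d N → g k = c) : ∑ k ∈ bx d N, dLap g k ≤ 0 := by
  classical
  have h := sbp (N := N) (fun k => if k ∈ bx d N then (1 : ℝ) else 0) g (fun k hk => by simp [hk])
  have h1 : ∑ k ∈ bx d N, (fun k => if k ∈ bx d N then (1 : ℝ) else 0) k * dLap g k
      = ∑ k ∈ bx d N, dLap g k := by
    apply Finset.sum_congr rfl; intro k hk; simp [hk]
  rw [← h1, h, neg_nonpos]
  apply Finset.sum_nonneg; intro k _; apply Finset.sum_nonneg; intro i _
  by_cases a : k ∈ bx d N <;> by_cases b : k + eu i ∈ bx d N <;> simp [a, b]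
  · rw [hg0 _ b]; exact hg k
  · rw [hg0 _ a]; exact hg _

lemma sum_psi {d N : ℕ} (g : (Fin d → ℤ) → ℝ) (hg : ∀ k, 0 ≤ g k)
    (hg0 : ∀ k, k ∉ bx d N → g k = 0) :
    -(2 * d / (N + 1 : ℝ) ^ 2) * ∑ k ∈ bx d N, g k ≤
      ∑ k ∈ bx d N, (1 - (∑ j, (k j : ℝ) ^ 2) / (N + 1 : ℝ) ^ 2) * dLap g k := by
  set ψ : (Fin d → ℤ) → ℝ := fun k => 1 - (∑ j, (k j : ℝ) ^ 2) / (N + 1 : ℝ) ^ 2 with hψ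
  have hN : (0 : ℝ) < (N + 1 : ℝ) ^ 2 := by positivity
  have A : ∑ k ∈ bx d (N + 1), ψ k * dLap g k = -(2 * d / (N + 1 : ℝ) ^ 2) * ∑ k ∈ bx d N, g k := by
    simp only [dLap, Finset.mul_sum]
    rw [Finset.sum_comm]
    have : ∀ i : Fin d, ∑ k ∈ bx d (N + 1), ψ k * (g (k + eu i) + g (k - eu i) - 2 * g k)
        = ∑ k ∈ bx d N, -(2 / (N + 1 : ℝ) ^ 2) * g k := by
      intro i
      have h1 := sum_shift_add (N := N) i (fun k => ψ (k - eu i) * g k)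
        (fun k hk => by simp [hg0 k hk])
      have h2 := sum_shift_sub (N := N) i (fun k => ψ (k + eu i) * g k)
        (fun k hk => by simp [hg0 k hk])
      have h3 := sum_big (N := N) (fun k => ψ k * g k) (fun k hk => by simp [hg0 k hk])
      simp only [add_sub_cancel_right, sub_add_cancel] at h1 h2
      have h4 : ∑ k ∈ bx d (N + 1), ψ k * (g (k + eu i) + g (k - eu i) - 2 * g k)
        = ∑ k ∈ bx d (N + 1), ψ k * g (k + eu i) + ∑ k ∈ bx d (N + 1), ψ k * g (k - eu i)
          - 2 * ∑ k ∈ bx d (N + 1), ψ k * g k := by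
        rw [Finset.mul_sum, ← Finset.sum_add_distrib, ← Finset.sum_sub_distrib]
        apply Finset.sum_congr rfl; intros; ring
      rw [h4, h1, h2, h3, Finset.mul_sum, ← Finset.sum_add_distrib, ← Finset.sum_sub_distrib]
      apply Finset.sum_congr rfl
      intro k _
      have key : ψ (k - eu i) + ψ (k + eu i) - 2 * ψ k = -(2 / (N + 1 : ℝ) ^ 2) := by
        have e : ∑ j, (((k - eu i) j : ℤ) : ℝ) ^ 2 + ∑ j, (((k + eu i) j : ℤ) : ℝ) ^ 2
            - 2 * ∑ j, (k j : ℝ) ^ 2 = 2 := by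
          rw [Finset.mul_sum, ← Finset.sum_add_distrib, ← Finset.sum_sub_distrib]
          rw [Finset.sum_eq_single i]
          · simp [eu_self]; ring
          · intro j _ hj; simp [eu_ne hj]; ring
          · simp
        simp only [hψ]
        field_simp
        linarith
      rw [← key]; ring
    rw [Finset.sum_congr rfl (fun i _ => this i)]
    simp only [← Finset.mul_sum, Finset.sum_const, Finset.card_univ, Fintype.card_fin, nsmul_eq_mul]
    ring
  rw [← A, ← Finset.sum_sdiff (bx_subset (d := d) (N := N))]
  have : ∑ k ∈ bx d (N + 1) \ bx d N, ψ k * dLap g k ≤ 0 := by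
    apply Finset.sum_nonpos
    intro k hk
    rw [Finset.mem_sdiff] at hk
    apply mul_nonpos_of_nonpos_of_nonneg
    · have hk2 := hk.2
      rw [mem_bx] at hk2
      push Not at hk2
      obtain ⟨i, hi⟩ := hk2
      have h1 : ((N : ℝ) + 1) ^ 2 ≤ (k i : ℝ) ^ 2 := by
        have : ((N : ℤ) + 1) ^ 2 ≤ (k i) ^ 2 := by
          by_cases h : -(N : ℤ) ≤ k i
          · have := hi h; nlinarith
          · nlinarith
        exact_mod_cast this
      have h2 : (k i : ℝ) ^ 2 ≤ ∑ j, (k j : ℝ) ^ 2 :=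
        Finset.single_le_sum (f := fun j => (k j : ℝ) ^ 2) (fun j _ => sq_nonneg _)
          (Finset.mem_univ i)
      simp only [hψ]
      rw [sub_nonpos, le_div_iff₀ hN]; linarith
    · apply Finset.sum_nonneg
      intro i _
      rw [hg0 k hk.2]
      have := hg (k + eu i); have := hg (k - eu i); linarith
  linarith


lemma telesc (h : ℤ → ℝ) (a : ℤ) (ha : h a = 0) (n : ℕ) :
    ENNReal.ofReal (h (a + n)) ≤ ∑' j, ENNReal.ofReal |h (j + 1) - h j| := by
  have h1 : h (a + n) ≤ ∑ j ∈ Finset.range n, |h (a + j + 1) - h (a + j)| := by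
    induction n with
    | zero => simp [ha]
    | succ n ih =>
      rw [Finset.sum_range_succ]
      have := le_abs_self (h (a + n + 1) - h (a + n))
      push_cast
      rw [← add_assoc]
      linarith
  calc ENNReal.ofReal (h (a + n))
      ≤ ENNReal.ofReal (∑ j ∈ Finset.range n, |h (a + j + 1) - h (a + j)|) :=
        ENNReal.ofReal_le_ofReal h1
    _ = ∑ j ∈ Finset.range n, ENNReal.ofReal |h (a + j + 1) - h (a + j)| :=
        ENNReal.ofReal_sum_of_nonneg (fun _ _ => abs_nonneg _)
    _ ≤ ∑' j : ℕ, ENNReal.ofReal |h (a + j + 1) - h (a + j)| := ENNReal.sum_le_tsum _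
    _ ≤ ∑' j, ENNReal.ofReal |h (j + 1) - h j| := by
        have hinj : Function.Injective (fun j : ℕ => a + (j : ℤ)) := by
          intro x y hxy; simpa using hxy
        exact ENNReal.tsum_comp_le_tsum_of_injective hinj (fun j => ENNReal.ofReal |h (j + 1) - h j|)

lemma dsob {d N : ℕ} (hd : 2 ≤ d) (F : (Fin d → ℤ) → ℝ) (hF : ∀ k, 0 ≤ F k)
    (hF0 : ∀ k, k ∉ bx d N → F k = 0) :
    ∑ k ∈ bx d N, F k ^ ((d : ℝ) / (d - 1)) ≤
      (∑ k ∈ bx d (N + 1), ∑ i, |F (k + eu i) - F k|) ^ ((d : ℝ) / (d - 1)) := by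
  have hd1 : (1 : ℝ) < d := by exact_mod_cast hd
  have hd0 : (0 : ℝ) < d - 1 := by linarith
  have hβ : (0 : ℝ) < d / (d - 1) := by positivity
  set g : (Fin d → ℤ) → ℝ := fun k => ∑ i, |F (k + eu i) - F k| with hg
  have hg0 : ∀ k, 0 ≤ g k := fun k => Finset.sum_nonneg fun _ _ => abs_nonneg _
  have hgout : ∀ k, k ∉ bx d (N + 1) → g k = 0 := by
    intro k hk
    apply Finset.sum_eq_zero
    intro i _
    have h1 : k ∉ bx d N := fun h => hk (bx_subset h)
    have h2 : k + eu i ∉ bx d N := fun h => hk (by simpa using sub_mem_bx h i)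
    rw [hF0 _ h1, hF0 _ h2]; simp
  have hp : Real.HolderConjugate (Fintype.card (Fin d)) ((d : ℝ) / (d - 1)) := by
    have := Real.HolderConjugate.conjExponent hd1
    simpa [Real.conjExponent] using this
  have key := lintegral_prod_lintegral_pow_le (ι := Fin d) (A := fun _ => ℤ)
    (μ := fun _ => Measure.count) hp (f := fun k => ENNReal.ofReal (g k)) (measurable_of_countable _)
  have hone : ∀ k : Fin d → ℤ, (Measure.pi fun _ : Fin d => (Measure.count : Measure ℤ)) {k} = 1 := by
    intro k
    rw [← Set.univ_pi_singleton, Measure.pi_pi]; simp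
  rw [lintegral_countable', lintegral_countable'] at key
  simp only [hone, mul_one, lintegral_count] at key
  have hR : ∑' k, ENNReal.ofReal (g k) = ENNReal.ofReal (∑ k ∈ bx d (N + 1), g k) := by
    rw [tsum_eq_sum (s := bx d (N + 1)), ENNReal.ofReal_sum_of_nonneg (fun _ _ => hg0 _)]
    intro k hk; simp [hgout k hk]
  rw [hR, ENNReal.ofReal_rpow_of_nonneg (Finset.sum_nonneg fun _ _ => hg0 _) hβ.le] at key
  have hL : ENNReal.ofReal (∑ k ∈ bx d N, F k ^ ((d : ℝ) / (d - 1))) ≤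
      ∑' k, ∏ i : Fin d, (∑' j : ℤ, ENNReal.ofReal (g (Function.update k i j))) ^
        ((1 : ℝ) / (Fintype.card (Fin d) - 1 : ℝ)) := by
    rw [ENNReal.ofReal_sum_of_nonneg (fun _ _ => Real.rpow_nonneg (hF _) _)]
    refine le_trans (Finset.sum_le_sum ?_) (ENNReal.sum_le_tsum (bx d N))
    intro k hk
    have h1 : ∀ i : Fin d, ENNReal.ofReal (F k) ≤
        ∑' j : ℤ, ENNReal.ofReal (g (Function.update k i j)) := by
      intro i
      have hki := (mem_bx.1 hk) i
      have t := telesc (fun j => F (Function.update k i j)) (-(N + 1 : ℤ)) (by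
        apply hF0
        rw [mem_bx]; push Not
        refine ⟨i, ?_⟩
        simp) (k i + (N + 1)).toNat
      have e : -(N + 1 : ℤ) + ((k i + (N + 1)).toNat : ℤ) = k i := by
        rw [Int.toNat_of_nonneg (by omega)]; ring
      rw [e] at t
      simp only [Function.update_eq_self] at t
      refine t.trans (ENNReal.tsum_le_tsum ?_)
      intro j
      apply ENNReal.ofReal_le_ofReal
      have : Function.update k i (j + 1) = Function.update k i j + eu i := by
        ext l
        by_cases hl : l = i
        · subst hl; simp [eu_self]
        · simp [hl, eu_ne hl]
      rw [this]
      exact Finset.single_le_sum (f := fun i' => |F (Function.update k i j + eu i')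
        - F (Function.update k i j)|) (fun _ _ => abs_nonneg _) (Finset.mem_univ i)
    have hpos : (0 : ℝ) ≤ (1 : ℝ) / (Fintype.card (Fin d) - 1 : ℝ) := by simp; linarith
    calc ENNReal.ofReal (F k ^ ((d : ℝ) / (d - 1)))
        = ENNReal.ofReal (F k) ^ ((d : ℝ) / (d - 1)) := by
          rw [ENNReal.ofReal_rpow_of_nonneg (hF k) hβ.le]
      _ = ∏ i : Fin d, ENNReal.ofReal (F k) ^ ((1 : ℝ) / (Fintype.card (Fin d) - 1 : ℝ)) := by
          rw [Finset.prod_const, Finset.card_univ, Fintype.card_fin, ← ENNReal.rpow_natCast,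
            ← ENNReal.rpow_mul]
          congr 1; field_simp
      _ ≤ _ := Finset.prod_le_prod' fun i _ => ENNReal.rpow_le_rpow (h1 i) hpos
  have := hL.trans key
  rwa [ENNReal.ofReal_le_ofReal_iff (Real.rpow_nonneg (Finset.sum_nonneg fun _ _ => hg0 _) _)] at this


lemma tan_conc {r a b : ℝ} (hr0 : 0 ≤ r) (hr1 : r ≤ 1) (ha : 0 < a) (hb : 0 < b) :
    b ^ r ≤ a ^ r + r * a ^ (r - 1) * (b - a) := by
  have h := rpow_one_add_le_one_add_mul_self (s := b / a - 1)
    (by have : 0 < b / a := by positivity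
        linarith) hr0 hr1
  rw [add_sub_cancel, Real.div_rpow hb.le ha.le] at h
  have ha' : 0 < a ^ r := Real.rpow_pos_of_pos ha r
  rw [div_le_iff₀ ha'] at h
  rw [Real.rpow_sub_one ha.ne']
  calc b ^ r ≤ _ := h
    _ = _ := by field_simp

lemma tan_conv {r a b : ℝ} (hr1 : 1 ≤ r) (ha : 0 < a) (hb : 0 < b) :
    a ^ r + r * a ^ (r - 1) * (b - a) ≤ b ^ r := by
  have h := one_add_mul_self_le_rpow_one_add (s := b / a - 1)
    (by have : 0 < b / a := by positivity
        linarith) hr1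
  rw [add_sub_cancel, Real.div_rpow hb.le ha.le] at h
  have ha' : 0 < a ^ r := Real.rpow_pos_of_pos ha r
  rw [le_div_iff₀ ha'] at h
  rw [Real.rpow_sub_one ha.ne']
  calc _ = _ := by field_simp
    _ ≤ b ^ r := h

lemma tan_neg {r a b : ℝ} (hr0 : 0 ≤ r) (hr1 : r ≤ 1) (ha : 0 < a) (hb : 0 < b) :
    a ^ (-r) - r * a ^ (-r - 1) * (b - a) ≤ b ^ (-r) := by
  have h := rpow_one_add_le_one_add_mul_self (s := b / a - 1)
    (by have : 0 < b / a := by positivity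
        linarith) hr0 hr1
  have ha' : 0 < a ^ r := Real.rpow_pos_of_pos ha r
  have hb' : 0 < b ^ r := Real.rpow_pos_of_pos hb r
  have hx0 : 0 < b / a := by positivity
  rw [add_sub_cancel, Real.div_rpow hb.le ha.le] at h
  rw [Real.rpow_sub_one ha.ne', Real.rpow_neg ha.le, Real.rpow_neg hb.le]
  set y := r * (b / a - 1) with hy
  have h2 : (1 - y) * b ^ r ≤ a ^ r := by
    rw [div_le_iff₀ ha'] at h
    by_cases hy1 : 1 - y ≤ 0
    · nlinarith
    · push Not at hy1
      nlinarith [mul_le_mul_of_nonneg_left h hy1.le, sq_nonneg y, mul_nonneg (sq_nonneg y) ha'.le]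
  have h3 : (a ^ r)⁻¹ - r * ((a ^ r)⁻¹ / a) * (b - a) = (1 - y) / a ^ r := by
    rw [hy]; field_simp
  rw [h3, div_le_iff₀ ha', inv_mul_eq_div, le_div_iff₀ hb']
  exact h2

/-- edge inequality -/
lemma edge_ineq {m p a b : ℝ} (hm0 : 0 < m) (hm1 : m < 1) (hp0 : 0 < p) (hp1 : p < 1)
    (hb : 0 < b) (hab : b ≤ a) :
    ((a + 1) ^ ((p + m) / 2) - (b + 1) ^ ((p + m) / 2)) ^ 2 ≤
      ((a + 1) / (m * (1 - p))) * ((a ^ m - b ^ m) * ((b + 1) ^ (p - 1) - (a + 1) ^ (p - 1))) := by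
  have ha : 0 < a := hb.trans_le hab
  set A := a + 1 with hA
  set B := b + 1 with hB
  have hA0 : 0 < A := by positivity
  have hB0 : 0 < B := by positivity
  have hAB : B ≤ A := by linarith
  set s := (p + m) / 2 with hs
  have hs0 : 0 < s := by positivity
  have hs1 : s ≤ 1 := by rw [hs]; linarith
  have e1 : A ^ s - B ^ s ≤ A ^ (s - 1) * (A - B) := by
    have h1 : B / A ≤ (B / A) ^ s := by
      conv_lhs => rw [← Real.rpow_one (B / A)]
      exact Real.rpow_le_rpow_of_exponent_ge (by positivity) ((div_le_one hA0).2 hAB) hs1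
    rw [Real.div_rpow hB0.le hA0.le, le_div_iff₀ (Real.rpow_pos_of_pos hA0 s)] at h1
    rw [Real.rpow_sub_one hA0.ne']
    have : A ^ s / A * (A - B) = A ^ s - B / A * A ^ s := by field_simp
    linarith
  have e0 : 0 ≤ A ^ s - B ^ s := sub_nonneg.2 (Real.rpow_le_rpow hB0.le hAB hs0.le)
  have e2 : m * A ^ (m - 1) * (A - B) ≤ a ^ m - b ^ m := by
    have h1 := tan_conc hm0.le hm1.le ha hb
    have h2 : A ^ (m - 1) ≤ a ^ (m - 1) :=
      Real.rpow_le_rpow_of_nonpos ha (by linarith) (by linarith)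
    have h3 : A - B = a - b := by rw [hA, hB]; ring
    rw [h3]
    have h4 : m * A ^ (m - 1) * (a - b) ≤ m * a ^ (m - 1) * (a - b) := by
      apply mul_le_mul_of_nonneg_right _ (by linarith)
      exact mul_le_mul_of_nonneg_left h2 hm0.le
    linarith
  have e3 : (1 - p) * A ^ (p - 2) * (A - B) ≤ B ^ (p - 1) - A ^ (p - 1) := by
    have h1 := tan_neg (r := 1 - p) (by linarith) (by linarith) hA0 hB0
    have i1 : -(1 - p) = p - 1 := by ring
    have i2 : -(1 - p) - 1 = p - 2 := by ring
    rw [i2, i1] at h1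
    linarith
  have hmp : 0 < m * (1 - p) := mul_pos hm0 (by linarith)
  have hAm := Real.rpow_pos_of_pos hA0 (m - 1)
  have hAp := Real.rpow_pos_of_pos hA0 (p - 2)
  have e4 : (m * A ^ (m - 1) * (A - B)) * ((1 - p) * A ^ (p - 2) * (A - B)) ≤
      (a ^ m - b ^ m) * (B ^ (p - 1) - A ^ (p - 1)) := by
    have hAB' : 0 ≤ A - B := by linarith
    have hp' : 0 < 1 - p := by linarith
    exact mul_le_mul e2 e3 (by positivity) (le_trans (by positivity) e2)
  calc (A ^ s - B ^ s) ^ 2 ≤ (A ^ (s - 1) * (A - B)) ^ 2 := by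
        apply pow_le_pow_left₀ e0 e1
    _ = (A / (m * (1 - p))) * ((m * A ^ (m - 1) * (A - B)) * ((1 - p) * A ^ (p - 2) * (A - B))) := by
        have : (A ^ (s - 1)) ^ 2 = A * (A ^ (m - 1) * A ^ (p - 2)) := by
          rw [← Real.rpow_natCast, ← Real.rpow_mul hA0.le, ← Real.rpow_add hA0]
          conv_rhs => rw [← Real.rpow_one_add' hA0.le (by push_cast [hs]; linarith)]
          congr 1; push_cast; rw [hs]; ring
        have hp' : (1 - p) ≠ 0 := (by linarith : (0:ℝ) < 1 - p).ne'
        rw [mul_pow, this]; field_simp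
    _ ≤ _ := mul_le_mul_of_nonneg_left e4 (by positivity)

/-- entropy quadratic bound -/
lemma ent_pt {p a b : ℝ} (hp0 : 0 < p) (hp1 : p < 1) (ha : 1 ≤ a) (hb : 1 ≤ b) :
    p * (a ^ (p - 1) * (b - a)) - (b - a) ^ 2 ≤ b ^ p - a ^ p := by
  have ha0 : 0 < a := by linarith
  have hb0 : 0 < b := by linarith
  have h1 := tan_conc hp0.le hp1.le hb0 ha0
  have key : p * ((a ^ (p - 1) - b ^ (p - 1)) * (b - a)) ≤ (b - a) ^ 2 := by
    have i1 : -(1 - p) = p - 1 := by ring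
    have i2 : -(1 - p) - 1 = p - 2 := by ring
    have t1 := tan_neg (r := 1 - p) (by linarith) (by linarith) ha0 hb0
    have t2 := tan_neg (r := 1 - p) (by linarith) (by linarith) hb0 ha0
    rw [i2, i1] at t1 t2
    have q1 : a ^ (p - 2) ≤ 1 := Real.rpow_le_one_of_one_le_of_nonpos ha (by linarith)
    have q2 : b ^ (p - 2) ≤ 1 := Real.rpow_le_one_of_one_le_of_nonpos hb (by linarith)
    have q1' := Real.rpow_pos_of_pos ha0 (p - 2)
    have q2' := Real.rpow_pos_of_pos hb0 (p - 2)
    have w : (a ^ (p - 1) - b ^ (p - 1)) * (b - a) ≤ (b - a) ^ 2 := by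
      rcases le_total a b with h | h
      · have : a ^ (p - 1) - b ^ (p - 1) ≤ b - a := by
          have : (1 - p) * a ^ (p - 2) ≤ 1 := by nlinarith
          nlinarith
        nlinarith
      · have : -(a ^ (p - 1) - b ^ (p - 1)) ≤ a - b := by
          have : (1 - p) * b ^ (p - 2) ≤ 1 := by nlinarith
          nlinarith
        nlinarith
    have w2 : 0 ≤ (b - a) ^ 2 := sq_nonneg _
    nlinarith
  nlinarith

lemma conv_pt {q a b : ℝ} (hq1 : 1 < q) (hq2 : q < 2) (ha : 1 ≤ a) (hb : 1 ≤ b) :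
    b ^ q - a ^ q ≤ q * (a ^ (q - 1) * (b - a)) + q * (b - a) ^ 2 := by
  have ha0 : 0 < a := by linarith
  have hb0 : 0 < b := by linarith
  have h1 := tan_conv hq1.le hb0 ha0
  have t1 := tan_conc (r := q - 1) (by linarith) (by linarith) ha0 hb0
  have t2 := tan_conc (r := q - 1) (by linarith) (by linarith) hb0 ha0
  have i2 : q - 1 - 1 = q - 2 := by ring
  rw [i2] at t1 t2
  have q1 : a ^ (q - 2) ≤ 1 := Real.rpow_le_one_of_one_le_of_nonpos ha (by linarith)
  have q2 : b ^ (q - 2) ≤ 1 := Real.rpow_le_one_of_one_le_of_nonpos hb (by linarith)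
  have q1' := Real.rpow_pos_of_pos ha0 (q - 2)
  have q2' := Real.rpow_pos_of_pos hb0 (q - 2)
  have w : (b ^ (q - 1) - a ^ (q - 1)) * (b - a) ≤ (b - a) ^ 2 := by
    rcases le_total a b with h | h
    · have : b ^ (q - 1) - a ^ (q - 1) ≤ b - a := by
        have : (q - 1) * a ^ (q - 2) ≤ 1 := by nlinarith
        nlinarith
      nlinarith
    · have : -(b ^ (q - 1) - a ^ (q - 1)) ≤ a - b := by
        have : (q - 1) * b ^ (q - 2) ≤ 1 := by nlinarith
        nlinarith
      nlinarith
  nlinarith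


/-- dissipation -/
noncomputable def gain {d : ℕ} (m p : ℝ) (N : ℕ) (a : (Fin d → ℤ) → ℝ) : ℝ :=
  ∑ k ∈ bx d (N + 1), ∑ i, ((a k + 1) ^ (p - 1) - (a (k + eu i) + 1) ^ (p - 1)) *
    (a (k + eu i) ^ m - a k ^ m)

lemma dLap_bound {d : ℕ} {m Y : ℝ} (hm0 : 0 < m) {a : (Fin d → ℤ) → ℝ} (ha : ∀ k, 0 < a k)
    (hY : ∀ k, a k ≤ Y) (k : Fin d → ℤ) :
    (dLap (fun l => a l ^ m) k) ^ 2 ≤ (4 * d * Y ^ m) ^ 2 := by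
  have h0 : ∀ k, 0 ≤ a k ^ m := fun k => (Real.rpow_pos_of_pos (ha k) m).le
  have h1 : ∀ k, a k ^ m ≤ Y ^ m := fun k => Real.rpow_le_rpow (ha k).le (hY k) hm0.le
  have hYm : 0 ≤ Y ^ m := (h0 k).trans (h1 k)
  apply sq_le_sq'
  · have : (-(4 * d * Y ^ m) : ℝ) = ∑ i : Fin d, -(4 * Y ^ m) := by simp; ring
    rw [this, dLap]
    apply Finset.sum_le_sum; intro i _
    have := h0 (k + eu i); have := h0 (k - eu i); have := h1 k
    linarith
  · have : (4 * d * Y ^ m : ℝ) = ∑ i : Fin d, (4 * Y ^ m) := by simp; ring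
    rw [this, dLap]
    apply Finset.sum_le_sum; intro i _
    have := h1 (k + eu i); have := h1 (k - eu i); have := h0 k
    linarith

lemma lap_mass {d N : ℕ} {m ε : ℝ} (hm0 : 0 < m) (hε : 0 < ε) {a : (Fin d → ℤ) → ℝ}
    (ha : ∀ k, ε ≤ a k) (ho : ∀ k, k ∉ bx d N → a k = ε) :
    ∑ k ∈ bx d N, dLap (fun l => a l ^ m) k ≤ 0 :=
  sum_dLap_le _ (ε ^ m) (fun k => Real.rpow_le_rpow hε.le (ha k) hm0.le)
    (fun k hk => by simp only [ho k hk])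

lemma ent_step {d N : ℕ} {m p ε lam Y : ℝ} (hm0 : 0 < m) (hp0 : 0 < p) (hp1 : p < 1)
    (hε : 0 < ε) (hC : CFL d (fun x => x ^ m) ε lam) {a : (Fin d → ℤ) → ℝ}
    (ha : ∀ k, ε ≤ a k) (ho : ∀ k, k ∉ bx d N → a k = ε) (hY : ∀ k, a k ≤ Y) :
    p * lam * gain m p N a ≤
      (∑ k ∈ bx d N, (st (fun x => x ^ m) ε lam N a k + 1) ^ p
        - p * ∑ k ∈ bx d N, st (fun x => x ^ m) ε lam N a k)
      - (∑ k ∈ bx d N, (a k + 1) ^ p - p * ∑ k ∈ bx d N, a k)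
      + lam ^ 2 * ((bx d N).card * (4 * d * Y ^ m) ^ 2) := by
  have hl := hC.1
  have hge : ∀ k, ε ≤ st (fun x => x ^ m) ε lam N a k := st_ge hC ha
  set L : (Fin d → ℤ) → ℝ := dLap (fun l => a l ^ m) with hL
  have hst : ∀ k ∈ bx d N, st (fun x => x ^ m) ε lam N a k = a k + lam * L k := fun k hk => st_in hk
  have e1 : ∑ k ∈ bx d N, st (fun x => x ^ m) ε lam N a k = ∑ k ∈ bx d N, a k +
      lam * ∑ k ∈ bx d N, L k := by
    rw [Finset.mul_sum, ← Finset.sum_add_distrib]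
    exact Finset.sum_congr rfl hst
  have e2 : ∑ k ∈ bx d N, (p * ((a k + 1) ^ (p - 1) * (lam * L k)) - (lam * L k) ^ 2) ≤
      ∑ k ∈ bx d N, ((st (fun x => x ^ m) ε lam N a k + 1) ^ p - (a k + 1) ^ p) := by
    apply Finset.sum_le_sum
    intro k hk
    have := ent_pt hp0 hp1 (a := a k + 1) (b := st (fun x => x ^ m) ε lam N a k + 1)
      (by linarith [ha k]) (by linarith [hge k])
    rw [hst k hk] at this ⊢
    have e : a k + lam * L k + 1 - (a k + 1) = lam * L k := by ring
    rwa [e] at this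
  have e3 : ∑ k ∈ bx d N, (lam * L k) ^ 2 ≤ lam ^ 2 * ((bx d N).card * (4 * d * Y ^ m) ^ 2) := by
    calc _ ≤ ∑ k ∈ bx d N, lam ^ 2 * (4 * d * Y ^ m) ^ 2 := by
          apply Finset.sum_le_sum; intro k hk
          rw [mul_pow]
          exact mul_le_mul_of_nonneg_left
            (dLap_bound hm0 (fun k => hε.trans_le (ha k)) hY k) (sq_nonneg _)
      _ = _ := by rw [Finset.sum_const, nsmul_eq_mul]; ring
  have e4 := sbp (N := N) (fun k => (a k + 1) ^ (p - 1) - (ε + 1) ^ (p - 1)) (fun l => a l ^ m)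
    (fun k hk => by simp only [ho k hk, sub_self])
  have e5 : -∑ k ∈ bx d (N + 1), ∑ i,
      (((a (k + eu i) + 1) ^ (p - 1) - (ε + 1) ^ (p - 1)) - ((a k + 1) ^ (p - 1) - (ε + 1) ^ (p - 1)))
        * (a (k + eu i) ^ m - a k ^ m) = gain m p N a := by
    rw [gain, ← Finset.sum_neg_distrib]
    apply Finset.sum_congr rfl; intro k _
    rw [← Finset.sum_neg_distrib]
    apply Finset.sum_congr rfl; intro i _
    ring
  rw [e5] at e4
  have e6 : ∑ k ∈ bx d N, ((a k + 1) ^ (p - 1) - (ε + 1) ^ (p - 1)) * L k =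
      ∑ k ∈ bx d N, (a k + 1) ^ (p - 1) * L k - (ε + 1) ^ (p - 1) * ∑ k ∈ bx d N, L k := by
    rw [Finset.mul_sum, ← Finset.sum_sub_distrib]
    apply Finset.sum_congr rfl; intro k _; ring
  have e4' : ∑ k ∈ bx d N, ((a k + 1) ^ (p - 1) - (ε + 1) ^ (p - 1)) * L k = gain m p N a := e4
  rw [e6] at e4'
  have e7 : ∑ k ∈ bx d N, (p * ((a k + 1) ^ (p - 1) * (lam * L k)) - (lam * L k) ^ 2) =
      p * lam * ∑ k ∈ bx d N, (a k + 1) ^ (p - 1) * L k - ∑ k ∈ bx d N, (lam * L k) ^ 2 := by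
    rw [Finset.mul_sum, ← Finset.sum_sub_distrib]
    apply Finset.sum_congr rfl; intro k _; ring
  rw [e7, Finset.sum_sub_distrib] at e2
  have e8 : ∑ k ∈ bx d N, L k ≤ 0 := lap_mass hm0 hε ha ho
  have e9 : (ε + 1) ^ (p - 1) ≤ 1 :=
    Real.rpow_le_one_of_one_le_of_nonpos (by linarith) (by linarith)
  have e10 : 0 ≤ p * lam * (((ε + 1) ^ (p - 1) - 1) * ∑ k ∈ bx d N, L k) := by
    apply mul_nonneg (by positivity)
    exact mul_nonneg_of_nonpos_of_nonpos (by linarith) e8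
  rw [e1, ← e4']
  nlinarith

lemma conv_step {d N : ℕ} {m q ε lam Y : ℝ} (hm0 : 0 < m) (hq1 : 1 < q) (hq2 : q < 2)
    (hε : 0 < ε) (hC : CFL d (fun x => x ^ m) ε lam) {a : (Fin d → ℤ) → ℝ}
    (ha : ∀ k, ε ≤ a k) (ho : ∀ k, k ∉ bx d N → a k = ε) (hY : ∀ k, a k ≤ Y) :
    ∑ k ∈ bx d N, (st (fun x => x ^ m) ε lam N a k + 1) ^ q ≤ ∑ k ∈ bx d N, (a k + 1) ^ q
      + 2 * (lam ^ 2 * ((bx d N).card * (4 * d * Y ^ m) ^ 2)) := by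
  have hl := hC.1
  have hge : ∀ k, ε ≤ st (fun x => x ^ m) ε lam N a k := st_ge hC ha
  set L : (Fin d → ℤ) → ℝ := dLap (fun l => a l ^ m) with hL
  have hst : ∀ k ∈ bx d N, st (fun x => x ^ m) ε lam N a k = a k + lam * L k := fun k hk => st_in hk
  have e2 : ∑ k ∈ bx d N, ((st (fun x => x ^ m) ε lam N a k + 1) ^ q - (a k + 1) ^ q) ≤
      ∑ k ∈ bx d N, (q * ((a k + 1) ^ (q - 1) * (lam * L k)) + q * (lam * L k) ^ 2) := by
    apply Finset.sum_le_sum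
    intro k hk
    have := conv_pt hq1 hq2 (a := a k + 1) (b := st (fun x => x ^ m) ε lam N a k + 1)
      (by linarith [ha k]) (by linarith [hge k])
    rw [hst k hk] at this ⊢
    have e : a k + lam * L k + 1 - (a k + 1) = lam * L k := by ring
    rwa [e] at this
  have e3 : ∑ k ∈ bx d N, (lam * L k) ^ 2 ≤ lam ^ 2 * ((bx d N).card * (4 * d * Y ^ m) ^ 2) := by
    calc _ ≤ ∑ k ∈ bx d N, lam ^ 2 * (4 * d * Y ^ m) ^ 2 := by
          apply Finset.sum_le_sum; intro k hk
          rw [mul_pow]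
          exact mul_le_mul_of_nonneg_left
            (dLap_bound hm0 (fun k => hε.trans_le (ha k)) hY k) (sq_nonneg _)
      _ = _ := by rw [Finset.sum_const, nsmul_eq_mul]; ring
  have e30 : 0 ≤ ∑ k ∈ bx d N, (lam * L k) ^ 2 := Finset.sum_nonneg fun _ _ => sq_nonneg _
  have e4 := sbp (N := N) (fun k => (a k + 1) ^ (q - 1) - (ε + 1) ^ (q - 1)) (fun l => a l ^ m)
    (fun k hk => by simp only [ho k hk, sub_self])
  have e5 : -∑ k ∈ bx d (N + 1), ∑ i,
      (((a (k + eu i) + 1) ^ (q - 1) - (ε + 1) ^ (q - 1)) - ((a k + 1) ^ (q - 1) - (ε + 1) ^ (q - 1)))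
        * (a (k + eu i) ^ m - a k ^ m) ≤ 0 := by
    rw [neg_nonpos]
    apply Finset.sum_nonneg; intro k _; apply Finset.sum_nonneg; intro i _
    have hq' : 0 ≤ q - 1 := by linarith
    have p1 : 0 < a k := hε.trans_le (ha k)
    have p2 : 0 < a (k + eu i) := hε.trans_le (ha _)
    rcases le_total (a k) (a (k + eu i)) with h | h
    · have h1 := Real.rpow_le_rpow p1.le h hm0.le
      have h2 := Real.rpow_le_rpow (by linarith) (add_le_add_left h 1) hq'
      apply mul_nonneg <;> linarith
    · have h1 := Real.rpow_le_rpow p2.le h hm0.le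
      have h2 := Real.rpow_le_rpow (by linarith) (add_le_add_left h 1) hq'
      apply mul_nonneg_of_nonpos_of_nonpos <;> linarith
  have e6 : ∑ k ∈ bx d N, ((a k + 1) ^ (q - 1) - (ε + 1) ^ (q - 1)) * L k =
      ∑ k ∈ bx d N, (a k + 1) ^ (q - 1) * L k - (ε + 1) ^ (q - 1) * ∑ k ∈ bx d N, L k := by
    rw [Finset.mul_sum, ← Finset.sum_sub_distrib]
    apply Finset.sum_congr rfl; intro k _; ring
  have e4' : ∑ k ∈ bx d N, ((a k + 1) ^ (q - 1) - (ε + 1) ^ (q - 1)) * L k ≤ 0 := by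
    refine le_trans (le_of_eq e4) e5
  rw [e6] at e4'
  have e7 : ∑ k ∈ bx d N, (q * ((a k + 1) ^ (q - 1) * (lam * L k)) + q * (lam * L k) ^ 2) =
      q * lam * ∑ k ∈ bx d N, (a k + 1) ^ (q - 1) * L k + q * ∑ k ∈ bx d N, (lam * L k) ^ 2 := by
    rw [Finset.mul_sum, Finset.mul_sum, ← Finset.sum_add_distrib]
    apply Finset.sum_congr rfl; intro k _; ring
  rw [e7, Finset.sum_sub_distrib] at e2
  have e8 : ∑ k ∈ bx d N, L k ≤ 0 := lap_mass hm0 hε ha ho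
  have e9 : 0 ≤ (ε + 1) ^ (q - 1) := by positivity
  have e10 : ∑ k ∈ bx d N, (a k + 1) ^ (q - 1) * L k ≤ 0 := by nlinarith
  have e11 : q * lam * ∑ k ∈ bx d N, (a k + 1) ^ (q - 1) * L k ≤ 0 :=
    mul_nonpos_of_nonneg_of_nonpos (by positivity) e10
  nlinarith

lemma mass_step {d N : ℕ} {m ε lam : ℝ} (hm0 : 0 < m)
    (hε : 0 < ε) (hC : CFL d (fun x => x ^ m) ε lam) {a : (Fin d → ℤ) → ℝ}
    (ha : ∀ k, ε ≤ a k) (ho : ∀ k, k ∉ bx d N → a k = ε) :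
    ∑ k ∈ bx d N, st (fun x => x ^ m) ε lam N a k ≤ ∑ k ∈ bx d N, a k := by
  have hl := hC.1
  have e1 : ∑ k ∈ bx d N, st (fun x => x ^ m) ε lam N a k = ∑ k ∈ bx d N, a k +
      lam * ∑ k ∈ bx d N, dLap (fun l => a l ^ m) k := by
    rw [Finset.mul_sum, ← Finset.sum_add_distrib]
    exact Finset.sum_congr rfl fun k hk => st_in hk
  have := lap_mass hm0 hε ha ho
  rw [e1]; nlinarith

lemma psi_step {d N : ℕ} {m ε lam : ℝ} (hm0 : 0 < m)
    (hε : 0 < ε) (hC : CFL d (fun x => x ^ m) ε lam) {a : (Fin d → ℤ) → ℝ}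
    (ha : ∀ k, ε ≤ a k) (ho : ∀ k, k ∉ bx d N → a k = ε) :
    ∑ k ∈ bx d N, (1 - (∑ j, (k j : ℝ) ^ 2) / (N + 1 : ℝ) ^ 2) * a k
       - lam * (2 * d / (N + 1 : ℝ) ^ 2 * ∑ k ∈ bx d N, (a k ^ m - ε ^ m)) ≤
    ∑ k ∈ bx d N, (1 - (∑ j, (k j : ℝ) ^ 2) / (N + 1 : ℝ) ^ 2) *
      st (fun x => x ^ m) ε lam N a k := by
  have hl := hC.1
  have h := sum_psi (N := N) (fun k => a k ^ m - ε ^ m)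
    (fun k => sub_nonneg.2 (Real.rpow_le_rpow hε.le (ha k) hm0.le))
    (fun k hk => by simp only [ho k hk, sub_self])
  have e0 : ∀ k, dLap (fun k => a k ^ m - ε ^ m) k = dLap (fun l => a l ^ m) k := by
    intro k; simp only [dLap]; apply Finset.sum_congr rfl; intro i _; ring
  simp only [e0] at h
  have e1 : ∑ k ∈ bx d N, (1 - (∑ j, (k j : ℝ) ^ 2) / (N + 1 : ℝ) ^ 2) *
      st (fun x => x ^ m) ε lam N a k =
      ∑ k ∈ bx d N, (1 - (∑ j, (k j : ℝ) ^ 2) / (N + 1 : ℝ) ^ 2) * a k +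
      lam * ∑ k ∈ bx d N, (1 - (∑ j, (k j : ℝ) ^ 2) / (N + 1 : ℝ) ^ 2) *
        dLap (fun l => a l ^ m) k := by
    rw [Finset.mul_sum, ← Finset.sum_add_distrib]
    apply Finset.sum_congr rfl
    intro k hk; rw [st_in hk]; ring
  rw [e1]
  nlinarith [mul_le_mul_of_nonneg_left h hl.le]


lemma edge_sym {m p a b : ℝ} (hm0 : 0 < m) (hm1 : m < 1) (hp0 : 0 < p) (hp1 : p < 1)
    (ha : 0 < a) (hb : 0 < b) :
    |(b + 1) ^ ((p + m) / 2) - (a + 1) ^ ((p + m) / 2)| ^ 2 ≤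
      ((a + 1 + (b + 1)) / (m * (1 - p))) *
        (((a + 1) ^ (p - 1) - (b + 1) ^ (p - 1)) * (b ^ m - a ^ m)) := by
  have hmp : 0 < m * (1 - p) := mul_pos hm0 (by linarith)
  rw [sq_abs]
  have pos : 0 ≤ ((a + 1) ^ (p - 1) - (b + 1) ^ (p - 1)) * (b ^ m - a ^ m) := by
    rcases le_total a b with h | h
    · have h1 := Real.rpow_le_rpow ha.le h hm0.le
      have h2 := Real.rpow_le_rpow_of_nonpos (by linarith) (add_le_add_left h 1) (by linarith : p - 1 ≤ 0)
      apply mul_nonneg <;> linarith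
    · have h1 := Real.rpow_le_rpow hb.le h hm0.le
      have h2 := Real.rpow_le_rpow_of_nonpos (by linarith) (add_le_add_left h 1) (by linarith : p - 1 ≤ 0)
      apply mul_nonneg_of_nonpos_of_nonpos <;> linarith
  rcases le_total a b with h | h
  · have := edge_ineq hm0 hm1 hp0 hp1 ha h
    refine this.trans ?_
    rw [mul_comm (b ^ m - a ^ m)]
    apply mul_le_mul_of_nonneg_right _ pos
    apply div_le_div_of_nonneg_right _ hmp.le
    linarith
  · have := edge_ineq hm0 hm1 hp0 hp1 hb h
    rw [← neg_sub, neg_sq]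
    refine this.trans ?_
    have e : (a ^ m - b ^ m) * ((b + 1) ^ (p - 1) - (a + 1) ^ (p - 1)) =
      ((a + 1) ^ (p - 1) - (b + 1) ^ (p - 1)) * (b ^ m - a ^ m) := by ring
    rw [e]
    apply mul_le_mul_of_nonneg_right _ pos
    apply div_le_div_of_nonneg_right _ hmp.le
    linarith

lemma gain_nonneg {d N : ℕ} {m p : ℝ} (hm0 : 0 < m) (hp1 : p < 1) {a : (Fin d → ℤ) → ℝ}
    (ha : ∀ k, 0 < a k) : 0 ≤ gain m p N a := by
  apply Finset.sum_nonneg; intro k _; apply Finset.sum_nonneg; intro i _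
  rcases le_total (a k) (a (k + eu i)) with h | h
  · have h1 := Real.rpow_le_rpow (ha _).le h hm0.le
    have h2 := Real.rpow_le_rpow_of_nonpos (by linarith [ha k]) (add_le_add_left h 1) (by linarith : p - 1 ≤ 0)
    apply mul_nonneg <;> linarith
  · have h1 := Real.rpow_le_rpow (ha _).le h hm0.le
    have h2 := Real.rpow_le_rpow_of_nonpos (by linarith [ha (k + eu i)]) (add_le_add_left h 1) (by linarith : p - 1 ≤ 0)
    apply mul_nonneg_of_nonpos_of_nonpos <;> linarith

lemma sobA {d N : ℕ} {m p ε : ℝ} (hm0 : 0 < m) (hm1 : m < 1) (hp0 : 0 < p) (hp1 : p < 1)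
    (hε : 0 < ε) (hε1 : ε ≤ 1) {a : (Fin d → ℤ) → ℝ}
    (ha : ∀ k, ε ≤ a k) (ho : ∀ k, k ∉ bx d N → a k = ε) :
    (∑ k ∈ bx d (N + 1), ∑ i, |(a (k + eu i) + 1) ^ ((p + m) / 2) - (a k + 1) ^ ((p + m) / 2)|) ^ 2
     ≤ ((4 * d * (bx d (N + 1)).card + 2 * d * ∑ k ∈ bx d N, (a k - ε)) / (m * (1 - p))) *
        gain m p N a := by
  have hmp : 0 < m * (1 - p) := mul_pos hm0 (by linarith)
  have hpos : ∀ k, 0 < a k := fun k => hε.trans_le (ha k)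
  have CS : (∑ k ∈ bx d (N + 1), ∑ i, |(a (k + eu i) + 1) ^ ((p + m) / 2) - (a k + 1) ^ ((p + m) / 2)|) ^ 2
     ≤ (∑ k ∈ bx d (N + 1), ∑ i : Fin d, ((a k + 1 + (a (k + eu i) + 1)) / (m * (1 - p)))) *
        gain m p N a := by
    rw [gain]
    simp only [← Finset.sum_product']
    have hg := gain_nonneg (N := N) hm0 hp1 hpos
    apply Finset.sum_sq_le_sum_mul_sum_of_sq_le_mul
    · intro x _
      have := hpos x.1; have := hpos (x.1 + eu x.2)
      positivity
    · intro x _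
      have h1 := edge_sym hm0 hm1 hp0 hp1 (hpos x.1) (hpos (x.1 + eu x.2))
      have h2 := hpos x.1; have h3 := hpos (x.1 + eu x.2)
      by_contra hneg
      push Not at hneg
      have : (a x.1 + 1 + (a (x.1 + eu x.2) + 1)) / (m * (1 - p)) > 0 := by positivity
      rcases le_total (a x.1) (a (x.1 + eu x.2)) with h | h
      · have h1 := Real.rpow_le_rpow (hpos _).le h hm0.le
        have h2 := Real.rpow_le_rpow_of_nonpos (by linarith) (add_le_add_left h 1) (by linarith : p - 1 ≤ 0)
        have := mul_nonneg (sub_nonneg.2 h2) (sub_nonneg.2 h1)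
        linarith
      · have h1 := Real.rpow_le_rpow (hpos _).le h hm0.le
        have h2 := Real.rpow_le_rpow_of_nonpos (by linarith) (add_le_add_left h 1) (by linarith : p - 1 ≤ 0)
        have := mul_nonneg (sub_nonneg.2 h2) (sub_nonneg.2 h1)
        linarith
    · intro x _
      exact edge_sym hm0 hm1 hp0 hp1 (hpos x.1) (hpos (x.1 + eu x.2))
  refine CS.trans ?_
  apply mul_le_mul_of_nonneg_right _ (gain_nonneg hm0 hp1 hpos)
  simp only [← Finset.sum_div]
  apply div_le_div_of_nonneg_right _ hmp.le
  have e1 : ∀ i : Fin d, ∑ k ∈ bx d (N + 1), (a (k + eu i) - ε) = ∑ k ∈ bx d N, (a k - ε) :=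
    fun i => sum_shift_add i (fun k => a k - ε) (fun k hk => by simp only [ho k hk, sub_self])
  have e2 : ∑ k ∈ bx d (N + 1), (a k - ε) = ∑ k ∈ bx d N, (a k - ε) :=
    sum_big (fun k => a k - ε) (fun k hk => by simp only [ho k hk, sub_self])
  rw [Finset.sum_comm]
  have e3 : ∀ i : Fin d, ∑ k ∈ bx d (N + 1), (a k + 1 + (a (k + eu i) + 1)) ≤
      4 * (bx d (N + 1)).card + 2 * ∑ k ∈ bx d N, (a k - ε) := by
    intro i
    have : ∑ k ∈ bx d (N + 1), (a k + 1 + (a (k + eu i) + 1)) =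
      ∑ k ∈ bx d (N + 1), (a k - ε) + ∑ k ∈ bx d (N + 1), (a (k + eu i) - ε) +
       ∑ k ∈ bx d (N + 1), (2 + 2 * ε) := by
      rw [← Finset.sum_add_distrib, ← Finset.sum_add_distrib]
      apply Finset.sum_congr rfl; intro k _; ring
    rw [this, e1, e2, Finset.sum_const, nsmul_eq_mul]
    have : (0:ℝ) ≤ (bx d (N + 1)).card := by positivity
    nlinarith
  calc _ ≤ ∑ i : Fin d, (4 * ((bx d (N + 1)).card : ℝ) + 2 * ∑ k ∈ bx d N, (a k - ε)) :=
        Finset.sum_le_sum fun i _ => e3 i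
    _ = _ := by simp; ring

lemma sobB {d N : ℕ} {m p ε : ℝ} (hd : 3 ≤ d) (hm0 : 0 < m) (hm1 : m < 1) (hp0 : 0 < p) (hp1 : p < 1)
    (hq2 : (p + m) / 2 * ((d : ℝ) / (d - 1)) < 2)
    (hε : 0 < ε) (hε1 : ε ≤ 1) {a : (Fin d → ℤ) → ℝ}
    (ha : ∀ k, ε ≤ a k) (ho : ∀ k, k ∉ bx d N → a k = ε) :
    ∑ k ∈ bx d N, (a k + 1) ^ ((p + m) / 2 * ((d : ℝ) / (d - 1))) ≤
      4 * (∑ k ∈ bx d (N + 1), ∑ i, |(a (k + eu i) + 1) ^ ((p + m) / 2) - (a k + 1) ^ ((p + m) / 2)|)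
        ^ ((d : ℝ) / (d - 1)) + 16 * (bx d N).card := by
  have hd3 : (3 : ℝ) ≤ d := by exact_mod_cast hd
  set s := (p + m) / 2 with hs
  have hs0 : 0 < s := by positivity
  set β := (d : ℝ) / (d - 1) with hβ
  have hβ0 : 0 < β := by rw [hβ]; apply div_pos <;> linarith
  have hβ2 : β ≤ 2 := by rw [hβ, div_le_iff₀ (by linarith)]; linarith
  have hpos : ∀ k, 0 < a k := fun k => hε.trans_le (ha k)
  have hF0 : ∀ k, 0 ≤ (a k + 1) ^ s - (ε + 1) ^ s := fun k =>
    sub_nonneg.2 (Real.rpow_le_rpow (by linarith) (by linarith [ha k]) hs0.le)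
  have h := dsob (N := N) (by omega) (fun k => (a k + 1) ^ s - (ε + 1) ^ s) hF0
    (fun k hk => by simp only [ho k hk, sub_self])
  simp only [sub_sub_sub_cancel_right] at h
  rw [← hβ] at h
  have pt : ∀ k, (a k + 1) ^ (s * β) ≤ 4 * ((a k + 1) ^ s - (ε + 1) ^ s) ^ β + 16 := by
    intro k
    rw [Real.rpow_mul (by linarith [hpos k])]
    set F := (a k + 1) ^ s - (ε + 1) ^ s with hF
    have hF00 : 0 ≤ F := hF0 k
    set E := (ε + 1) ^ s with hE
    have hE0 : 0 ≤ E := by positivity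
    have e1 : (a k + 1) ^ s = F + E := by rw [hF]; ring
    have e2 : E ^ β ≤ 4 := by
      rw [hE, ← Real.rpow_mul (by linarith)]
      calc (ε + 1) ^ (s * β) ≤ 2 ^ (s * β) := Real.rpow_le_rpow (by linarith) (by linarith) (by positivity)
        _ ≤ 2 ^ (2 : ℝ) := Real.rpow_le_rpow_of_exponent_le (by norm_num) hq2.le
        _ = 4 := by norm_num
    have e3 : (2 : ℝ) ^ β ≤ 4 := by
      calc (2 : ℝ) ^ β ≤ 2 ^ (2 : ℝ) := Real.rpow_le_rpow_of_exponent_le (by norm_num) hβ2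
        _ = 4 := by norm_num
    have e4 : (F + E) ^ β ≤ 2 ^ β * (F ^ β + E ^ β) := by
      have hFb : 0 ≤ F ^ β := by positivity
      have hEb : 0 ≤ E ^ β := by positivity
      have h2b : 0 ≤ (2 : ℝ) ^ β := by positivity
      rcases le_total F E with hh | hh
      · calc (F + E) ^ β ≤ (2 * E) ^ β := Real.rpow_le_rpow (by positivity) (by linarith) hβ0.le
          _ = 2 ^ β * E ^ β := Real.mul_rpow (by norm_num) hE0
          _ ≤ _ := by nlinarith
      · calc (F + E) ^ β ≤ (2 * F) ^ β := Real.rpow_le_rpow (by positivity) (by linarith) hβ0.le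
          _ = 2 ^ β * F ^ β := Real.mul_rpow (by norm_num) hF00
          _ ≤ _ := by nlinarith
    rw [e1]
    have hFb : 0 ≤ F ^ β := by positivity
    have hEb : 0 ≤ E ^ β := by positivity
    nlinarith
  calc _ ≤ ∑ k ∈ bx d N, (4 * ((a k + 1) ^ s - (ε + 1) ^ s) ^ β + 16) :=
        Finset.sum_le_sum fun k _ => pt k
    _ = 4 * ∑ k ∈ bx d N, ((a k + 1) ^ s - (ε + 1) ^ s) ^ β + 16 * (bx d N).card := by
        rw [Finset.sum_add_distrib, Finset.mul_sum, Finset.sum_const, nsmul_eq_mul]; ring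
    _ ≤ _ := by linarith


/-- the scheme -/
noncomputable def ys {d : ℕ} (m ε lam : ℝ) (N : ℕ) (y0 : (Fin d → ℤ) → ℝ) (n : ℕ) :
    (Fin d → ℤ) → ℝ := (st (fun x => x ^ m) ε lam N)^[n] y0

lemma ys_zero {d : ℕ} (m ε lam : ℝ) (N : ℕ) (y0 : (Fin d → ℤ) → ℝ) :
    ys m ε lam N y0 0 = y0 := rfl

lemma ys_succ {d : ℕ} (m ε lam : ℝ) (N : ℕ) (y0 : (Fin d → ℤ) → ℝ) (n : ℕ) :
    ys m ε lam N y0 (n + 1) = st (fun x => x ^ m) ε lam N (ys m ε lam N y0 n) := by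
  rw [ys, ys, Function.iterate_succ_apply']

lemma ys_ge {d N : ℕ} {m ε lam : ℝ} (hC : CFL d (fun x => x ^ m) ε lam)
    {y0 : (Fin d → ℤ) → ℝ} (h0 : ∀ k, ε ≤ y0 k) (n : ℕ) : ∀ k, ε ≤ ys m ε lam N y0 n k := by
  induction n with
  | zero => exact h0
  | succ n ih => rw [ys_succ]; exact st_ge hC ih

lemma ys_le {d N : ℕ} {m ε lam Y : ℝ} (hC : CFL d (fun x => x ^ m) ε lam)
    {y0 : (Fin d → ℤ) → ℝ} (h0 : ∀ k, ε ≤ y0 k) (hY : ∀ k, y0 k ≤ Y) (n : ℕ) :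
    ∀ k, ys m ε lam N y0 n k ≤ Y := by
  induction n with
  | zero => exact hY
  | succ n ih => rw [ys_succ]; exact st_le hC (ys_ge hC h0 n) ih

lemma ys_out {d N : ℕ} {m ε lam : ℝ}
    {y0 : (Fin d → ℤ) → ℝ} (h0 : ∀ k, k ∉ bx d N → y0 k = ε) (n : ℕ) :
    ∀ k, k ∉ bx d N → ys m ε lam N y0 n k = ε := by
  cases n with
  | zero => exact h0
  | succ n => rw [ys_succ]; exact fun k hk => st_out hk

lemma ys_mass {d N : ℕ} {m ε lam : ℝ} (hm0 : 0 < m) (hε : 0 < ε)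
    (hC : CFL d (fun x => x ^ m) ε lam)
    {y0 : (Fin d → ℤ) → ℝ} (h0 : ∀ k, ε ≤ y0 k) (ho : ∀ k, k ∉ bx d N → y0 k = ε) (n : ℕ) :
    ∑ k ∈ bx d N, (ys m ε lam N y0 n k - ε) ≤ ∑ k ∈ bx d N, (y0 k - ε) := by
  induction n with
  | zero => exact le_rfl
  | succ n ih =>
    refine le_trans ?_ ih
    rw [ys_succ, Finset.sum_sub_distrib, Finset.sum_sub_distrib]
    have := mass_step hm0 hε hC (ys_ge hC h0 n) (ys_out (lam := lam) (m := m) ho n)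
    linarith

lemma card_le3 {d N : ℕ} (hN : 1 ≤ N) : ((bx d N).card : ℝ) ≤ 3 ^ d * (N : ℝ) ^ d := by
  have : (1 : ℝ) ≤ N := by exact_mod_cast hN
  rw [card_bx, ← mul_pow]
  exact pow_le_pow_left₀ (by positivity) (by linarith) d

lemma card_le5 {d N : ℕ} (hN : 1 ≤ N) : ((bx d (N + 1)).card : ℝ) ≤ 5 ^ d * (N : ℝ) ^ d := by
  have : (1 : ℝ) ≤ N := by exact_mod_cast hN
  rw [card_bx, ← mul_pow]
  exact pow_le_pow_left₀ (by positivity) (by push_cast; linarith) d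

lemma good_step {d N : ℕ} {m p ε lam Y T1 : ℝ} (hm0 : 0 < m) (hp0 : 0 < p) (hp1 : p < 1)
    (hε : 0 < ε) (hε1 : ε ≤ 1) (hC : CFL d (fun x => x ^ m) ε lam) (hN : 1 ≤ N) (hT : 0 < T1)
    {y0 : (Fin d → ℤ) → ℝ} (h0 : ∀ k, ε ≤ y0 k) (ho : ∀ k, k ∉ bx d N → y0 k = ε)
    (hY : ∀ k, y0 k ≤ Y) (hV : ∑ k ∈ bx d N, (y0 k - ε) = (N : ℝ) ^ d) {n : ℕ}
    (hn : n * lam = T1 * N ^ 2)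
    (herr : n * (lam ^ 2 * ((bx d N).card * (4 * d * Y ^ m) ^ 2)) ≤ (N : ℝ) ^ d) :
    ∃ j < n, gain m p N (ys m ε lam N y0 j) ≤
      (3 + 3 * 3 ^ d) / (p * T1) * ((N : ℝ) ^ d / N ^ 2) := by
  have hl := hC.1
  have hN' : (1 : ℝ) ≤ N := by exact_mod_cast hN
  have hn0 : 0 < n := by
    rcases Nat.eq_zero_or_pos n with h | h
    · subst h
      have : 0 < T1 * (N : ℝ) ^ 2 := by positivity
      simp at hn; rcases hn with h | h <;> nlinarith
    · exact h
  set y := ys m ε lam N y0 with hy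
  set P : ℕ → ℝ := fun n => ∑ k ∈ bx d N, (y n k + 1) ^ p - p * ∑ k ∈ bx d N, y n k with hP
  set E := lam ^ 2 * ((bx d N).card * (4 * d * Y ^ m) ^ 2) with hE
  have tel : ∀ n : ℕ, p * lam * ∑ j ∈ Finset.range n, gain m p N (y j) ≤ P n - P 0 + n * E := by
    intro n
    induction n with
    | zero => simp
    | succ n ih =>
      rw [Finset.sum_range_succ]
      have := ent_step hm0 hp0 hp1 hε hC (ys_ge hC h0 n) (ys_out (lam := lam) (m := m) ho n)
        (ys_le hC h0 hY n)
      rw [← ys_succ] at this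
      push_cast
      have e : P (n + 1) - P n + E ≥ p * lam * gain m p N (y n) := this
      linarith
  have cD := card_le3 (d := d) hN
  have cD0 : (0 : ℝ) ≤ (bx d N).card := by positivity
  have hVp : (0 : ℝ) < (N : ℝ) ^ d := by positivity
  have sumy : ∀ n, ∑ k ∈ bx d N, y n k ≤ (N : ℝ) ^ d + (bx d N).card := by
    intro n
    have h1 := ys_mass hm0 hε hC h0 ho n
    rw [hV, Finset.sum_sub_distrib, Finset.sum_const, nsmul_eq_mul] at h1
    have : ((bx d N).card : ℝ) * ε ≤ (bx d N).card := by nlinarith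
    linarith
  have sumy0 : ∀ n, 0 ≤ ∑ k ∈ bx d N, y n k := fun n =>
    Finset.sum_nonneg fun k _ => hε.le.trans (ys_ge hC h0 n k)
  have Pn : P n ≤ (N : ℝ) ^ d + 2 * (bx d N).card := by
    have h1 : ∑ k ∈ bx d N, (y n k + 1) ^ p ≤ ∑ k ∈ bx d N, (y n k + 1) := by
      apply Finset.sum_le_sum; intro k _
      have : 1 ≤ y n k + 1 := by have := ys_ge (N := N) hC h0 n k; linarith
      calc (y n k + 1) ^ p ≤ (y n k + 1) ^ (1 : ℝ) := Real.rpow_le_rpow_of_exponent_le this hp1.le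
        _ = _ := Real.rpow_one _
    rw [Finset.sum_add_distrib, Finset.sum_const, nsmul_eq_mul] at h1
    have := sumy n; have := sumy0 n
    simp only [hP]
    nlinarith
  have P0 : -P 0 ≤ (N : ℝ) ^ d + (bx d N).card := by
    have h1 : 0 ≤ ∑ k ∈ bx d N, (y 0 k + 1) ^ p := Finset.sum_nonneg fun k _ => by
      have : 0 ≤ y 0 k + 1 := by have := ys_ge (N := N) hC h0 0 k; linarith
      positivity
    have := sumy 0; have := sumy0 0
    simp only [hP]
    nlinarith
  have tot := tel n
  by_contra hcon
  push Not at hcon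
  have h2 : (n : ℝ) * ((3 + 3 * 3 ^ d) / (p * T1) * ((N : ℝ) ^ d / N ^ 2)) <
      ∑ j ∈ Finset.range n, gain m p N (y j) := by
    rw [← nsmul_eq_mul, ← Finset.card_range n, ← Finset.sum_const, Finset.card_range]
    apply Finset.sum_lt_sum_of_nonempty (Finset.nonempty_range_iff.2 hn0.ne')
    intro j hj
    exact hcon j (Finset.mem_range.1 hj)
  have h3 := mul_lt_mul_of_pos_left h2 (by positivity : 0 < p * lam)
  have h4 : p * lam * (n * ((3 + 3 * 3 ^ d) / (p * T1) * ((N : ℝ) ^ d / N ^ 2))) =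
      (3 + 3 * 3 ^ d) * (N : ℝ) ^ d := by
    have : p * lam * (n * ((3 + 3 * 3 ^ d) / (p * T1) * ((N : ℝ) ^ d / N ^ 2))) =
      (n * lam) * (p * ((3 + 3 * 3 ^ d) / (p * T1) * ((N : ℝ) ^ d / N ^ 2))) := by ring
    rw [this, hn]
    field_simp
  rw [h4] at h3
  nlinarith

lemma qbound {d : ℕ} {m p T1 : ℝ} (hd : 3 ≤ d) (hm0 : 0 < m) (hm1 : m < 1) (hp0 : 0 < p)
    (hp1 : p < 1) (hq1 : 1 < (p + m) / 2 * ((d : ℝ) / (d - 1)))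
    (hq2 : (p + m) / 2 * ((d : ℝ) / (d - 1)) < 2) (hT : 0 < T1) :
    ∃ C > 0, ∀ (N : ℕ) (ε lam Y : ℝ) (y0 : (Fin d → ℤ) → ℝ) (n : ℕ), 1 ≤ N → 0 < ε → ε ≤ 1 →
    CFL d (fun x => x ^ m) ε lam → (∀ k, ε ≤ y0 k) → (∀ k, k ∉ bx d N → y0 k = ε) →
    (∀ k, y0 k ≤ Y) → ∑ k ∈ bx d N, (y0 k - ε) = (N : ℝ) ^ d → n * lam = T1 * N ^ 2 →
    n * (lam ^ 2 * ((bx d N).card * (4 * d * Y ^ m) ^ 2)) ≤ (N : ℝ) ^ d →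
    ∑ k ∈ bx d N, (ys m ε lam N y0 n k + 1) ^ ((p + m) / 2 * ((d : ℝ) / (d - 1))) ≤
      C * (N : ℝ) ^ d := by
  have hd3 : (3 : ℝ) ≤ d := by exact_mod_cast hd
  have hmp : 0 < m * (1 - p) := mul_pos hm0 (by linarith)
  set β := (d : ℝ) / (d - 1) with hβ
  have hβ0 : 0 < β := by rw [hβ]; apply div_pos <;> linarith
  set C2 : ℝ := ((4 * d * 5 ^ d + 2 * d) / (m * (1 - p))) * ((3 + 3 * 3 ^ d) / (p * T1)) with hC2
  have hC20 : 0 < C2 := by positivity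
  refine ⟨4 * (Real.sqrt C2) ^ β + 16 * 3 ^ d + 2, by positivity, ?_⟩
  intro N ε lam Y y0 n hN hε hε1 hC h0 ho hY hV hn herr
  have hN' : (1 : ℝ) ≤ N := by exact_mod_cast hN
  obtain ⟨j, hj, hg⟩ := good_step hm0 hp0 hp1 hε hε1 hC hN hT h0 ho hY hV hn herr
  set y := ys m ε lam N y0 with hy
  have hA := sobA hm0 hm1 hp0 hp1 hε hε1 (ys_ge (N := N) hC h0 j) (ys_out (lam := lam) (m := m) ho j)
  have hB := sobB hd hm0 hm1 hp0 hp1 hq2 hε hε1 (ys_ge (N := N) hC h0 j) (ys_out (lam := lam) (m := m) ho j)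
  rw [← hβ] at hB
  set X := ∑ k ∈ bx d (N + 1), ∑ i, |(ys m ε lam N y0 j (k + eu i) + 1) ^ ((p + m) / 2) -
    (ys m ε lam N y0 j k + 1) ^ ((p + m) / 2)| with hX
  have hX0 : 0 ≤ X := Finset.sum_nonneg fun k _ => Finset.sum_nonneg fun i _ => abs_nonneg _
  have hM := ys_mass hm0 hε hC h0 ho j
  rw [hV] at hM
  have c5 := card_le5 (d := d) hN
  have c3 := card_le3 (d := d) hN
  have hXX : X ^ 2 ≤ C2 * ((N : ℝ) ^ d / N) ^ 2 := by
    refine hA.trans ?_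
    have e1 : (4 * d * (bx d (N + 1)).card + 2 * d * ∑ k ∈ bx d N, (ys m ε lam N y0 j k - ε)) / (m * (1 - p))
       ≤ ((4 * d * 5 ^ d + 2 * d) / (m * (1 - p))) * (N : ℝ) ^ d := by
      rw [div_mul_eq_mul_div]
      apply div_le_div_of_nonneg_right _ hmp.le
      have := mul_le_mul_of_nonneg_left c5 (by positivity : (0 : ℝ) ≤ 4 * d)
      have := mul_le_mul_of_nonneg_left hM (by positivity : (0 : ℝ) ≤ 2 * d)
      linarith
    calc _ ≤ (((4 * d * 5 ^ d + 2 * d) / (m * (1 - p))) * (N : ℝ) ^ d) *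
          ((3 + 3 * 3 ^ d) / (p * T1) * ((N : ℝ) ^ d / N ^ 2)) :=
          mul_le_mul e1 hg (gain_nonneg hm0 hp1 (fun k => hε.trans_le (ys_ge hC h0 j k))) (by positivity)
      _ = _ := by rw [hC2]; field_simp
  have hX1 : X ≤ Real.sqrt C2 * ((N : ℝ) ^ d / N) := by
    apply le_of_sq_le_sq _ (by positivity)
    rw [mul_pow, Real.sq_sqrt hC20.le]; exact hXX
  have hX2 : X ^ β ≤ (Real.sqrt C2) ^ β * (N : ℝ) ^ d := by
    calc X ^ β ≤ (Real.sqrt C2 * ((N : ℝ) ^ d / N)) ^ β := Real.rpow_le_rpow hX0 hX1 hβ0.le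
      _ = (Real.sqrt C2) ^ β * ((N : ℝ) ^ d / N) ^ β := Real.mul_rpow (by positivity) (by positivity)
      _ = _ := by
        congr 1
        have e : (N : ℝ) ^ d / N = (N : ℝ) ^ ((d : ℝ) - 1) := by
          rw [Real.rpow_sub_one (by positivity), Real.rpow_natCast]
        rw [e, ← Real.rpow_mul (by positivity), hβ]
        have : ((d : ℝ) - 1) * (d / (d - 1)) = d := by
          have : (d : ℝ) - 1 ≠ 0 := by linarith
          field_simp
        rw [this, Real.rpow_natCast]
  set E := lam ^ 2 * ((bx d N).card * (4 * d * Y ^ m) ^ 2) with hE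
  have hE0 : 0 ≤ E := by positivity
  have prop : ∀ i : ℕ, ∑ k ∈ bx d N, (ys m ε lam N y0 (j + i) k + 1) ^ ((p + m) / 2 * β) ≤
      ∑ k ∈ bx d N, (ys m ε lam N y0 j k + 1) ^ ((p + m) / 2 * β) + i * (2 * E) := by
    intro i
    induction i with
    | zero => simp
    | succ i ih =>
      have := conv_step hm0 hq1 hq2 hε hC (ys_ge hC h0 (j + i)) (ys_out (lam := lam) (m := m) ho (j + i))
        (ys_le hC h0 hY (j + i))
      rw [← ys_succ] at this
      push_cast
      rw [← add_assoc]
      have t2 : ∑ k ∈ bx d N, (ys m ε lam N y0 (j + i + 1) k + 1) ^ ((p + m) / 2 * β) ≤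
        ∑ k ∈ bx d N, (ys m ε lam N y0 (j + i) k + 1) ^ ((p + m) / 2 * β) + 2 * E := this
      linarith
  have := prop (n - j)
  rw [Nat.add_sub_cancel' hj.le] at this
  have h5 : ((n - j : ℕ) : ℝ) * (2 * E) ≤ 2 * (N : ℝ) ^ d := by
    have : ((n - j : ℕ) : ℝ) ≤ n := by exact_mod_cast Nat.sub_le n j
    nlinarith
  nlinarith

lemma persist {d N M : ℕ} {m ε lam T1 : ℝ} (hm0 : 0 < m) (hm1 : m < 1)
    (hε : 0 < ε) (hε1 : ε ≤ 1) (hC : CFL d (fun x => x ^ m) ε lam) (hN : 1 ≤ N) (hT : 0 < T1)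
    {y0 : (Fin d → ℤ) → ℝ} (h0 : ∀ k, ε ≤ y0 k) (ho : ∀ k, k ∉ bx d N → y0 k = ε)
    (hs : ∀ k, k ∉ bx d M → y0 k = ε) (hM : (d : ℝ) * M ^ 2 ≤ (1 / 4) * (N + 1) ^ 2)
    (hV : ∑ k ∈ bx d N, (y0 k - ε) = (N : ℝ) ^ d) {n : ℕ}
    (hn : n * lam = T1 * N ^ 2) (hT1 : T1 * (2 * d * (2 * 3 ^ d + 1)) ≤ 1 / 4) :
    (1 / 2) * (N : ℝ) ^ d ≤ ∑ k ∈ bx d N, (ys m ε lam N y0 n k - ε) := by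
  have hl := hC.1
  have hN' : (1 : ℝ) ≤ N := by exact_mod_cast hN
  set y := ys m ε lam N y0 with hy
  set ψ : (Fin d → ℤ) → ℝ := fun k => 1 - (∑ j, (k j : ℝ) ^ 2) / (N + 1 : ℝ) ^ 2 with hψ
  have c3 := card_le3 (d := d) hN
  have c0 : (0 : ℝ) ≤ (bx d N).card := by positivity
  have hVp : (0 : ℝ) < (N : ℝ) ^ d := by positivity
  have step : ∀ n, ∑ k ∈ bx d N, ψ k * y n k - lam * (2 * d / (N + 1 : ℝ) ^ 2 *
      ((2 * 3 ^ d + 1) * (N : ℝ) ^ d)) ≤ ∑ k ∈ bx d N, ψ k * y (n + 1) k := by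
    intro n
    have h1 := psi_step hm0 hε hC (ys_ge hC h0 n) (ys_out (lam := lam) (m := m) ho n)
    rw [← ys_succ] at h1
    refine le_trans ?_ h1
    have h2 : ∑ k ∈ bx d N, (y n k ^ m - ε ^ m) ≤ (2 * 3 ^ d + 1) * (N : ℝ) ^ d := by
      have h3 : ∑ k ∈ bx d N, (y n k ^ m - ε ^ m) ≤ ∑ k ∈ bx d N, ((y n k - ε) + 2) := by
        apply Finset.sum_le_sum; intro k _
        have p0 : 0 < y n k := hε.trans_le (ys_ge hC h0 n k)
        have p1 : 0 < ε ^ m := by positivity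
        have t := tan_conc hm0.le hm1.le one_pos p0
        simp at t
        have : m * (y n k - 1) ≤ y n k := by nlinarith
        linarith
      have hmass := ys_mass hm0 hε hC h0 ho n
      rw [Finset.sum_add_distrib, Finset.sum_const, nsmul_eq_mul] at h3
      rw [hV] at hmass
      have : ∑ k ∈ bx d N, (y n k - ε) ≤ (N : ℝ) ^ d := hmass
      linarith
    have h4 : lam * (2 * d / (N + 1 : ℝ) ^ 2 * ∑ k ∈ bx d N, (y n k ^ m - ε ^ m)) ≤
       lam * (2 * d / (N + 1 : ℝ) ^ 2 * ((2 * 3 ^ d + 1) * (N : ℝ) ^ d)) := by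
      apply mul_le_mul_of_nonneg_left _ hl.le
      apply mul_le_mul_of_nonneg_left h2 (by positivity)
    exact sub_le_sub_left h4 _
  have it : ∀ n : ℕ, ∑ k ∈ bx d N, ψ k * y 0 k - n * (lam * (2 * d / (N + 1 : ℝ) ^ 2 *
      ((2 * 3 ^ d + 1) * (N : ℝ) ^ d))) ≤ ∑ k ∈ bx d N, ψ k * y n k := by
    intro n
    induction n with
    | zero => simp
    | succ n ih => have := step n; push_cast; linarith
  have h6 := it n
  have h7 : n * (lam * (2 * d / (N + 1 : ℝ) ^ 2 * ((2 * 3 ^ d + 1) * (N : ℝ) ^ d))) ≤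
      (1 / 4) * (N : ℝ) ^ d := by
    have : n * (lam * (2 * d / (N + 1 : ℝ) ^ 2 * ((2 * 3 ^ d + 1) * (N : ℝ) ^ d))) =
      (n * lam / (N + 1) ^ 2) * (2 * d * (2 * 3 ^ d + 1)) * (N : ℝ) ^ d := by ring
    rw [this, hn]
    apply mul_le_mul_of_nonneg_right _ hVp.le
    refine le_trans ?_ hT1
    apply mul_le_mul_of_nonneg_right _ (by positivity)
    rw [div_le_iff₀ (by positivity)]
    apply mul_le_mul_of_nonneg_left _ hT.le
    apply pow_le_pow_left₀ <;> linarith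
  have h8 : ∑ k ∈ bx d N, ψ k * (y n k - ε) ≤ ∑ k ∈ bx d N, (y n k - ε) := by
    apply Finset.sum_le_sum; intro k _
    have p0 : 0 ≤ y n k - ε := sub_nonneg.2 (ys_ge hC h0 n k)
    have p1 : ψ k ≤ 1 := by
      simp only [hψ]
      have : 0 ≤ (∑ j, (k j : ℝ) ^ 2) / (N + 1 : ℝ) ^ 2 := by positivity
      linarith
    nlinarith
  have h9 : (3 / 4) * (N : ℝ) ^ d ≤ ∑ k ∈ bx d N, ψ k * (y 0 k - ε) := by
    rw [← hV, Finset.mul_sum]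
    apply Finset.sum_le_sum; intro k _
    change _ ≤ ψ k * (y0 k - ε)
    by_cases hk : k ∈ bx d M
    · have p0 : 0 ≤ y0 k - ε := sub_nonneg.2 (h0 k)
      apply mul_le_mul_of_nonneg_right _ p0
      simp only [hψ]
      have : (∑ j, (k j : ℝ) ^ 2) / (N + 1 : ℝ) ^ 2 ≤ 1 / 4 := by
        rw [div_le_iff₀ (by positivity)]
        refine le_trans ?_ hM
        calc ∑ j, (k j : ℝ) ^ 2 ≤ ∑ j : Fin d, (M : ℝ) ^ 2 := by
              apply Finset.sum_le_sum; intro j _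
              rw [mem_bx] at hk
              apply sq_le_sq'
              · exact_mod_cast (hk j).1
              · exact_mod_cast (hk j).2
          _ = _ := by simp
      linarith
    · rw [hs k hk]; simp
  have h10 : ∀ n, ∑ k ∈ bx d N, ψ k * (y n k - ε) = ∑ k ∈ bx d N, ψ k * y n k -
      ∑ k ∈ bx d N, ψ k * ε := by
    intro n; rw [← Finset.sum_sub_distrib]; apply Finset.sum_congr rfl; intro k _; ring
  have a1 := h10 n
  have a2 := h10 0
  linarith


lemma refl_one {d N M : ℕ} {m ε lam : ℝ} (hC : CFL d (fun x => x ^ m) ε lam)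
    {y0 : (Fin d → ℤ) → ℝ} (h0 : ∀ k, ε ≤ y0 k) (hs : ∀ k, k ∉ bx d M → y0 k = ε)
    (n : ℕ) (k : Fin d → ℤ) (i : Fin d) (hk : 2 * (M : ℤ) < |k i|) :
    ys m ε lam N y0 n k ≤ ys m ε lam N y0 n (Function.update k i 0) := by
  obtain ⟨s, hs1, hsk⟩ : ∃ s : ℤ, (s = 1 ∨ s = -1) ∧ s * |k i| = k i := by
    rcases le_total 0 (k i) with h | h
    · exact ⟨1, Or.inl rfl, by rw [abs_of_nonneg h]; ring⟩
    · exact ⟨-1, Or.inr rfl, by rw [abs_of_nonpos h]; ring⟩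
  set A := |k i| with hA
  have hA0 : 0 < A := by omega
  have key : ∀ n l, s * (2 * l i) ≤ A →
      ys m ε lam N y0 n (rfl' i (s * A) l) ≤ ys m ε lam N y0 n l := by
    intro n
    induction n with
    | zero =>
      intro l hl
      rw [ys_zero, hs (rfl' i (s * A) l)]
      · exact h0 l
      · intro hmem
        have := (mem_bx.1 hmem) i
        simp only [rfl', Function.update_self] at this
        rcases hs1 with rfl | rfl <;> omega
    | succ n ih =>
      rw [ys_succ]
      exact refl_step hC (ys_ge hC h0 n) i A s hA0 hs1 ih
  have := key n (Function.update k i 0) (by simp; omega)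
  have e : rfl' i (s * A) (Function.update k i 0) = k := by
    simp [rfl', hsk]
  rwa [e] at this

lemma refl_all {d N M : ℕ} {m ε lam : ℝ} (hC : CFL d (fun x => x ^ m) ε lam)
    {y0 : (Fin d → ℤ) → ℝ} (h0 : ∀ k, ε ≤ y0 k) (hs : ∀ k, k ∉ bx d M → y0 k = ε)
    (n : ℕ) (k : Fin d → ℤ) (hk : ∀ i, 2 * (M : ℤ) < |k i|) :
    ys m ε lam N y0 n k ≤ ys m ε lam N y0 n 0 := by
  classical
  have key : ∀ S : Finset (Fin d), ys m ε lam N y0 n k ≤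
      ys m ε lam N y0 n (fun j => if j ∈ S then 0 else k j) := by
    intro S
    induction S using Finset.induction_on with
    | empty => simp
    | insert i S hi ih =>
      refine ih.trans ?_
      have := refl_one (N := N) hC h0 hs n (fun j => if j ∈ S then 0 else k j) i (by simp [hi, hk i])
      refine this.trans (le_of_eq ?_)
      congr 1
      ext j
      by_cases hj : j = i
      · subst hj; simp
      · simp [Finset.mem_insert, hj]
  have := key Finset.univ
  simp only [Finset.mem_univ, if_true] at this
  exact this

lemma slab_card {d N M : ℕ} (hd : 1 ≤ d) :
    (((bx d N).filter (fun k => ∃ i, |k i| ≤ 2 * (M : ℤ))).card : ℝ) ≤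
      d * ((4 * M + 1) * (2 * N + 1 : ℝ) ^ (d - 1)) := by
  classical
  have h1 : (bx d N).filter (fun k => ∃ i, |k i| ≤ 2 * (M : ℤ)) ⊆
      Finset.univ.biUnion (fun i : Fin d => Fintype.piFinset
        (fun j => if j = i then Finset.Icc (-(2 * M : ℤ)) (2 * M) else Finset.Icc (-(N : ℤ)) N)) := by
    intro k hk
    rw [Finset.mem_filter, mem_bx] at hk
    obtain ⟨hk, i, hi⟩ := hk
    rw [Finset.mem_biUnion]
    refine ⟨i, Finset.mem_univ _, ?_⟩
    rw [Fintype.mem_piFinset]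
    intro j
    by_cases hj : j = i
    · subst hj; simp only [if_true, Finset.mem_Icc]; exact abs_le.1 hi
    · simp only [hj, if_false, Finset.mem_Icc]; exact hk j
  have h2 : ∀ i : Fin d, (Fintype.piFinset
        (fun j => if j = i then Finset.Icc (-(2 * M : ℤ)) (2 * M) else Finset.Icc (-(N : ℤ)) N)).card
        = (4 * M + 1) * (2 * N + 1) ^ (d - 1) := by
    intro i
    rw [Fintype.card_piFinset]
    have : ∀ j : Fin d, (if j = i then Finset.Icc (-(2 * M : ℤ)) (2 * M) else Finset.Icc (-(N : ℤ)) N).card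
      = if j = i then 4 * M + 1 else 2 * N + 1 := by
      intro j; split_ifs <;> rw [Int.card_Icc] <;> omega
    simp only [this]
    rw [Finset.prod_ite, Finset.prod_const, Finset.prod_const, Finset.filter_eq', Finset.filter_ne']
    simp
  have h3 := (Finset.card_le_card h1).trans Finset.card_biUnion_le
  simp only [h2] at h3
  rw [Finset.sum_const, Finset.card_univ, Fintype.card_fin, smul_eq_mul] at h3
  exact_mod_cast h3

lemma cfl_pow {d : ℕ} {m ε lam : ℝ} (hm0 : 0 < m) (hm1 : m < 1) (hε : 0 < ε) (hl : 0 < lam)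
    (h : 4 * d * lam * ε ^ (m - 1) ≤ 1) : CFL d (fun x => x ^ m) ε lam := by
  refine ⟨hl, fun A B hB hAB => ?_⟩
  have hB0 : 0 < B := hε.trans_le hB
  have hA0 : 0 < A := hB0.trans_le hAB
  refine ⟨sub_nonneg.2 (Real.rpow_le_rpow hB0.le hAB hm0.le), ?_⟩
  have h1 := tan_conc hm0.le hm1.le hB0 hA0
  have h2 : B ^ (m - 1) ≤ ε ^ (m - 1) := Real.rpow_le_rpow_of_nonpos hε hB (by linarith)
  have h3 : 0 < B ^ (m - 1) := by positivity
  have h4 : A ^ m - B ^ m ≤ ε ^ (m - 1) * (A - B) := by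
    have : m * B ^ (m - 1) ≤ ε ^ (m - 1) := by nlinarith
    have := mul_le_mul_of_nonneg_right this (sub_nonneg.2 hAB)
    linarith
  calc 4 * d * lam * (A ^ m - B ^ m) ≤ 4 * d * lam * (ε ^ (m - 1) * (A - B)) :=
        mul_le_mul_of_nonneg_left h4 (by positivity)
    _ = (4 * d * lam * ε ^ (m - 1)) * (A - B) := by ring
    _ ≤ 1 * (A - B) := mul_le_mul_of_nonneg_right h (sub_nonneg.2 hAB)
    _ = A - B := one_mul _

lemma aux_dM {d M N : ℝ} (hd : 3 ≤ d) (h1 : M ≤ 1 / (2 * d) * N) (hM : 0 ≤ M) (hN : 0 ≤ N) :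
    d * M ^ 2 ≤ (1 / 4) * (N + 1) ^ 2 := by
  have h2 : d * M ≤ N / 2 := by
    have := mul_le_mul_of_nonneg_left h1 (by linarith : (0 : ℝ) ≤ d)
    have e : d * (1 / (2 * d) * N) = N / 2 := by field_simp
    linarith
  have h3 : M ≤ N / 2 := by nlinarith
  have h4 : (d * M) * M ≤ (N / 2) * (N / 2) := mul_le_mul h2 h3 hM (by positivity)
  nlinarith

set_option maxHeartbeats 1000000 in
theorem discrete_main {d : ℕ} (hd : 3 ≤ d) {m : ℝ} (hmc : (d - 2 : ℝ) / d < m) (hm1 : m < 1) :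
    ∃ θ T1 c : ℝ, 0 < θ ∧ θ ≤ 1 ∧ 0 < T1 ∧ 0 < c ∧
    ∀ (N M : ℕ) (ε : ℝ) (y0 : (Fin d → ℤ) → ℝ), 1 ≤ M → (M : ℝ) ≤ θ * N → 0 < ε → ε ≤ 1 →
    (∀ k, ε ≤ y0 k) → (∀ k, k ∉ bx d M → y0 k = ε) →
    ∑ k ∈ bx d M, (y0 k - ε) = (N : ℝ) ^ d →
    ∃ l0 > 0, ∀ lam, 0 < lam → lam ≤ l0 → CFL d (fun x => x ^ m) ε lam ∧
      ∀ n : ℕ, n * lam = T1 * N ^ 2 → c ≤ ys m ε lam N y0 n 0 := by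
  have hd3 : (3 : ℝ) ≤ d := by exact_mod_cast hd
  have hm0 : 0 < m := lt_of_le_of_lt (div_nonneg (by linarith) (by linarith)) hmc
  have hd1 : (d - 2 : ℝ) / d = 1 - 2 / d := by field_simp
  have hd2 : (2 : ℝ) / d ≤ 2 / 3 := by
    apply div_le_div_of_nonneg_left <;> linarith
  have hd20 : 0 < (2 : ℝ) / d := by positivity
  rw [hd1] at hmc
  set p : ℝ := (3 - 2 / d - m) / 2 with hp
  have hp0 : 0 < p := by rw [hp]; linarith
  have hp1 : p < 1 := by rw [hp]; linarith
  have hpm : 2 - 2 / (d : ℝ) < p + m := by rw [hp]; linarith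
  set q := (p + m) / 2 * ((d : ℝ) / (d - 1)) with hq
  have hq1 : 1 < q := by
    have e : (2 - 2 / (d : ℝ)) / 2 * ((d : ℝ) / (d - 1)) = 1 := by
      have : (d : ℝ) - 1 ≠ 0 := by linarith
      field_simp
    rw [← e, hq]
    apply mul_lt_mul_of_pos_right _ (div_pos (by linarith) (by linarith))
    linarith
  have hq2 : q < 2 := by
    have : (d : ℝ) / (d - 1) ≤ 2 := by rw [div_le_iff₀ (by linarith)]; linarith
    rw [hq]; nlinarith
  set T1 : ℝ := 1 / (4 * (2 * d * (2 * 3 ^ d + 1))) with hT1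
  have hT10 : 0 < T1 := by positivity
  obtain ⟨C, hC0, hQ⟩ := qbound hd hm0 hm1 hp0 hp1 hq1 hq2 hT10
  set Λ : ℝ := (8 * C) ^ (1 / (q - 1)) with hΛ
  have hΛ0 : 0 < Λ := by positivity
  have hΛ1 : Λ ^ (1 - q) * C = 1 / 8 := by
    rw [hΛ, ← Real.rpow_mul (by positivity)]
    have : 1 / (q - 1) * (1 - q) = -1 := by
      have : q - 1 ≠ 0 := by linarith
      field_simp; ring
    rw [this, Real.rpow_neg_one]; field_simp
  set θ : ℝ := min (1 / (2 * d)) (1 / (8 * (Λ * (d * 5 * 3 ^ (d - 1))))) with hθ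
  have hθ0 : 0 < θ := by positivity
  have hθ1 : θ ≤ 1 / (2 * d) := min_le_left _ _
  have hθ2 : Λ * (d * 5 * 3 ^ (d - 1)) * θ ≤ 1 / 8 := by
    have : θ ≤ 1 / (8 * (Λ * (d * 5 * 3 ^ (d - 1)))) := min_le_right _ _
    rw [le_div_iff₀ (by positivity)] at this
    linarith
  have hθ11 : θ ≤ 1 := hθ1.trans (by rw [div_le_one (by positivity)]; linarith)
  refine ⟨θ, T1, 1 / (4 * 3 ^ d), hθ0, hθ11, hT10, by positivity, ?_⟩
  intro N M ε y0 hM hMN hε hε1 h0 hs hV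
  have hM' : (1 : ℝ) ≤ M := by exact_mod_cast hM
  have hN1 : (1 : ℝ) ≤ N := by
    have : θ * N ≤ 1 * N := mul_le_mul_of_nonneg_right hθ11 (by positivity)
    linarith
  have hN : 1 ≤ N := by exact_mod_cast hN1
  have hMN1 : (M : ℝ) ≤ N := by
    have : θ * N ≤ 1 * N := mul_le_mul_of_nonneg_right hθ11 (by positivity)
    linarith
  have hMN' : M ≤ N := by exact_mod_cast hMN1
  have hsub : bx d M ⊆ bx d N := by
    intro k hk; rw [mem_bx] at *; intro i; have := hk i; omega
  have hV' : ∑ k ∈ bx d N, (y0 k - ε) = (N : ℝ) ^ d := by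
    rw [← hV]; symm
    apply Finset.sum_subset hsub
    intro k _ hk; rw [hs k hk, sub_self]
  have ho : ∀ k, k ∉ bx d N → y0 k = ε := fun k hk => hs k (fun h => hk (hsub h))
  set Y : ℝ := ε + (N : ℝ) ^ d with hYdef
  have hNd : (0 : ℝ) < (N : ℝ) ^ d := by positivity
  have hY : ∀ k, y0 k ≤ Y := by
    intro k
    by_cases hk : k ∈ bx d N
    · have := Finset.single_le_sum (f := fun k => y0 k - ε) (fun k _ => sub_nonneg.2 (h0 k)) hk
      rw [hV'] at this
      linarith
    · rw [ho k hk]; linarith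
  set K : ℝ := (bx d N).card * (4 * d * Y ^ m) ^ 2 with hK
  have hK0 : 0 ≤ K := by positivity
  set l1 : ℝ := 1 / (4 * d * ε ^ (m - 1)) with hl1
  set l2 : ℝ := (N : ℝ) ^ d / (T1 * N ^ 2 * (K + 1)) with hl2
  refine ⟨min l1 l2, by positivity, ?_⟩
  intro lam hl hll
  have hCFL : CFL d (fun x => x ^ m) ε lam := by
    apply cfl_pow hm0 hm1 hε hl
    have := hll.trans (min_le_left _ _)
    rw [hl1, le_div_iff₀ (by positivity)] at this
    linarith
  refine ⟨hCFL, ?_⟩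
  intro n hn
  have herr : n * (lam ^ 2 * K) ≤ (N : ℝ) ^ d := by
    have := hll.trans (min_le_right _ _)
    rw [hl2, le_div_iff₀ (by positivity)] at this
    have e : n * (lam ^ 2 * K) = (n * lam) * lam * K := by ring
    rw [e, hn]
    have : 0 ≤ lam * (T1 * N ^ 2) := by positivity
    nlinarith
  have hq := hQ N ε lam Y y0 n hN hε hε1 hCFL h0 ho hY hV' hn herr
  have hmass := persist hm0 hm1 hε hε1 hCFL hN hT10 h0 ho hs (aux_dM hd3
    (hMN.trans (mul_le_mul_of_nonneg_right hθ1 (Nat.cast_nonneg N))) (Nat.cast_nonneg M)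
    (Nat.cast_nonneg N)) hV' hn (by rw [hT1]; apply le_of_eq; field_simp)
  set y := ys m ε lam N y0 n with hy
  have hyge : ∀ k, ε ≤ y k := ys_ge hCFL h0 n
  classical
  set P : (Fin d → ℤ) → Prop := fun k => ∃ i, |k i| ≤ 2 * (M : ℤ) with hP
  have hsplit := Finset.sum_filter_add_sum_filter_not (bx d N) P (fun k => y k - ε)
  have hslab : ∑ k ∈ (bx d N).filter P, (y k - ε) ≤ (1 / 4) * (N : ℝ) ^ d := by
    have e1 : ∑ k ∈ (bx d N).filter P, (y k - ε) ≤
        ∑ k ∈ (bx d N).filter P, (Λ + Λ ^ (1 - q) * (y k + 1) ^ q) := by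
      apply Finset.sum_le_sum; intro k _
      have z0 : 0 < y k + 1 := by linarith [hyge k]
      have : y k + 1 ≤ Λ + Λ ^ (1 - q) * (y k + 1) ^ q := by
        by_cases hz : y k + 1 ≤ Λ
        · have : 0 ≤ Λ ^ (1 - q) * (y k + 1) ^ q := by positivity
          linarith
        · push Not at hz
          have e : y k + 1 = (y k + 1) ^ (1 - q) * (y k + 1) ^ q := by
            rw [← Real.rpow_add z0]; simp
          have e2 : (y k + 1) ^ (1 - q) ≤ Λ ^ (1 - q) :=
            Real.rpow_le_rpow_of_nonpos hΛ0 hz.le (by linarith)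
          have e3 : (y k + 1) ^ (1 - q) * (y k + 1) ^ q ≤ Λ ^ (1 - q) * (y k + 1) ^ q :=
            mul_le_mul_of_nonneg_right e2 (by positivity)
          linarith
      linarith
    rw [Finset.sum_add_distrib, Finset.sum_const, nsmul_eq_mul, ← Finset.mul_sum] at e1
    have e2 : ∑ k ∈ (bx d N).filter P, (y k + 1) ^ q ≤ C * (N : ℝ) ^ d := by
      refine le_trans ?_ hq
      apply Finset.sum_le_sum_of_subset_of_nonneg (Finset.filter_subset _ _)
      intro k _ _
      have z0 : 0 < y k + 1 := by linarith [hyge k]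
      positivity
    have e3 := slab_card (N := N) (M := M) (by omega : 1 ≤ d)
    have e4 : (d : ℝ) * ((4 * M + 1) * (2 * N + 1 : ℝ) ^ (d - 1)) ≤
        d * 5 * 3 ^ (d - 1) * θ * (N : ℝ) ^ d := by
      have a1 : (4 * M + 1 : ℝ) ≤ 5 * (θ * N) := by linarith
      have a2 : (2 * N + 1 : ℝ) ^ (d - 1) ≤ (3 * N) ^ (d - 1) :=
        pow_le_pow_left₀ (by positivity) (by linarith) _
      have a3 : (N : ℝ) ^ d = N * N ^ (d - 1) := by
        rw [← pow_succ', Nat.sub_add_cancel (by omega)]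
      calc (d : ℝ) * ((4 * M + 1) * (2 * N + 1 : ℝ) ^ (d - 1)) ≤
          d * ((5 * (θ * N)) * (3 * N) ^ (d - 1)) := by
            apply mul_le_mul_of_nonneg_left _ (by positivity)
            exact mul_le_mul a1 a2 (by positivity) (by positivity)
        _ = _ := by rw [a3, mul_pow]; ring
    have e5 : ((bx d N).filter P).card * Λ ≤ (1 / 8) * (N : ℝ) ^ d := by
      calc ((bx d N).filter P).card * Λ ≤ (d * 5 * 3 ^ (d - 1) * θ * (N : ℝ) ^ d) * Λ :=
            mul_le_mul_of_nonneg_right (e3.trans e4) hΛ0.le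
        _ = (Λ * (d * 5 * 3 ^ (d - 1)) * θ) * (N : ℝ) ^ d := by ring
        _ ≤ _ := mul_le_mul_of_nonneg_right hθ2 hNd.le
    have e6 : Λ ^ (1 - q) * ∑ k ∈ (bx d N).filter P, (y k + 1) ^ q ≤ (1 / 8) * (N : ℝ) ^ d := by
      calc _ ≤ Λ ^ (1 - q) * (C * (N : ℝ) ^ d) := mul_le_mul_of_nonneg_left e2 (by positivity)
        _ = _ := by rw [← mul_assoc, hΛ1]
    linarith
  have hrest : (1 / 4) * (N : ℝ) ^ d ≤ ∑ k ∈ (bx d N).filter (fun k => ¬ P k), (y k - ε) := by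
    linarith
  have c3 := card_le3 (d := d) hN
  obtain ⟨k, hk, hkv⟩ : ∃ k ∈ (bx d N).filter (fun k => ¬ P k), 1 / (4 * 3 ^ d) ≤ y k - ε := by
    by_contra hcon
    push Not at hcon
    have hne : ((bx d N).filter (fun k => ¬ P k)).Nonempty := by
      rw [Finset.nonempty_iff_ne_empty]; intro he
      rw [he, Finset.sum_empty] at hrest
      linarith
    have h1 := Finset.sum_lt_sum_of_nonempty hne hcon
    rw [Finset.sum_const, nsmul_eq_mul] at h1
    have h2 : (((bx d N).filter (fun k => ¬ P k)).card : ℝ) ≤ (bx d N).card := by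
      exact_mod_cast Finset.card_le_card (Finset.filter_subset _ _)
    have h3 : (((bx d N).filter (fun k => ¬ P k)).card : ℝ) * (1 / (4 * 3 ^ d)) ≤
        (3 ^ d * (N : ℝ) ^ d) * (1 / (4 * 3 ^ d)) :=
      mul_le_mul_of_nonneg_right (h2.trans c3) (by positivity)
    have h4 : (3 ^ d * (N : ℝ) ^ d) * (1 / (4 * 3 ^ d)) = (1 / 4) * (N : ℝ) ^ d := by field_simp
    linarith
  rw [Finset.mem_filter] at hk
  have hk2 : ∀ i, 2 * (M : ℤ) < |k i| := by
    intro i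
    by_contra hcon
    push Not at hcon
    exact hk.2 ⟨i, hcon⟩
  have := refl_all (N := N) hCFL h0 hs n k hk2
  have : y k ≤ y 0 := this
  linarith


/-- coordinate vector -/
noncomputable def ev {d : ℕ} (i : Fin d) : EuclideanSpace ℝ (Fin d) := EuclideanSpace.single i 1

/-- classical solution with named derivatives -/
structure Cl {d : ℕ} (m : ℝ) (Q : Set (ℝ × EuclideanSpace ℝ (Fin d)))
    (u : ℝ → EuclideanSpace ℝ (Fin d) → ℝ) (ut : ℝ × EuclideanSpace ℝ (Fin d) → ℝ)
    (W D : Fin d → ℝ × EuclideanSpace ℝ (Fin d) → ℝ) : Prop where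
  pos : ∀ p ∈ Q, 0 < u p.1 p.2
  cont : ContinuousOn (fun p : ℝ × EuclideanSpace ℝ (Fin d) => u p.1 p.2) Q
  cut : ContinuousOn ut Q
  cD : ∀ i, ContinuousOn (D i) Q
  dt : ∀ p ∈ Q, HasDerivAt (fun s => u s p.2) (ut p) p.1
  d1 : ∀ i, ∀ p ∈ Q, HasDerivAt (fun s : ℝ => u p.1 (p.2 + s • ev i) ^ m) (W i p) 0
  d2 : ∀ i, ∀ p ∈ Q, HasDerivAt (fun s : ℝ => W i (p.1, p.2 + s • ev i)) (D i p) 0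
  eqn : ∀ p ∈ Q, ut p = ∑ i, D i p

lemma Cl.mono {d : ℕ} {m : ℝ} {Q Q' : Set (ℝ × EuclideanSpace ℝ (Fin d))}
    {u : ℝ → EuclideanSpace ℝ (Fin d) → ℝ} {ut : ℝ × EuclideanSpace ℝ (Fin d) → ℝ}
    {W D : Fin d → ℝ × EuclideanSpace ℝ (Fin d) → ℝ} (h : Cl m Q u ut W D) (hs : Q' ⊆ Q) :
    Cl m Q' u ut W D where
  pos p hp := h.pos p (hs hp)
  cont := h.cont.mono hs
  cut := h.cut.mono hs
  cD i := (h.cD i).mono hs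
  dt p hp := h.dt p (hs hp)
  d1 i p hp := h.d1 i p (hs hp)
  d2 i p hp := h.d2 i p (hs hp)
  eqn p hp := h.eqn p (hs hp)

lemma hasDerivAt_shift {d : ℕ} {f : EuclideanSpace ℝ (Fin d) → ℝ} {x e : EuclideanSpace ℝ (Fin d)}
    {s0 c : ℝ} (h : HasDerivAt (fun s : ℝ => f (x + s0 • e + s • e)) c 0) :
    HasDerivAt (fun s : ℝ => f (x + s • e)) c s0 := by
  have h2 : HasDerivAt (fun s : ℝ => s - s0) 1 s0 := (hasDerivAt_id s0).sub_const s0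
  have h' : HasDerivAt (fun s : ℝ => f (x + s0 • e + s • e)) c (s0 - s0) := by rwa [sub_self]
  have h3 := HasDerivAt.comp (h := fun s : ℝ => s - s0) s0 h' h2
  rw [mul_one] at h3
  refine h3.congr_of_eventuallyEq ?_
  filter_upwards with s
  simp only [Function.comp]
  congr 1
  module

lemma mul_rpow_neg {A x m : ℝ} (hA : 0 < A) : (A * x) ^ m = A ^ m * x ^ m := by
  rcases le_or_gt 0 x with h | h
  · exact Real.mul_rpow hA.le h
  · rw [Real.rpow_def_of_neg h, Real.rpow_def_of_neg (mul_neg_of_pos_of_neg hA h),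
      Real.log_mul hA.ne' h.ne, Real.rpow_def_of_pos hA, add_mul, Real.exp_add, mul_assoc]

lemma cl_of_sol {d : ℕ} {m : ℝ} {a b : ℝ} {Ω : Set (EuclideanSpace ℝ (Fin d))} (hΩ : IsOpen Ω)
    {u : ℝ → EuclideanSpace ℝ (Fin d) → ℝ} (h : IsFDESol m (Ioo a b ×ˢ Ω) u) :
    ∃ ut W D, Cl m (Ioo a b ×ˢ Ω) u ut W D := by
  obtain ⟨hpos, hsm, heq⟩ := h
  set Q : Set (ℝ × EuclideanSpace ℝ (Fin d)) := Ioo a b ×ˢ Ω with hQ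
  have hQo : IsOpen Q := isOpen_Ioo.prod hΩ
  set U : ℝ × EuclideanSpace ℝ (Fin d) → ℝ := fun p => u p.1 p.2 with hU
  set G : ℝ × EuclideanSpace ℝ (Fin d) → ℝ := fun p => u p.1 p.2 ^ m with hG
  have hGs : ContDiffOn ℝ (⊤ : ℕ∞) G Q := hsm.rpow_const_of_ne (fun p hp => (hpos p hp).ne')
  have hUf : ContDiffOn ℝ (⊤ : ℕ∞) (fderiv ℝ U) Q :=
    hsm.fderiv_of_isOpen hQo (by simp)
  have hGf : ContDiffOn ℝ (⊤ : ℕ∞) (fderiv ℝ G) Q :=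
    hGs.fderiv_of_isOpen hQo (by simp)
  set ut : ℝ × EuclideanSpace ℝ (Fin d) → ℝ := fun p => fderiv ℝ U p (1, 0) with hut
  set W : Fin d → ℝ × EuclideanSpace ℝ (Fin d) → ℝ := fun i p => fderiv ℝ G p (0, ev i) with hW
  have hWs : ∀ i, ContDiffOn ℝ (⊤ : ℕ∞) (W i) Q := fun i => hGf.clm_apply contDiffOn_const
  set D : Fin d → ℝ × EuclideanSpace ℝ (Fin d) → ℝ := fun i p => fderiv ℝ (W i) p (0, ev i) with hD
  have hDs : ∀ i, ContDiffOn ℝ (⊤ : ℕ∞) (D i) Q := fun i =>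
    ((hWs i).fderiv_of_isOpen hQo (by simp)).clm_apply contDiffOn_const
  have dif : ∀ {F : ℝ × EuclideanSpace ℝ (Fin d) → ℝ}, ContDiffOn ℝ (⊤ : ℕ∞) F Q → ∀ p ∈ Q,
      HasFDerivAt F (fderiv ℝ F p) p := fun {F} hF p hp =>
    ((hF.contDiffAt (hQo.mem_nhds hp)).differentiableAt (by simp)).hasFDerivAt
  have line : ∀ {F : ℝ × EuclideanSpace ℝ (Fin d) → ℝ}, ContDiffOn ℝ (⊤ : ℕ∞) F Q → ∀ p ∈ Q, ∀ e,
      HasDerivAt (fun s : ℝ => F (p.1, p.2 + s • e)) (fderiv ℝ F p (0, e)) 0 := by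
    intro F hF p hp e
    have h1 : HasDerivAt (fun s : ℝ => p.2 + s • e) e 0 := by
      have := ((hasDerivAt_id (0:ℝ)).smul_const e).const_add p.2
      simpa using this
    have h2 : HasDerivAt (fun s : ℝ => (p.1, p.2 + s • e)) ((0:ℝ), e) 0 :=
      (hasDerivAt_const 0 p.1).prodMk h1
    have h3 : HasFDerivAt F (fderiv ℝ F p) (p.1, p.2 + (0:ℝ) • e) := by simpa using dif hF p hp
    exact h3.comp_hasDerivAt 0 h2
  have tim : ∀ p ∈ Q, HasDerivAt (fun s : ℝ => u s p.2) (ut p) p.1 := by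
    intro p hp
    have h2 : HasDerivAt (fun s : ℝ => (s, p.2)) ((1:ℝ), (0 : EuclideanSpace ℝ (Fin d))) p.1 :=
      (hasDerivAt_id p.1).prodMk (hasDerivAt_const _ _)
    have h3 : HasFDerivAt U (fderiv ℝ U p) (p.1, p.2) := dif hsm p hp
    exact h3.comp_hasDerivAt p.1 h2
  have spa : ∀ {F : ℝ × EuclideanSpace ℝ (Fin d) → ℝ}, ContDiffOn ℝ (⊤ : ℕ∞) F Q → ∀ p ∈ Q, ∀ e,
      fderiv ℝ (fun y => F (p.1, y)) p.2 e = fderiv ℝ F p (0, e) := by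
    intro F hF p hp e
    have h2 : HasFDerivAt (fun y : EuclideanSpace ℝ (Fin d) => (p.1, y))
      (ContinuousLinearMap.inr ℝ ℝ (EuclideanSpace ℝ (Fin d))) p.2 := hasFDerivAt_prodMk_right p.1 p.2
    have h3 : HasFDerivAt F (fderiv ℝ F p) (p.1, p.2) := dif hF p hp
    have h4 := h3.comp p.2 h2
    have h5 : fderiv ℝ (fun y => F (p.1, y)) p.2 =
      (fderiv ℝ F p).comp (ContinuousLinearMap.inr ℝ ℝ (EuclideanSpace ℝ (Fin d))) := h4.fderiv
    rw [h5]; simp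
  refine ⟨ut, W, D, hpos, hsm.continuousOn, (hUf.clm_apply contDiffOn_const).continuousOn,
    fun i => (hDs i).continuousOn, tim, fun i p hp => line hGs p hp _,
    fun i p hp => line (hWs i) p hp _, ?_⟩
  intro p hp
  rw [← (tim p hp).deriv, heq p hp, spaceLap]
  apply Finset.sum_congr rfl
  intro i _
  have hnear : ∀ᶠ y in nhds p.2, (p.1, y) ∈ Q := by
    have : Continuous (fun y : EuclideanSpace ℝ (Fin d) => (p.1, y)) := by fun_prop
    exact this.continuousAt.eventually (hQo.mem_nhds (by exact hp))
  have e1 : (fun y => fderiv ℝ (fun y => u p.1 y ^ m) y (EuclideanSpace.single i 1)) =ᶠ[nhds p.2]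
      (fun y => W i (p.1, y)) := by
    filter_upwards [hnear] with y hy
    exact spa hGs (p.1, y) hy _
  rw [e1.fderiv_eq]
  exact spa (hWs i) p hp _

lemma Cl.scale {d : ℕ} {m : ℝ} {Q Q' : Set (ℝ × EuclideanSpace ℝ (Fin d))}
    {u : ℝ → EuclideanSpace ℝ (Fin d) → ℝ} {ut : ℝ × EuclideanSpace ℝ (Fin d) → ℝ}
    {W D : Fin d → ℝ × EuclideanSpace ℝ (Fin d) → ℝ} (h : Cl m Q u ut W D)
    (A ρ δ : ℝ) (x1 : EuclideanSpace ℝ (Fin d)) (hA : 0 < A) (hρ : 0 < ρ)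
    (hs : ∀ p ∈ Q', (δ + A ^ (1 - m) * ρ ^ 2 * p.1, x1 + ρ • p.2) ∈ Q) :
    ∃ ut' W' D', Cl m Q' (fun t x => A⁻¹ * u (δ + A ^ (1 - m) * ρ ^ 2 * t) (x1 + ρ • x))
      ut' W' D' := by
  set σ := A ^ (1 - m) * ρ ^ 2 with hσ
  set f : ℝ × EuclideanSpace ℝ (Fin d) → ℝ × EuclideanSpace ℝ (Fin d) :=
    fun p => (δ + σ * p.1, x1 + ρ • p.2) with hf
  have hfc : Continuous f := by rw [hf]; fun_prop
  have hmap : MapsTo f Q' Q := hs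
  have arg : ∀ (p : ℝ × EuclideanSpace ℝ (Fin d)) (s : ℝ) (i : Fin d),
      x1 + ρ • (p.2 + s • ev i) = (x1 + ρ • p.2) + (ρ * s) • ev i := by
    intro p s i; module
  have lin : HasDerivAt (fun s : ℝ => ρ * s) ρ 0 := by
    simpa using (hasDerivAt_id (0:ℝ)).const_mul ρ
  refine ⟨fun p => A⁻¹ * σ * ut (f p), fun i p => (A⁻¹ ^ m * ρ) * W i (f p),
    fun i p => (A⁻¹ ^ m * ρ ^ 2) * D i (f p), ?_, ?_, ?_, ?_, ?_, ?_, ?_, ?_⟩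
  · intro p hp; exact mul_pos (inv_pos.2 hA) (h.pos _ (hs p hp))
  · exact continuousOn_const.mul (h.cont.comp hfc.continuousOn hmap)
  · exact continuousOn_const.mul (h.cut.comp hfc.continuousOn hmap)
  · intro i; exact continuousOn_const.mul ((h.cD i).comp hfc.continuousOn hmap)
  · intro p hp
    have h1 := h.dt (f p) (hs p hp)
    have h2 : HasDerivAt (fun s : ℝ => δ + σ * s) σ p.1 := by
      simpa using ((hasDerivAt_id p.1).const_mul σ).const_add δ
    have h3 : HasDerivAt (fun s => u s (f p).2) (ut (f p)) (δ + σ * p.1) := h1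
    have h4 := (h3.comp p.1 h2).const_mul A⁻¹
    exact h4.congr_deriv (by ring)
  · intro i p hp
    have h1 := h.d1 i (f p) (hs p hp)
    have h3 : HasDerivAt (fun s : ℝ => u (f p).1 ((f p).2 + s • ev i) ^ m) (W i (f p)) (ρ * 0) := by
      simpa using h1
    have h4 := (HasDerivAt.comp (h := fun s : ℝ => ρ * s) 0 h3 lin).const_mul (A⁻¹ ^ m)
    have h5 : HasDerivAt (fun s : ℝ => A⁻¹ ^ m * u (f p).1 ((f p).2 + (ρ * s) • ev i) ^ m)
      (A⁻¹ ^ m * ρ * W i (f p)) 0 := by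
      exact h4.congr_deriv (by ring)
    refine h5.congr_of_eventuallyEq ?_
    filter_upwards with s
    rw [arg]
    exact mul_rpow_neg (inv_pos.2 hA)
  · intro i p hp
    have h1 := h.d2 i (f p) (hs p hp)
    have h3 : HasDerivAt (fun s : ℝ => W i ((f p).1, (f p).2 + s • ev i)) (D i (f p)) (ρ * 0) := by
      simpa using h1
    have h4 := (HasDerivAt.comp (h := fun s : ℝ => ρ * s) 0 h3 lin).const_mul (A⁻¹ ^ m * ρ)
    have h5 : HasDerivAt (fun s : ℝ => A⁻¹ ^ m * ρ * W i ((f p).1, (f p).2 + (ρ * s) • ev i))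
      (A⁻¹ ^ m * ρ ^ 2 * D i (f p)) 0 := h4.congr_deriv (by ring)
    refine h5.congr_of_eventuallyEq ?_
    filter_upwards with s
    have : f (p.1, p.2 + s • ev i) = ((f p).1, (f p).2 + (ρ * s) • ev i) := by
      simp only [hf]; rw [arg]
    rw [this]
  · intro p hp
    rw [h.eqn _ (hs p hp), ← Finset.mul_sum]
    congr 1
    rw [hσ, Real.inv_rpow hA.le, Real.rpow_sub hA, Real.rpow_one]
    field_simp


lemma disc_compare {d N nm : ℕ} {m ε lam τ ζ C B : ℝ} (hm0 : 0 < m) (hm1 : m < 1) (hε : 0 < ε)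
    (hC : CFL d (fun x => x ^ m) ε lam) (hτ : 0 < τ) (hζ : 0 < ζ) (hζ1 : ζ ≤ 1) (hC0 : 0 ≤ C)
    (hB : B * ε = C + 2) {y0 : (Fin d → ℤ) → ℝ} (h0 : ∀ k, ε ≤ y0 k)
    (ho : ∀ k, k ∉ bx d N → y0 k = ε)
    (U : ℕ → (Fin d → ℤ) → ℝ) (hU : ∀ n ≤ nm, ∀ k ∈ bx d (N + 1), ε ≤ U n k)
    (hU0 : ∀ k ∈ bx d (N + 1), y0 k ≤ U 0 k)
    (hcons : ∀ n < nm, ∀ k ∈ bx d N,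
      lam * dLap (fun l => U n l ^ m) k ≤ U (n + 1) k - U n k + τ * ζ)
    (hLip : ∀ n < nm, ∀ k ∈ bx d N, U n k - U (n + 1) k ≤ C * τ) :
    ∀ n ≤ nm, ∀ k ∈ bx d (N + 1),
      ys m ε lam N y0 n k ≤ (1 + ζ * (1 + B * τ) ^ n) * U n k := by
  have hB0 : 0 < B := by
    by_contra h; push Not at h; nlinarith
  intro n
  induction n with
  | zero =>
    intro _ k hk
    have h1 := hU0 k hk
    have h2 := hU 0 (Nat.zero_le _) k hk
    rw [ys_zero]; simp only [pow_zero, mul_one]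
    nlinarith
  | succ n ih =>
    intro hn k hk
    have hn' : n < nm := hn
    set a := 1 + ζ * (1 + B * τ) ^ n with ha
    have hpw : 1 ≤ (1 + B * τ) ^ n := one_le_pow₀ (by nlinarith [mul_pos hB0 hτ])
    have ha1 : ζ ≤ a - 1 := by rw [ha]; nlinarith
    have ha2 : 1 + ζ * (1 + B * τ) ^ (n + 1) = a + B * τ * (a - 1) := by
      rw [ha, pow_succ]; ring
    have ha0 : 1 ≤ a := by linarith
    rw [ha2]
    have hU' := hU (n + 1) hn k hk
    by_cases hkN : k ∈ bx d N
    · have ihk := ih hn'.le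
      rw [ys_succ, st_in hkN]
      have h1 := comp_step hC (a := ys m ε lam N y0 n) (b := fun l => a * U n l) (ys_ge hC h0 n) k
        (ihk k hk) (fun i => ⟨ihk _ (add_mem_bx hkN i), ihk _ (sub_mem_bx hkN i)⟩)
      refine h1.trans ?_
      have e1 : dLap (fun l => (a * U n l) ^ m) k = a ^ m * dLap (fun l => U n l ^ m) k := by
        simp only [dLap, Finset.mul_sum]
        apply Finset.sum_congr rfl; intro i _
        rw [mul_rpow_neg (by linarith), mul_rpow_neg (by linarith), mul_rpow_neg (by linarith)]
        ring
      rw [e1]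
      have h2 := hcons n hn' k hkN
      have h3 := hLip n hn' k hkN
      have am0 : 1 ≤ a ^ m := Real.one_le_rpow ha0 hm0.le
      have am1 : a ^ m ≤ a := by
        calc a ^ m ≤ a ^ (1 : ℝ) := Real.rpow_le_rpow_of_exponent_le ha0 hm1.le
          _ = a := Real.rpow_one a
      have t1 : a ^ m * (lam * dLap (fun l => U n l ^ m) k) ≤
          a ^ m * (U (n + 1) k - U n k + τ * ζ) := mul_le_mul_of_nonneg_left h2 (by linarith)
      have t2 : (a - a ^ m) * (U n k - U (n + 1) k) ≤ (a - a ^ m) * (C * τ) :=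
        mul_le_mul_of_nonneg_left h3 (by linarith)
      have t3 : (a - a ^ m) * (C * τ) ≤ (a - 1) * (C * τ) :=
        mul_le_mul_of_nonneg_right (by linarith) (by positivity)
      have t4 : B * τ * (a - 1) * ε ≤ B * τ * (a - 1) * U (n + 1) k := by
        apply mul_le_mul_of_nonneg_left hU'
        have : 0 ≤ a - 1 := by linarith
        positivity
      have t5 : B * τ * (a - 1) * ε = (C + 2) * (τ * (a - 1)) := by rw [← hB]; ring
      have t6 : a ^ m * (τ * ζ) ≤ a * (τ * ζ) := mul_le_mul_of_nonneg_right am1 (by positivity)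
      have t7 : τ * (a * ζ) ≤ τ * (2 * (a - 1)) := by
        apply mul_le_mul_of_nonneg_left _ hτ.le
        nlinarith
      linarith
    · rw [ys_out ho (n + 1) k hkN]
      have : 0 ≤ B * τ * (a - 1) := by have : 0 ≤ a - 1 := by linarith
                                       positivity
      nlinarith

lemma taylor2 {g g1 g2 : ℝ → ℝ} {h C : ℝ} (hh : 0 < h)
    (h1 : ∀ s ∈ Icc (-h) h, HasDerivAt g (g1 s) s) (h2 : ∀ s ∈ Icc (-h) h, HasDerivAt g1 (g2 s) s)
    (hC : ∀ s ∈ Icc (-h) h, g2 s ≤ C) : g h + g (-h) - 2 * g 0 ≤ h ^ 2 * C := by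
  have neg : ∀ s ∈ Icc (0:ℝ) h, s ∈ Icc (-h) h ∧ -s ∈ Icc (-h) h := by
    intro s hs; constructor <;> constructor <;> linarith [hs.1, hs.2]
  have dneg : ∀ {f : ℝ → ℝ} {c s : ℝ}, HasDerivAt f c (-s) → HasDerivAt (fun s => f (-s)) (-c) s := by
    intro f c s hf
    have := HasDerivAt.comp (h := fun s : ℝ => -s) s hf (hasDerivAt_neg s)
    exact this.congr_deriv (by ring)
  set H : ℝ → ℝ := fun s => g1 s - g1 (-s) - 2 * s * C with hH
  set G : ℝ → ℝ := fun s => g s + g (-s) - s ^ 2 * C with hG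
  have dH : ∀ s ∈ Icc (0:ℝ) h, HasDerivAt H (g2 s + g2 (-s) - 2 * C) s := by
    intro s hs
    have a1 := h2 s (neg s hs).1
    have a2 := dneg (h2 (-s) (neg s hs).2)
    have a3 : HasDerivAt (fun s : ℝ => 2 * s * C) (2 * C) s := by
      simpa using ((hasDerivAt_id s).const_mul 2).mul_const C
    exact ((a1.sub a2).sub a3).congr_deriv (by ring)
  have dG : ∀ s ∈ Icc (0:ℝ) h, HasDerivAt G (H s) s := by
    intro s hs
    have a1 := h1 s (neg s hs).1
    have a2 := dneg (h1 (-s) (neg s hs).2)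
    have a3 : HasDerivAt (fun s : ℝ => s ^ 2 * C) (2 * s * C) s := by
      simpa using ((hasDerivAt_id s).pow 2).mul_const C
    exact ((a1.add a2).sub a3).congr_deriv (by simp only [hH]; ring)
  have aH : AntitoneOn H (Icc 0 h) := by
    apply antitoneOn_of_deriv_nonpos (convex_Icc 0 h)
    · exact fun s hs => (dH s hs).continuousAt.continuousWithinAt
    · intro s hs; rw [interior_Icc] at hs
      exact (dH s (Ioo_subset_Icc_self hs)).differentiableAt.differentiableWithinAt
    · intro s hs; rw [interior_Icc] at hs
      have hs' := Ioo_subset_Icc_self hs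
      rw [(dH s hs').deriv]
      have := hC s (neg s hs').1; have := hC (-s) (neg s hs').2
      linarith
  have aG : AntitoneOn G (Icc 0 h) := by
    apply antitoneOn_of_deriv_nonpos (convex_Icc 0 h)
    · exact fun s hs => (dG s hs).continuousAt.continuousWithinAt
    · intro s hs; rw [interior_Icc] at hs
      exact (dG s (Ioo_subset_Icc_self hs)).differentiableAt.differentiableWithinAt
    · intro s hs; rw [interior_Icc] at hs
      have hs' := Ioo_subset_Icc_self hs
      rw [(dG s hs').deriv]
      have := aH ⟨le_rfl, hh.le⟩ hs' hs'.1
      have h0 : H 0 = 0 := by simp [hH]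
      linarith
  have := aG ⟨le_rfl, hh.le⟩ ⟨hh.le, le_rfl⟩ hh.le
  simp only [hG, neg_zero] at this
  linarith

/-- lattice point -/
noncomputable def lpt {d : ℕ} (h : ℝ) (k : Fin d → ℤ) : EuclideanSpace ℝ (Fin d) :=
  WithLp.toLp 2 (fun i => h * (k i : ℝ))

lemma lpt_add {d : ℕ} (h : ℝ) (k : Fin d → ℤ) (i : Fin d) : lpt h (k + eu i) = lpt h k + h • ev i := by
  ext j
  by_cases hj : j = i
  · subst hj; simp [lpt, ev, eu_self]; ring
  · simp [lpt, ev, eu_ne hj, hj]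

lemma lpt_sub {d : ℕ} (h : ℝ) (k : Fin d → ℤ) (i : Fin d) :
    lpt h (k - eu i) = lpt h k + (-h) • ev i := by
  ext j
  by_cases hj : j = i
  · subst hj; simp [lpt, ev, eu_self]; ring
  · simp [lpt, ev, eu_ne hj, hj]

lemma norm_le_coord {d : ℕ} (x : EuclideanSpace ℝ (Fin d)) {c : ℝ} (hc : 0 ≤ c)
    (h : ∀ i, |x i| ≤ c) : ‖x‖ ≤ d * c := by
  have h1 : ‖x‖ ^ 2 ≤ (d * c) ^ 2 := by
    rw [EuclideanSpace.real_norm_sq_eq]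
    calc ∑ i, x i ^ 2 ≤ ∑ i : Fin d, c ^ 2 := by
          apply Finset.sum_le_sum; intro i _
          rw [← sq_abs]; exact pow_le_pow_left₀ (abs_nonneg _) (h i) 2
      _ = d * c ^ 2 := by simp
      _ ≤ (d : ℝ) ^ 2 * c ^ 2 := by
          apply mul_le_mul_of_nonneg_right _ (sq_nonneg c)
          have : d ≤ d ^ 2 := Nat.le_self_pow (by norm_num) d
          exact_mod_cast this
      _ = _ := by ring
  exact le_of_sq_le_sq h1 (by positivity)

lemma lpt_norm {d N : ℕ} {h : ℝ} (hh : 0 ≤ h) {k : Fin d → ℤ} (hk : k ∈ bx d N) :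
    ‖lpt h k‖ ≤ d * (h * N) := by
  apply norm_le_coord _ (by positivity)
  intro i
  have := mem_bx.1 hk i
  simp only [lpt]
  rw [abs_mul, abs_of_nonneg hh]
  apply mul_le_mul_of_nonneg_left _ hh
  rw [abs_le]; constructor
  · exact_mod_cast this.1
  · exact_mod_cast this.2

/-- Riemann sum bound -/
lemma riemann {d M : ℕ} {f : EuclideanSpace ℝ (Fin d) → ℝ} {h r : ℝ} (hh : 0 < h)
    (hr : r < (M + 1 / 2) * h) (hfi : IntegrableOn f (closedBall 0 r)) (hp : ∀ k ∈ bx d M, 0 ≤ f (lpt h k))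
    (hf : ∀ k ∈ bx d M, ∀ x ∈ closedBall (0 : EuclideanSpace ℝ (Fin d)) r,
      dist x (lpt h k) ≤ d * h → f x ≤ f (lpt h k) + 1) :
    ∫ x in closedBall 0 r, f x ≤
      (d * h) ^ d * (volume (ball (0 : EuclideanSpace ℝ (Fin d)) 1)).toReal *
        ∑ k ∈ bx d M, (f (lpt h k) + 1) := by
  set κ := (volume (ball (0 : EuclideanSpace ℝ (Fin d)) 1)).toReal with hκ
  set S := closedBall (0 : EuclideanSpace ℝ (Fin d)) r with hS
  set g : EuclideanSpace ℝ (Fin d) → ℝ := fun x => ∑ k ∈ bx d M,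
    (closedBall (lpt h k) (d * h)).indicator (fun _ => f (lpt h k) + 1) x with hg
  have hSm : MeasurableSet S := measurableSet_closedBall
  have hSf : volume S ≠ ⊤ := measure_closedBall_lt_top.ne
  have hgi : ∀ k ∈ bx d M, IntegrableOn ((closedBall (lpt h k) (d * h)).indicator
      (fun _ => f (lpt h k) + 1)) S := by
    intro k _
    apply Integrable.indicator _ measurableSet_closedBall
    exact integrableOn_const hSf
  have pt : ∀ x ∈ S, f x ≤ g x := by
    intro x hx
    have hxr : ‖x‖ ≤ r := by simpa [hS] using hx
    set k : Fin d → ℤ := fun i => round (x i / h) with hk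
    have hki : ∀ i, |x i - h * k i| ≤ h / 2 := by
      intro i
      have := abs_sub_round (x i / h)
      have e : x i - h * k i = h * (x i / h - round (x i / h)) := by
        simp only [hk]; field_simp
      rw [e, abs_mul, abs_of_pos hh]
      nlinarith
    have hkM : k ∈ bx d M := by
      rw [mem_bx]; intro i
      have h1 : |x i| ≤ r := (by simpa using PiLp.norm_apply_le x i : |x i| ≤ ‖x‖).trans hxr
      have h2 : |h * (k i : ℝ)| < h * (M + 1) := by
        have : |h * (k i : ℝ)| ≤ |x i| + |x i - h * k i| := by
          have := abs_sub_abs_le_abs_sub (h * (k i : ℝ)) (x i)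
          rw [abs_sub_comm (h * (k i : ℝ)) (x i)] at this
          linarith
        have := hki i
        nlinarith
      rw [abs_mul, abs_of_pos hh] at h2
      have h3 : |(k i : ℝ)| < M + 1 := lt_of_mul_lt_mul_left h2 hh.le
      rw [abs_lt] at h3
      have h4 : -((M : ℤ) + 1) < k i := by
        have := h3.1
        exact_mod_cast this
      have h5 : k i < (M : ℤ) + 1 := by
        have := h3.2
        exact_mod_cast this
      constructor <;> omega
    have hd1 : dist x (lpt h k) ≤ d * h := by
      rw [dist_eq_norm]
      apply norm_le_coord _ hh.le
      intro i
      have := hki i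
      simp only [lpt, PiLp.sub_apply]
      linarith
    have h3 : (closedBall (lpt h k) (d * h)).indicator (fun _ => f (lpt h k) + 1) x = f (lpt h k) + 1 :=
      indicator_of_mem (mem_closedBall.2 hd1) _
    refine (hf k hkM x hx hd1).trans ?_
    rw [← h3]
    apply Finset.single_le_sum (f := fun k => (closedBall (lpt h k) (d * h)).indicator
      (fun _ => f (lpt h k) + 1) x) _ hkM
    intro l hl
    apply indicator_nonneg
    intro _ _
    linarith [hp l hl]
  calc ∫ x in S, f x ≤ ∫ x in S, g x := setIntegral_mono_on hfi (integrable_finsetSum _ hgi) hSm pt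
    _ = ∑ k ∈ bx d M, ∫ x in S, (closedBall (lpt h k) (d * h)).indicator (fun _ => f (lpt h k) + 1) x :=
        integral_finsetSum _ hgi
    _ ≤ ∑ k ∈ bx d M, ((d * h) ^ d * κ) * (f (lpt h k) + 1) := by
        apply Finset.sum_le_sum
        intro k hk
        rw [integral_indicator measurableSet_closedBall, setIntegral_const, smul_eq_mul]
        apply mul_le_mul_of_nonneg_right _ (by linarith [hp k hk])
        have e1 : (volume (closedBall (lpt h k) (d * h))).toReal = (d * h) ^ d * κ := by
          rw [Measure.addHaar_closedBall _ _ (by positivity), ENNReal.toReal_mul,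
            ENNReal.toReal_ofReal (by positivity)]
          simp
          left; rfl
        rw [← e1, Measure.real, Measure.restrict_apply measurableSet_closedBall]
        exact ENNReal.toReal_mono measure_closedBall_lt_top.ne (measure_mono inter_subset_left)
    _ = _ := by rw [Finset.mul_sum]


lemma mem_bx_mono {d M N : ℕ} (h : M ≤ N) {k : Fin d → ℤ} (hk : k ∈ bx d M) : k ∈ bx d N := by
  rw [mem_bx] at *
  intro i
  have := hk i
  constructor <;> omega

set_option maxHeartbeats 2000000 in
lemma propA {d : ℕ} (hd : 3 ≤ d) {m : ℝ} (hmc : (d - 2 : ℝ) / d < m) (hm1 : m < 1) :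
    ∃ r T c K0 : ℝ, 0 < r ∧ r ≤ 1 ∧ 0 < T ∧ 0 < c ∧ 0 < K0 ∧
      ∀ (u : ℝ → EuclideanSpace ℝ (Fin d) → ℝ) ut W D,
        Cl m (Icc 0 T ×ˢ closedBall 0 1) u ut W D →
        K0 ≤ ∫ x in closedBall 0 r, u 0 x → c ≤ u T 0 := by
  have hd3 : (3:ℝ) ≤ d := by exact_mod_cast hd
  have hm0 : 0 < m := lt_of_le_of_lt (by apply div_nonneg <;> linarith) hmc
  obtain ⟨θ, T1, c, hθ, hθ1, hT1, hc, main⟩ := discrete_main hd hmc hm1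
  set κ := (volume (ball (0 : EuclideanSpace ℝ (Fin d)) 1)).toReal with hκ
  have hκ0 : 0 < κ := ENNReal.toReal_pos (measure_ball_pos _ _ one_pos).ne' measure_ball_lt_top.ne
  clear_value κ
  set T := T1 / (4 * d ^ 2) with hTdef
  have hT : 0 < T := by positivity
  clear_value T
  refine ⟨θ / (4 * d), T, c / 2, κ * (1 + 2 * 3 ^ d) / 2 ^ d, by positivity, ?_, hT, by positivity,
    by positivity, ?_⟩
  · rw [div_le_one (by positivity)]; linarith
  intro u ut W D hcl hint
  set r := θ / (4 * d) with hr
  clear_value r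
  have hr1 : r ≤ 1 := by rw [hr, div_le_one (by positivity)]; linarith
  set K : Set (ℝ × EuclideanSpace ℝ (Fin d)) := Icc 0 T ×ˢ closedBall 0 1 with hK
  have hKc : IsCompact K := isCompact_Icc.prod (isCompact_closedBall _ _)
  have hKn : K.Nonempty := ⟨(0, 0), ⟨⟨le_rfl, hT.le⟩, by simp⟩⟩
  obtain ⟨pm, hpm, hmin⟩ := hKc.exists_isMinOn hKn hcl.cont
  set ε := min 1 (u pm.1 pm.2) with hε
  have hε0 : 0 < ε := lt_min one_pos (hcl.pos pm hpm)
  have hε1 : ε ≤ 1 := min_le_left _ _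
  have hεu : ∀ p ∈ K, ε ≤ u p.1 p.2 := fun p hp => (min_le_right _ _).trans (hmin hp)
  clear_value ε
  obtain ⟨C', hC'⟩ := hKc.exists_bound_of_continuousOn hcl.cut
  set C := |C'| with hCdef
  have hC0 : 0 ≤ C := abs_nonneg _
  have hC : ∀ p ∈ K, |ut p| ≤ C := fun p hp => (hC' p hp).trans (le_abs_self _)
  clear_value C
  set B := (C + 2) / ε with hB
  clear_value B
  have hBε : B * ε = C + 2 := by rw [hB]; field_simp
  have hB0 : 0 < B := by rw [hB]; positivity
  set ζ := exp (-(B * T)) with hζ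
  clear_value ζ
  have hζ0 : 0 < ζ := by rw [hζ]; exact exp_pos _
  have hζ1 : ζ ≤ 1 := by rw [hζ, exp_le_one_iff]; linarith [mul_pos hB0 hT]
  set η := ζ / (d + 1) with hη
  clear_value η
  have hη0 : 0 < η := by rw [hη]; positivity
  have hη1 : η ≤ 1 := by rw [hη, div_le_one (by positivity)]; linarith
  have hηζ : (d + 1) * η = ζ := by rw [hη]; field_simp
  have hFc : ContinuousOn (fun p : ℝ × EuclideanSpace ℝ (Fin d) =>
      ((u p.1 p.2, ut p), fun i => D i p)) K :=
    (hcl.cont.prodMk hcl.cut).prodMk (continuousOn_pi.2 hcl.cD)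
  obtain ⟨δ, hδ, hUC⟩ := Metric.uniformContinuousOn_iff.1
    (hKc.uniformContinuousOn_of_continuous hFc) η hη0
  have uc : ∀ a ∈ K, ∀ b ∈ K, dist a b < δ → |u a.1 a.2 - u b.1 b.2| < η ∧ |ut a - ut b| < η ∧
      ∀ i, |D i a - D i b| < η := by
    intro a ha b hb hab
    have h := hUC a ha b hb hab
    rw [Prod.dist_eq, max_lt_iff, Prod.dist_eq, max_lt_iff] at h
    refine ⟨h.1.1, h.1.2, fun i => (dist_le_pi_dist _ _ i).trans_lt h.2⟩
  obtain ⟨N, hN⟩ := exists_nat_gt (1 / θ + 1 / δ + 1)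
  have i1 : 0 < 1 / θ := by positivity
  have i2 : 0 < 1 / δ := by positivity
  have hN1 : (1:ℝ) ≤ N := by linarith
  have hN0 : (0:ℝ) < N := by linarith
  have hθN : 1 ≤ θ * N := by
    have : 1 / θ < N := by linarith
    rw [div_lt_iff₀ hθ] at this; linarith
  have hδN : 1 < δ * N := by
    have : 1 / δ < N := by linarith
    rw [div_lt_iff₀ hδ] at this; linarith
  set h := 1 / (2 * d * N : ℝ) with hh
  clear_value h
  have hh0 : 0 < h := by rw [hh]; positivity
  have hdhN : d * (h * N) = 1 / 2 := by rw [hh]; field_simp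
  have hdh : d * h = 1 / (2 * N) := by rw [hh]; field_simp
  have hdhδ : d * h < δ := by rw [hdh, div_lt_iff₀ (by positivity)]; linarith [hδN, hδ]
  have hhd : h ≤ d * h := le_mul_of_one_le_left hh0.le (by linarith)
  have hdh2 : d * h ≤ 1 / 2 := by
    rw [← hdhN]; apply mul_le_mul_of_nonneg_left _ (by positivity); exact le_mul_of_one_le_right hh0.le hN1
  have hhδ : h < δ := by linarith
  set M := ⌊θ * N⌋₊ with hM
  have hMle : (M:ℝ) ≤ θ * N := Nat.floor_le (by positivity)
  have hMlt : θ * N < M + 1 := Nat.lt_floor_add_one _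
  have hM1 : 1 ≤ M := by rw [hM, Nat.one_le_floor_iff]; exact hθN
  clear_value M
  have hMN' : (M:ℝ) ≤ N := hMle.trans (mul_le_of_le_one_left hN0.le hθ1)
  have hMN : M ≤ N := by exact_mod_cast hMN'
  have hin : ∀ k ∈ bx d (N + 1), lpt h k ∈ closedBall (0 : EuclideanSpace ℝ (Fin d)) 1 := by
    intro k hk
    rw [mem_closedBall_zero_iff]
    refine (lpt_norm hh0.le hk).trans ?_
    push_cast
    linarith
  have hinN : ∀ k ∈ bx d N, ∀ i, ∀ s ∈ Icc (-h) h,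
      lpt h k + s • ev i ∈ closedBall (0 : EuclideanSpace ℝ (Fin d)) 1 := by
    intro k hk i s hs
    rw [mem_closedBall_zero_iff]
    have h1 := lpt_norm hh0.le hk
    have h2 : ‖s • (ev i : EuclideanSpace ℝ (Fin d))‖ ≤ h := by
      rw [norm_smul]; simp only [ev, EuclideanSpace.norm_single, norm_one, mul_one]
      exact abs_le.2 hs
    have := norm_add_le (lpt h k) (s • ev i)
    linarith
  have hz : (0:ℝ) ∈ Icc 0 T := ⟨le_rfl, hT.le⟩
  have hMin : ∀ k ∈ bx d M, lpt h k ∈ closedBall (0 : EuclideanSpace ℝ (Fin d)) 1 :=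
    fun k hk => hin k (mem_bx_mono (by omega) hk)
  -- mass
  have hrs : r < (M + 1 / 2) * h := by
    have e : r = (θ * N / 2) * h := by rw [hr, hh]; field_simp; norm_num
    rw [e]
    apply mul_lt_mul_of_pos_right _ hh0
    linarith
  have hsub : closedBall (0 : EuclideanSpace ℝ (Fin d)) r ⊆ closedBall 0 1 := closedBall_subset_closedBall hr1
  have hc0 : ContinuousOn (fun x => u 0 x) (closedBall (0 : EuclideanSpace ℝ (Fin d)) 1) := by
    have := hcl.cont.comp (f := fun x : EuclideanSpace ℝ (Fin d) => ((0:ℝ), x)) (s := closedBall 0 1)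
      (by fun_prop) (fun x hx => ⟨hz, hx⟩)
    exact this
  have hrie := riemann (M := M) (f := u 0) hh0 hrs
    ((hc0.mono hsub).integrableOn_compact (isCompact_closedBall _ _))
    (fun k hk => (hcl.pos (0, lpt h k) ⟨hz, hMin k hk⟩).le)
    (by
      intro k hk x hx hdist
      have := (uc (0, x) ⟨hz, hsub hx⟩ (0, lpt h k) ⟨hz, hMin k hk⟩ (by
        rw [Prod.dist_eq]; simp only [dist_self]
        rw [max_lt_iff]; exact ⟨hδ, by linarith⟩)).1
      rw [abs_lt] at this
      simp only at this
      linarith)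
  set S := ∑ k ∈ bx d M, (u 0 (lpt h k) - ε) with hS
  clear_value S
  have hSN : (N:ℝ) ^ d ≤ S := by
    have e1 : S = ∑ k ∈ bx d M, (u 0 (lpt h k) + 1) - (1 + ε) * (bx d M).card := by
      rw [hS, mul_comm, ← nsmul_eq_mul, ← Finset.sum_const, ← Finset.sum_sub_distrib]
      apply Finset.sum_congr rfl; intro k _; ring
    have e2 : ((bx d M).card : ℝ) ≤ 3 ^ d * N ^ d := by
      rw [card_bx, ← mul_pow]
      apply pow_le_pow_left₀ (by positivity); linarith
    have e3 : (2:ℝ) ^ d * N ^ d * ((d * h) ^ d) = 1 := by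
      rw [hdh, ← mul_pow, ← mul_pow]
      rw [mul_one_div_cancel (by positivity), one_pow]
    have e4 := hint.trans hrie
    rw [← hκ] at e4
    set Sg := ∑ k ∈ bx d M, (u 0 (lpt h k) + 1) with hSg
    clear_value Sg
    have e5 : (1 + 2 * 3 ^ d) * (N:ℝ) ^ d ≤ Sg := by
      have e6 : (2:ℝ) ^ d * N ^ d * (κ * (1 + 2 * 3 ^ d) / 2 ^ d) = κ * ((1 + 2 * 3 ^ d) * (N:ℝ) ^ d) := by
        field_simp
      have e7 : (2:ℝ) ^ d * N ^ d * ((d * h) ^ d * κ * Sg) = κ * Sg := by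
        calc _ = ((2:ℝ) ^ d * N ^ d * ((d * h) ^ d)) * (κ * Sg) := by ring
          _ = _ := by rw [e3, one_mul]
      have e8 := mul_le_mul_of_nonneg_left e4 (by positivity : (0:ℝ) ≤ (2:ℝ) ^ d * N ^ d)
      rw [e6, e7] at e8
      exact le_of_mul_le_mul_left e8 hκ0
    have e9 : (1 + ε) * ((bx d M).card : ℝ) ≤ 2 * (3 ^ d * N ^ d) :=
      mul_le_mul (by linarith) e2 (by positivity) (by norm_num)
    rw [e1]; linarith
  have hNd : (0:ℝ) < (N:ℝ) ^ d := by positivity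
  have hS0 : 0 < S := by linarith
  set s := (N:ℝ) ^ d / S with hs
  clear_value s
  have hs0 : 0 < s := by rw [hs]; positivity
  have hs1 : s ≤ 1 := by rw [hs, div_le_one hS0]; exact hSN
  set y0 : (Fin d → ℤ) → ℝ := fun k => if k ∈ bx d M then ε + s * (u 0 (lpt h k) - ε) else ε with hy0
  have hy0in : ∀ k ∈ bx d M, y0 k = ε + s * (u 0 (lpt h k) - ε) := fun k hk => by simp [hy0, hk]
  have hy0out : ∀ k, k ∉ bx d M → y0 k = ε := fun k hk => by simp [hy0, hk]
  clear_value y0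
  have hue : ∀ k ∈ bx d (N + 1), ε ≤ u 0 (lpt h k) := fun k hk => hεu (0, lpt h k) ⟨hz, hin k hk⟩
  have hy0ge : ∀ k, ε ≤ y0 k := by
    intro k
    by_cases hk : k ∈ bx d M
    · rw [hy0in k hk]
      have := hue k (mem_bx_mono (by omega) hk)
      have := mul_nonneg hs0.le (sub_nonneg.2 this); linarith
    · exact (hy0out k hk).ge
  have hsum : ∑ k ∈ bx d M, (y0 k - ε) = (N:ℝ) ^ d := by
    calc _ = ∑ k ∈ bx d M, s * (u 0 (lpt h k) - ε) := by
          apply Finset.sum_congr rfl; intro k hk; rw [hy0in k hk]; ring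
      _ = s * S := by rw [hS, Finset.mul_sum]
      _ = _ := by rw [hs]; field_simp
  obtain ⟨l0, hl0, hmain⟩ := main N M ε y0 hM1 hMle hε0 hε1 hy0ge hy0out hsum
  obtain ⟨n, hn⟩ := exists_nat_gt (T1 * N ^ 2 / l0 + T / δ)
  have j1 : 0 < T1 * N ^ 2 / l0 := by positivity
  have j2 : 0 < T / δ := by positivity
  have hn0 : (0:ℝ) < n := by linarith
  set τ := T / n with hτ
  clear_value τ
  have hτ0 : 0 < τ := by rw [hτ]; positivity
  have hnτ : n * τ = T := by rw [hτ]; field_simp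
  have hτδ : τ < δ := by
    have : T / δ < n := by linarith
    rw [div_lt_iff₀ hδ] at this
    rw [hτ, div_lt_iff₀ hn0]; linarith
  set lam := T1 * N ^ 2 / n with hlam
  clear_value lam
  have hlam0 : 0 < lam := by rw [hlam]; positivity
  have hlaml : lam ≤ l0 := by
    have : T1 * N ^ 2 / l0 < n := by linarith
    rw [div_lt_iff₀ hl0] at this
    rw [hlam, div_le_iff₀ hn0]; linarith
  have hlamh : lam * h ^ 2 = τ := by rw [hlam, hh, hτ, hTdef]; field_simp; norm_num
  obtain ⟨hcfl, hfin⟩ := hmain lam hlam0 hlaml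
  have hfin' := hfin n (by rw [hlam]; field_simp)
  have htm : ∀ j ≤ n, (j:ℝ) * τ ∈ Icc 0 T := by
    intro j hj
    have : (j:ℝ) ≤ n := by exact_mod_cast hj
    exact ⟨by positivity, by rw [← hnτ]; exact mul_le_mul_of_nonneg_right this hτ0.le⟩
  have hmvt : ∀ j < n, ∀ k ∈ bx d N, ∃ ξ ∈ Ioo ((j:ℝ) * τ) (((j + 1 : ℕ):ℝ) * τ),
      u (((j + 1 : ℕ):ℝ) * τ) (lpt h k) - u ((j:ℝ) * τ) (lpt h k) = τ * ut (ξ, lpt h k) := by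
    intro j hj k hk
    have a1 := htm j hj.le
    have a2 := htm (j + 1) hj
    have hlt : (j:ℝ) * τ < ((j + 1 : ℕ):ℝ) * τ := by push_cast; linarith
    have hx := hin k (mem_bx_mono (by omega) hk)
    have hder : ∀ t ∈ Icc ((j:ℝ) * τ) (((j + 1 : ℕ):ℝ) * τ),
        HasDerivAt (fun s => u s (lpt h k)) (ut (t, lpt h k)) t := by
      intro t ht
      exact hcl.dt (t, lpt h k) ⟨⟨a1.1.trans ht.1, ht.2.trans a2.2⟩, hx⟩
    obtain ⟨ξ, hξ, he⟩ := exists_hasDerivAt_eq_slope (fun s => u s (lpt h k))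
      (fun t => ut (t, lpt h k)) hlt
      (fun t ht => (hder t ht).continuousAt.continuousWithinAt)
      (fun t ht => hder t (Ioo_subset_Icc_self ht))
    refine ⟨ξ, hξ, ?_⟩
    have e : ((j + 1 : ℕ):ℝ) * τ - (j:ℝ) * τ = τ := by push_cast; ring
    rw [e, eq_div_iff hτ0.ne'] at he
    linarith
  have hcmp := disc_compare (nm := n) (C := C) hm0 hm1 hε0 hcfl hτ0 hζ0 hζ1 hC0 hBε hy0ge
    (fun k hk => hy0out k (fun h' => hk (mem_bx_mono hMN h')))
    (fun j k => u ((j:ℝ) * τ) (lpt h k))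
    (fun j hj k hk => hεu ((j:ℝ) * τ, lpt h k) ⟨htm j hj, hin k hk⟩)
    (by
      intro k hk
      simp only [Nat.cast_zero, zero_mul]
      have := hue k hk
      by_cases hk' : k ∈ bx d M
      · rw [hy0in k hk']; have := mul_le_of_le_one_left (sub_nonneg.2 this) hs1; linarith
      · rw [hy0out k hk']; exact this)
    (by
      intro j hj k hk
      have hx := hin k (mem_bx_mono (by omega) hk)
      have a1 := htm j hj.le
      have a2 := htm (j + 1) hj
      obtain ⟨ξ, hξ, he⟩ := hmvt j hj k hk
      rw [he]
      have hpK : ((j:ℝ) * τ, lpt h k) ∈ K := ⟨a1, hx⟩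
      have u1 := (uc ((j:ℝ) * τ, lpt h k) hpK (ξ, lpt h k)
        ⟨⟨a1.1.trans hξ.1.le, hξ.2.le.trans a2.2⟩, hx⟩ (by
          rw [Prod.dist_eq]; simp only [dist_self]
          rw [max_lt_iff]
          refine ⟨?_, hδ⟩
          have q1 := hξ.1
          have q2 := hξ.2
          push_cast at q2
          rw [Real.dist_eq, abs_lt]; constructor <;> linarith)).2.1
      rw [abs_lt] at u1
      have lapb : dLap (fun l => u ((j:ℝ) * τ) (lpt h l) ^ m) k ≤
          ∑ i, h ^ 2 * (D i ((j:ℝ) * τ, lpt h k) + η) := by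
        unfold dLap
        apply Finset.sum_le_sum
        intro i _
        have ty := taylor2 (g := fun s => u ((j:ℝ) * τ) (lpt h k + s • ev i) ^ m)
          (g1 := fun s => W i ((j:ℝ) * τ, lpt h k + s • ev i))
          (g2 := fun s => D i ((j:ℝ) * τ, lpt h k + s • ev i))
          (C := D i ((j:ℝ) * τ, lpt h k) + η) hh0
          (fun s hs => by
            have := hcl.d1 i ((j:ℝ) * τ, lpt h k + s • ev i) ⟨a1, hinN k hk i s hs⟩
            exact hasDerivAt_shift (f := fun x => u ((j:ℝ) * τ) x ^ m) this)
          (fun s hs => by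
            have := hcl.d2 i ((j:ℝ) * τ, lpt h k + s • ev i) ⟨a1, hinN k hk i s hs⟩
            exact hasDerivAt_shift (f := fun x => W i ((j:ℝ) * τ, x)) this)
          (fun s hs => by
            have := (uc ((j:ℝ) * τ, lpt h k + s • ev i) ⟨a1, hinN k hk i s hs⟩ _ hpK (by
              rw [Prod.dist_eq]; simp only [dist_self]
              rw [max_lt_iff]
              refine ⟨hδ, ?_⟩
              rw [dist_eq_norm, add_sub_cancel_left, norm_smul]
              simp only [ev, EuclideanSpace.norm_single, norm_one, mul_one]
              exact (abs_le.2 hs).trans_lt hhδ)).2.2 i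
            rw [abs_lt] at this
            linarith)
        simp only [zero_smul, add_zero] at ty
        beta_reduce
        rw [lpt_add, lpt_sub]
        linarith
      have hsumD : ∑ i, h ^ 2 * (D i ((j:ℝ) * τ, lpt h k) + η) =
          h ^ 2 * (ut ((j:ℝ) * τ, lpt h k) + d * η) := by
        rw [hcl.eqn _ hpK, ← Finset.mul_sum, Finset.sum_add_distrib]
        simp
      rw [hsumD] at lapb
      have l1 := mul_le_mul_of_nonneg_left lapb hlam0.le
      have l2 : lam * (h ^ 2 * (ut ((j:ℝ) * τ, lpt h k) + d * η)) =
          τ * (ut ((j:ℝ) * τ, lpt h k) + d * η) := by rw [← mul_assoc, hlamh]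
      rw [l2] at l1
      refine l1.trans ?_
      rw [← mul_add]
      apply mul_le_mul_of_nonneg_left _ hτ0.le
      rw [← hηζ]
      linarith)
    (by
      intro j hj k hk
      have hx := hin k (mem_bx_mono (by omega) hk)
      have a1 := htm j hj.le
      have a2 := htm (j + 1) hj
      obtain ⟨ξ, hξ, he⟩ := hmvt j hj k hk
      have := hC (ξ, lpt h k) ⟨⟨a1.1.trans hξ.1.le, hξ.2.le.trans a2.2⟩, hx⟩
      rw [abs_le] at this
      have := mul_le_mul_of_nonneg_left this.1 hτ0.le; linarith)
  have h0in : (0 : Fin d → ℤ) ∈ bx d (N + 1) := by rw [mem_bx]; intro i; simp; omega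
  have hf := hcmp n le_rfl 0 h0in
  have hlp0 : lpt h (0 : Fin d → ℤ) = 0 := by ext i; simp [lpt]
  simp only [hnτ, hlp0] at hf
  have hexp : ζ * (1 + B * τ) ^ n ≤ 1 := by
    have g1 : (1 + B * τ) ^ n ≤ exp (B * T) := by
      calc (1 + B * τ) ^ n ≤ (exp (B * τ)) ^ n := by
            apply pow_le_pow_left₀ (by positivity)
            linarith [add_one_le_exp (B * τ)]
        _ = exp (B * T) := by rw [← exp_nat_mul, ← hnτ]; ring_nf
    calc ζ * (1 + B * τ) ^ n ≤ ζ * exp (B * T) := mul_le_mul_of_nonneg_left g1 hζ0.le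
      _ = 1 := by rw [hζ, ← exp_add]; simp
  have hup : 0 < u T 0 := hcl.pos (T, 0) ⟨⟨hT.le, le_rfl⟩, by simp⟩
  have := mul_le_mul_of_nonneg_right hexp hup.le
  linarith


open Filter Topology in
lemma second_test {f f1 : ℝ → ℝ} {f2 : ℝ} (hmin : IsLocalMin f 0)
    (h1 : ∀ᶠ s in 𝓝 (0:ℝ), HasDerivAt f (f1 s) s) (h2 : HasDerivAt f1 f2 0) : 0 ≤ f2 := by
  by_contra hneg
  push Not at hneg
  have e1 : deriv f =ᶠ[𝓝 0] f1 := by filter_upwards [h1] with s hs using hs.deriv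
  have h3 : HasDerivAt (deriv f) f2 0 := h2.congr_of_eventuallyEq e1
  have hmax : IsLocalMax f 0 := by
    apply isLocalMax_of_deriv_deriv_neg
    · rw [h3.deriv]; exact hneg
    · exact hmin.deriv_eq_zero
    · exact (h1.self_of_nhds).continuousAt
  have hc : f =ᶠ[𝓝 0] fun _ => f 0 := by
    filter_upwards [hmin, hmax] with s a b using le_antisymm b a
  have h4 : deriv f =ᶠ[𝓝 0] fun _ => (0:ℝ) := by
    have := hc.deriv
    simpa using this
  have h5 : HasDerivAt (deriv f) 0 0 := (hasDerivAt_const (0:ℝ) (0:ℝ)).congr_of_eventuallyEq h4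
  have := h3.unique h5
  linarith

open Filter Topology in
lemma left_test {f : ℝ → ℝ} {f' t : ℝ} (h : HasDerivAt f f' t) {a : ℝ} (ha : a < t)
    (hmin : ∀ s ∈ Ioo a t, f t ≤ f s) : f' ≤ 0 := by
  have h1 := h.hasDerivWithinAt (s := Iio t)
  rw [hasDerivWithinAt_iff_tendsto_slope' (by simp)] at h1
  apply le_of_tendsto h1
  filter_upwards [Ioo_mem_nhdsLT ha] with s hs
  rw [slope_def_field]
  apply div_nonpos_of_nonneg_of_nonpos
  · linarith [hmin s hs]
  · linarith [hs.2]

/-- barrier profile -/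
noncomputable def Gb {d : ℕ} (ε a : ℝ) (z x : EuclideanSpace ℝ (Fin d)) : ℝ :=
  ε * (exp (-a * ‖x - z‖ ^ 2) - exp (-a * 4))

lemma Gb_line {d : ℕ} (ε a : ℝ) (z x : EuclideanSpace ℝ (Fin d)) (i : Fin d) (s : ℝ) :
    Gb ε a z (x + s • ev i) =
      ε * (exp (-a * (‖x - z‖ ^ 2 + 2 * s * (x - z) i + s ^ 2)) - exp (-a * 4)) := by
  have e : x + s • ev i - z = (x - z) + s • ev i := by abel
  rw [Gb, e, norm_add_sq_real, norm_smul, inner_smul_right]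
  congr 4
  simp [ev, EuclideanSpace.inner_single_right]
  ring

lemma Gb_d1 {d : ℕ} (ε a : ℝ) (z x : EuclideanSpace ℝ (Fin d)) (i : Fin d) (s : ℝ) :
    HasDerivAt (fun s : ℝ => Gb ε a z (x + s • ev i))
      (ε * (exp (-a * (‖x - z‖ ^ 2 + 2 * s * (x - z) i + s ^ 2)) *
        (-a * (2 * (x - z) i + 2 * s)))) s := by
  have e : (fun s : ℝ => Gb ε a z (x + s • ev i)) = fun s =>
      ε * (exp (-a * (‖x - z‖ ^ 2 + 2 * s * (x - z) i + s ^ 2)) - exp (-a * 4)) := by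
    funext s; exact Gb_line ε a z x i s
  rw [e]
  have h0 : HasDerivAt (fun s : ℝ => -a * (‖x - z‖ ^ 2 + 2 * s * (x - z) i + s ^ 2))
      (-a * (2 * (x - z) i + 2 * s)) s := by
    have h1 : HasDerivAt (fun s : ℝ => 2 * s * (x - z) i) (2 * (x - z) i) s := by
      simpa using ((hasDerivAt_id s).const_mul 2).mul_const ((x - z) i)
    have h2 : HasDerivAt (fun s : ℝ => s ^ 2) (2 * s) s := by simpa using hasDerivAt_pow 2 s
    exact ((h1.const_add (‖x - z‖ ^ 2)).add h2).const_mul (-a)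
  exact (h0.exp.sub_const _).const_mul ε

lemma Gb_d2 {d : ℕ} (ε a : ℝ) (z x : EuclideanSpace ℝ (Fin d)) (i : Fin d) :
    HasDerivAt (fun s : ℝ => (ε * (exp (-a * (‖x - z‖ ^ 2 + 2 * s * (x - z) i + s ^ 2)) *
        (-a * (2 * (x - z) i + 2 * s)))))
      (ε * (exp (-a * ‖x - z‖ ^ 2) * (4 * a ^ 2 * (x - z) i ^ 2 - 2 * a))) 0 := by
  have h0 : HasDerivAt (fun s : ℝ => -a * (‖x - z‖ ^ 2 + 2 * s * (x - z) i + s ^ 2))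
      (-a * (2 * (x - z) i + 2 * 0)) 0 := by
    have h1 : HasDerivAt (fun s : ℝ => 2 * s * (x - z) i) (2 * (x - z) i) 0 := by
      simpa using ((hasDerivAt_id (0:ℝ)).const_mul 2).mul_const ((x - z) i)
    have h2 : HasDerivAt (fun s : ℝ => s ^ 2) (2 * 0) 0 := by
      simpa using hasDerivAt_pow 2 (0:ℝ)
    exact ((h1.const_add (‖x - z‖ ^ 2)).add h2).const_mul (-a)
  have h3 : HasDerivAt (fun s : ℝ => -a * (2 * (x - z) i + 2 * s)) (-a * 2) 0 := by
    have h2 : HasDerivAt (fun s : ℝ => 2 * s) 2 0 := by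
      simpa using (hasDerivAt_id (0:ℝ)).const_mul 2
    exact (h2.const_add _).const_mul (-a)
  refine ((h0.exp.mul h3).const_mul ε).congr_deriv ?_
  simp only [mul_zero, zero_mul, add_zero, ne_eq, OfNat.ofNat_ne_zero, not_false_eq_true, zero_pow]
  ring

lemma Gb_lap {d : ℕ} (ε a : ℝ) (z x : EuclideanSpace ℝ (Fin d)) :
    ∑ i, (ε * (exp (-a * ‖x - z‖ ^ 2) * (4 * a ^ 2 * (x - z) i ^ 2 - 2 * a))) =
      ε * (exp (-a * ‖x - z‖ ^ 2) * (4 * a ^ 2 * ‖x - z‖ ^ 2 - 2 * d * a)) := by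
  rw [← Finset.mul_sum, ← Finset.mul_sum, Finset.sum_sub_distrib, ← Finset.mul_sum,
    EuclideanSpace.real_norm_sq_eq]
  simp
  left; ring


lemma barrier_cmp {d : ℕ} {m ρ c3 ε a : ℝ} (hm0 : 0 < m) (hm1 : m < 1)
    (hρ : 0 < ρ) (hc3 : 0 < c3) (hε : 0 < ε) (ha : 0 < a) (hεc : ε ≤ c3 ^ m)
    (hsub : ∀ x z : EuclideanSpace ℝ (Fin d), ρ ≤ ‖x - z‖ → ‖x - z‖ ≤ 2 →
      1 / (1 - m) * Gb ε a z x ^ (1 / m) <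
        ε * (exp (-a * ‖x - z‖ ^ 2) * (4 * a ^ 2 * ‖x - z‖ ^ 2 - 2 * d * a)))
    {v : ℝ → EuclideanSpace ℝ (Fin d) → ℝ} {T : ℝ} {ut W D}
    (hcl : Cl m (Ioo 0 T ×ˢ closedBall 0 3) v ut W D)
    (hcont : ContinuousOn (fun p : ℝ × EuclideanSpace ℝ (Fin d) => v p.1 p.2)
      (Ico 0 T ×ˢ closedBall 0 3))
    (h0 : ∀ x ∈ closedBall (0 : EuclideanSpace ℝ (Fin d)) 3, 0 ≤ v 0 x)
    {z : EuclideanSpace ℝ (Fin d)} (hz : ‖z‖ ≤ 1) {t1 : ℝ} (ht1 : 0 < t1) (ht1T : t1 < T)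
    (hin : ∀ t, 0 < t → t ≤ t1 → ∀ x ∈ closedBall z ρ, c3 * t ^ (1 / (1 - m)) ≤ v t x)
    {x0 : EuclideanSpace ℝ (Fin d)} (hx0 : ρ ≤ ‖x0 - z‖) (hx0' : ‖x0 - z‖ ≤ 2) :
    t1 ^ (m / (1 - m)) * Gb ε a z x0 ≤ v t1 x0 ^ m := by
  set q := m / (1 - m) with hq
  have hm1' : 0 < 1 - m := by linarith
  have hq0 : 0 < q := by rw [hq]; positivity
  have hpq : 1 / (1 - m) = q + 1 := by rw [hq]; field_simp; ring
  have hqm : q = m * (1 / (1 - m)) := by rw [hq]; ring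
  clear_value q
  set S : Set (EuclideanSpace ℝ (Fin d)) := {x | ρ ≤ ‖x - z‖ ∧ ‖x - z‖ ≤ 2} with hS
  have hS3 : ∀ x ∈ S, x ∈ closedBall (0 : EuclideanSpace ℝ (Fin d)) 3 := by
    intro x hx
    rw [mem_closedBall_zero_iff]
    have := norm_add_le (x - z) z
    rw [sub_add_cancel] at this
    linarith [hx.2]
  have hScl : IsClosed S := by
    have e : S = (fun x => ‖x - z‖) ⁻¹' Icc ρ 2 := by ext x; simp [hS]
    rw [e]
    exact isClosed_Icc.preimage (by fun_prop)
  have hSc : IsCompact S := (isCompact_closedBall (0 : EuclideanSpace ℝ (Fin d)) 3).of_isClosed_subset hScl hS3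
  set K : Set (ℝ × EuclideanSpace ℝ (Fin d)) := Icc 0 t1 ×ˢ S with hK
  have hKc : IsCompact K := isCompact_Icc.prod hSc
  have hKsub : K ⊆ Ico 0 T ×ˢ closedBall 0 3 := fun p hp => ⟨⟨hp.1.1, hp.1.2.trans_lt ht1T⟩, hS3 _ hp.2⟩
  set Φ : ℝ × EuclideanSpace ℝ (Fin d) → ℝ := fun p => v p.1 p.2 ^ m - p.1 ^ q * Gb ε a z p.2 with hΦ
  have hΦc : ContinuousOn Φ K := by
    apply ContinuousOn.sub
    · exact (hcont.mono hKsub).rpow_const (fun p _ => Or.inr hm0.le)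
    · apply ContinuousOn.mul
      · exact (continuous_fst.continuousOn).rpow_const (fun p _ => Or.inr hq0.le)
      · apply Continuous.continuousOn
        unfold Gb; fun_prop
  have hpK : (t1, x0) ∈ K := ⟨⟨ht1.le, le_rfl⟩, hx0, hx0'⟩
  obtain ⟨⟨t, x⟩, hp, hmin⟩ := hKc.exists_isMinOn ⟨_, hpK⟩ hΦc
  have hminp : ∀ p ∈ K, Φ (t, x) ≤ Φ p := fun p hp => hmin hp
  suffices hge : 0 ≤ Φ (t, x) by
    have := hge.trans (hminp _ hpK)
    simp only [hΦ] at this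
    linarith
  by_contra hneg
  push Not at hneg
  obtain ⟨⟨ht0, htt1⟩, hxρ, hx2⟩ := hp
  simp only at ht0 htt1 hxρ hx2
  have hx3 := hS3 x ⟨hxρ, hx2⟩
  have htpos : 0 < t := by
    rcases ht0.eq_or_lt with h | h
    · exfalso
      subst h
      have := Real.rpow_nonneg (h0 x hx3) m
      simp only [hΦ] at hneg
      rw [Real.zero_rpow hq0.ne', zero_mul, sub_zero] at hneg
      linarith
    · exact h
  have htT : t < T := htt1.trans_lt ht1T
  have hvpos : 0 < v t x := hcl.pos (t, x) ⟨⟨htpos, htT⟩, hx3⟩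
  have hvm : 0 < v t x ^ m := Real.rpow_pos_of_pos hvpos m
  have htq : 0 < t ^ q := Real.rpow_pos_of_pos htpos q
  have hlt : v t x ^ m < t ^ q * Gb ε a z x := by
    simp only [hΦ] at hneg; linarith
  have hG0 : 0 < Gb ε a z x := by
    by_contra h; push Not at h
    have := mul_nonpos_of_nonneg_of_nonpos htq.le h
    linarith
  have hGε : Gb ε a z x ≤ ε := by
    unfold Gb
    have : exp (-a * ‖x - z‖ ^ 2) ≤ 1 := by
      rw [exp_le_one_iff]
      have : 0 ≤ a * ‖x - z‖ ^ 2 := by positivity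
      linarith
    have h4 := exp_pos (-a * 4)
    apply mul_le_of_le_one_right hε.le; linarith
  have hxρ' : ρ < ‖x - z‖ := by
    rcases hxρ.eq_or_lt with h | h
    · exfalso
      have h1 := hin t htpos htt1 x (by rw [mem_closedBall, dist_eq_norm]; exact h.ge)
      have h2 : (c3 * t ^ (1 / (1 - m))) ^ m ≤ v t x ^ m :=
        Real.rpow_le_rpow (by positivity) h1 hm0.le
      rw [Real.mul_rpow hc3.le (by positivity), ← Real.rpow_mul htpos.le, mul_comm (1 / (1 - m)) m,
        ← hqm] at h2
      have h3 : t ^ q * Gb ε a z x ≤ t ^ q * c3 ^ m :=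
        mul_le_mul_of_nonneg_left (hGε.trans hεc) htq.le
      linarith
    · exact h
  have hx2' : ‖x - z‖ < 2 := by
    rcases hx2.eq_or_lt with h | h
    · exfalso
      have : Gb ε a z x = 0 := by unfold Gb; rw [h]; norm_num
      linarith
    · exact h
  -- spatial test
  have hsp : ∀ i, t ^ q * (ε * (exp (-a * ‖x - z‖ ^ 2) * (4 * a ^ 2 * (x - z) i ^ 2 - 2 * a))) ≤
      D i (t, x) := by
    intro i
    have hev : ∀ᶠ s in nhds (0:ℝ), x + s • ev i ∈ S := by
      have hcn : Continuous fun s : ℝ => ‖x + s • ev i - z‖ := by fun_prop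
      have hmem : ‖x + (0:ℝ) • ev i - z‖ ∈ Ioo ρ 2 := by simpa using ⟨hxρ', hx2'⟩
      have := hcn.continuousAt.preimage_mem_nhds (isOpen_Ioo.mem_nhds hmem)
      filter_upwards [this] with s hs
      exact ⟨hs.1.le, hs.2.le⟩
    have := second_test (f := fun s => v t (x + s • ev i) ^ m - t ^ q * Gb ε a z (x + s • ev i))
      (f1 := fun s => W i (t, x + s • ev i) - t ^ q *
        (ε * (exp (-a * (‖x - z‖ ^ 2 + 2 * s * (x - z) i + s ^ 2)) *
        (-a * (2 * (x - z) i + 2 * s)))))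
      (f2 := D i (t, x) - t ^ q *
        (ε * (exp (-a * ‖x - z‖ ^ 2) * (4 * a ^ 2 * (x - z) i ^ 2 - 2 * a))))
      (by
        filter_upwards [hev] with s hs
        have := hminp (t, x + s • ev i) ⟨⟨ht0, htt1⟩, hs⟩
        simpa only [hΦ, zero_smul, add_zero] using this)
      (by
        filter_upwards [hev] with s hs
        have := hcl.d1 i (t, x + s • ev i) ⟨⟨htpos, htT⟩, hS3 _ hs⟩
        exact (hasDerivAt_shift (f := fun x => v t x ^ m) this).sub
          ((Gb_d1 ε a z x i s).const_mul _))
      ((hcl.d2 i (t, x) ⟨⟨htpos, htT⟩, hx3⟩).sub ((Gb_d2 ε a z x i).const_mul _))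
    linarith
  have hut : t ^ q * (ε * (exp (-a * ‖x - z‖ ^ 2) * (4 * a ^ 2 * ‖x - z‖ ^ 2 - 2 * d * a))) ≤
      ut (t, x) := by
    rw [hcl.eqn (t, x) ⟨⟨htpos, htT⟩, hx3⟩, ← Gb_lap, Finset.mul_sum]
    exact Finset.sum_le_sum fun i _ => hsp i
  -- time test
  have hder : HasDerivAt (fun s => v s x ^ m - s ^ q * Gb ε a z x)
      (ut (t, x) * m * v t x ^ (m - 1) - q * t ^ (q - 1) * Gb ε a z x) t := by
    apply HasDerivAt.sub
    · exact (hcl.dt (t, x) ⟨⟨htpos, htT⟩, hx3⟩).rpow_const (Or.inl hvpos.ne')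
    · exact (Real.hasDerivAt_rpow_const (Or.inl htpos.ne')).mul_const _
  have htime := left_test hder htpos (fun s hs => hminp (s, x)
    ⟨⟨hs.1.le, hs.2.le.trans htt1⟩, hxρ, hx2⟩)
  have hs1 := hsub x z hxρ hx2
  set L := ε * (exp (-a * ‖x - z‖ ^ 2) * (4 * a ^ 2 * ‖x - z‖ ^ 2 - 2 * d * a)) with hL
  clear_value L
  set g := Gb ε a z x with hg
  clear_value g
  have hgm : 0 < g ^ (1 / m) := Real.rpow_pos_of_pos hG0 _
  have hv1 : t⁻¹ * g ^ (1 - 1 / m) ≤ v t x ^ (m - 1) := by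
    have e1 : v t x ^ (m - 1) = (v t x ^ m) ^ ((m - 1) / m) := by
      rw [← Real.rpow_mul hvpos.le]; congr 1; field_simp
    have e2 : t⁻¹ * g ^ (1 - 1 / m) = (t ^ q * g) ^ ((m - 1) / m) := by
      rw [Real.mul_rpow htq.le hG0.le, ← Real.rpow_mul htpos.le]
      congr 1
      · rw [← Real.rpow_neg_one]; congr 1
        rw [hq]; field_simp; ring
      · congr 1; field_simp
    rw [e1, e2]
    apply Real.rpow_le_rpow_of_nonpos hvm hlt.le
    apply div_nonpos_of_nonpos_of_nonneg <;> linarith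
  have hgg : g ^ (1 / m) * g ^ (1 - 1 / m) = g := by
    rw [← Real.rpow_add hG0]; simp
  have htt : t ^ q = t ^ (q - 1) * t := by
    rw [Real.rpow_sub_one htpos.ne']; field_simp
  have hg1 : 0 < g ^ (1 - 1 / m) := Real.rpow_pos_of_pos hG0 _
  have k1 : t ^ q * (1 / (1 - m) * g ^ (1 / m)) < ut (t, x) :=
    (mul_lt_mul_of_pos_left hs1 htq).trans_le hut
  have k0 : 0 < t ^ q * (1 / (1 - m) * g ^ (1 / m)) := by positivity
  have k2 : (t ^ q * (1 / (1 - m) * g ^ (1 / m))) * (t⁻¹ * g ^ (1 - 1 / m)) <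
      ut (t, x) * v t x ^ (m - 1) :=
    mul_lt_mul k1 hv1 (by positivity) (k0.trans k1).le
  have k3 : m * ((t ^ q * (1 / (1 - m) * g ^ (1 / m))) * (t⁻¹ * g ^ (1 - 1 / m))) =
      q * t ^ (q - 1) * g := by
    calc _ = (m * (1 / (1 - m))) * t ^ q * t⁻¹ * (g ^ (1 / m) * g ^ (1 - 1 / m)) := by ring
      _ = q * t ^ (q - 1) * g := by
        rw [hgg, ← hqm, htt]; field_simp
  have k4 := mul_lt_mul_of_pos_left k2 hm0
  rw [k3] at k4
  linarith


lemma barrier {d : ℕ} {m ρ c3 : ℝ} (hm0 : 0 < m) (hm1 : m < 1) (hρ : 0 < ρ) (hc3 : 0 < c3) :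
    ∃ c4 : ℝ, 0 < c4 ∧ ∀ (v : ℝ → EuclideanSpace ℝ (Fin d) → ℝ) (T : ℝ) ut W D,
    Cl m (Ioo 0 T ×ˢ closedBall 0 3) v ut W D →
    ContinuousOn (fun p : ℝ × EuclideanSpace ℝ (Fin d) => v p.1 p.2) (Ico 0 T ×ˢ closedBall 0 3) →
    (∀ x ∈ closedBall (0 : EuclideanSpace ℝ (Fin d)) 3, 0 ≤ v 0 x) →
    ∀ z : EuclideanSpace ℝ (Fin d), ‖z‖ ≤ 1 → ∀ t1 : ℝ, 0 < t1 → t1 < T →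
    (∀ t, 0 < t → t ≤ t1 → ∀ x ∈ closedBall z ρ, c3 * t ^ (1 / (1 - m)) ≤ v t x) →
    c4 * t1 ^ (1 / (1 - m)) ≤ v t1 0 := by
  have hm1' : 0 < 1 - m := by linarith
  obtain ⟨a, haeq⟩ : ∃ a : ℝ, a = (2 * d + 1) / (4 * ρ ^ 2) := ⟨_, rfl⟩
  have ha : 0 < a := by rw [haeq]; positivity
  have haρ : 4 * a * ρ ^ 2 = 2 * d + 1 := by rw [haeq]; field_simp
  obtain ⟨L, hL⟩ : ∃ L : ℝ, L = exp (-a * 4) * a := ⟨_, rfl⟩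
  have hL0 : 0 < L := by rw [hL]; positivity
  obtain ⟨σ, hσ⟩ : ∃ σ : ℝ, σ = 1 / m - 1 := ⟨_, rfl⟩
  have hσ0 : 0 < σ := by
    rw [hσ]; have : 1 < 1 / m := by rw [lt_div_iff₀ hm0]; linarith
    linarith
  obtain ⟨ε, hεd⟩ : ∃ ε : ℝ, ε = min (c3 ^ m) ((L * (1 - m) / 2) ^ (1 / σ)) := ⟨_, rfl⟩
  have hLm : 0 < L * (1 - m) / 2 := by positivity
  have hε : 0 < ε := by rw [hεd]; apply lt_min <;> positivity
  have hεc : ε ≤ c3 ^ m := by rw [hεd]; exact min_le_left _ _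
  have hεσ : ε ^ σ ≤ L * (1 - m) / 2 := by
    calc ε ^ σ ≤ ((L * (1 - m) / 2) ^ (1 / σ)) ^ σ :=
          Real.rpow_le_rpow hε.le (by rw [hεd]; exact min_le_right _ _) hσ0.le
      _ = L * (1 - m) / 2 := by
          rw [← Real.rpow_mul hLm.le, one_div_mul_cancel hσ0.ne', Real.rpow_one]
  have hεm : ε ^ (1 / m) = ε * ε ^ σ := by
    rw [hσ, Real.rpow_sub hε, Real.rpow_one]; field_simp
  have hsub : ∀ x z : EuclideanSpace ℝ (Fin d), ρ ≤ ‖x - z‖ → ‖x - z‖ ≤ 2 →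
      1 / (1 - m) * Gb ε a z x ^ (1 / m) <
        ε * (exp (-a * ‖x - z‖ ^ 2) * (4 * a ^ 2 * ‖x - z‖ ^ 2 - 2 * d * a)) := by
    intro x z h1 h2
    have n1 : ρ ^ 2 ≤ ‖x - z‖ ^ 2 := pow_le_pow_left₀ hρ.le h1 2
    have n2 : ‖x - z‖ ^ 2 ≤ 4 := by
      have := pow_le_pow_left₀ (norm_nonneg _) h2 2
      linarith
    have b1 : exp (-a * 4) ≤ exp (-a * ‖x - z‖ ^ 2) := by
      apply exp_le_exp.2; nlinarith
    have b2 : exp (-a * ‖x - z‖ ^ 2) ≤ 1 := by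
      rw [exp_le_one_iff]; have : 0 ≤ a * ‖x - z‖ ^ 2 := by positivity
      linarith
    have b3 : 0 < exp (-a * 4) := exp_pos _
    have b4 : a ≤ 4 * a ^ 2 * ‖x - z‖ ^ 2 - 2 * d * a := by
      have : a * (4 * a * ρ ^ 2) ≤ a * (4 * a * ‖x - z‖ ^ 2) := by gcongr
      rw [haρ] at this
      linarith
    have b5 : L ≤ exp (-a * ‖x - z‖ ^ 2) * (4 * a ^ 2 * ‖x - z‖ ^ 2 - 2 * d * a) := by
      rw [hL]; exact mul_le_mul b1 b4 ha.le (exp_pos _).le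
    have g0 : 0 ≤ Gb ε a z x := mul_nonneg hε.le (by linarith)
    have g1 : Gb ε a z x ≤ ε := mul_le_of_le_one_right hε.le (by linarith)
    have g2 : Gb ε a z x ^ (1 / m) ≤ ε * (L * (1 - m) / 2) := by
      calc Gb ε a z x ^ (1 / m) ≤ ε ^ (1 / m) := Real.rpow_le_rpow g0 g1 (by positivity)
        _ = ε * ε ^ σ := hεm
        _ ≤ _ := mul_le_mul_of_nonneg_left hεσ hε.le
    calc 1 / (1 - m) * Gb ε a z x ^ (1 / m) ≤ 1 / (1 - m) * (ε * (L * (1 - m) / 2)) :=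
          mul_le_mul_of_nonneg_left g2 (by positivity)
      _ = ε * L / 2 := by field_simp
      _ < ε * L := by have := mul_pos hε hL0; linarith
      _ ≤ _ := mul_le_mul_of_nonneg_left b5 hε.le
  obtain ⟨g0, hg0⟩ : ∃ g0 : ℝ, g0 = ε * (exp (-a * 1) - exp (-a * 4)) := ⟨_, rfl⟩
  have hg0p : 0 < g0 := by
    rw [hg0]; apply mul_pos hε
    have : exp (-a * 4) < exp (-a * 1) := exp_lt_exp.2 (by linarith)
    linarith
  refine ⟨min c3 (g0 ^ (1 / m)), lt_min hc3 (by positivity), ?_⟩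
  intro v T ut W D hcl hcont h0 z hz t1 ht1 ht1T hin
  have htp : 0 < t1 ^ (1 / (1 - m)) := Real.rpow_pos_of_pos ht1 _
  by_cases hzρ : ‖z‖ ≤ ρ
  · have := hin t1 ht1 le_rfl 0 (by rw [mem_closedBall, dist_zero_left]; exact hzρ)
    exact (mul_le_mul_of_nonneg_right (min_le_left _ _) htp.le).trans this
  · push Not at hzρ
    have hcmp := barrier_cmp hm0 hm1 hρ hc3 hε ha hεc hsub hcl hcont h0 hz ht1 ht1T hin (x0 := 0)
      (by simpa using hzρ.le) (by simp; linarith)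
    have hG : g0 ≤ Gb ε a z 0 := by
      rw [hg0, Gb, zero_sub, norm_neg]
      apply mul_le_mul_of_nonneg_left _ hε.le
      have n2 : ‖z‖ ^ 2 ≤ 1 := by
        have := pow_le_pow_left₀ (norm_nonneg _) hz 2
        linarith
      have : exp (-a * 1) ≤ exp (-a * ‖z‖ ^ 2) := exp_le_exp.2 (by nlinarith)
      linarith
    have hv : 0 < v t1 0 := hcl.pos (t1, 0) ⟨⟨ht1, ht1T⟩, by simp⟩
    have hq : 0 < t1 ^ (m / (1 - m)) := Real.rpow_pos_of_pos ht1 _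
    have h1 : t1 ^ (m / (1 - m)) * g0 ≤ v t1 0 ^ m :=
      (mul_le_mul_of_nonneg_left hG hq.le).trans hcmp
    have h2 := Real.rpow_le_rpow (by positivity) h1 (by positivity : 0 ≤ 1 / m)
    rw [← Real.rpow_mul hv.le, mul_one_div_cancel hm0.ne', Real.rpow_one,
      Real.mul_rpow hq.le hg0p.le, ← Real.rpow_mul ht1.le] at h2
    have e : m / (1 - m) * (1 / m) = 1 / (1 - m) := by field_simp
    rw [e] at h2
    refine (mul_le_mul_of_nonneg_right (min_le_right _ _) htp.le).trans ?_
    linarith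


lemma local_lb {d : ℕ} {m r T c K0 : ℝ} (hm1 : m < 1) (hr : 0 < r) (hr1 : r ≤ 1)
    (hT : 0 < T) (hc : 0 < c) (hK0 : 0 < K0)
    (hA : ∀ (u : ℝ → EuclideanSpace ℝ (Fin d) → ℝ) ut W D,
        Cl m (Icc 0 T ×ˢ closedBall 0 1) u ut W D →
        K0 ≤ ∫ x in closedBall 0 r, u 0 x → c ≤ u T 0)
    {v : ℝ → EuclideanSpace ℝ (Fin d) → ℝ} {T' : ℝ} {ut W D}
    (hcl : Cl m (Ioo 0 T' ×ˢ closedBall 0 3) v ut W D)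
    (hcont : ContinuousOn (fun p : ℝ × EuclideanSpace ℝ (Fin d) => v p.1 p.2)
      (Ico 0 T' ×ˢ closedBall 0 3))
    {x : EuclideanSpace ℝ (Fin d)} (hx : ‖x‖ ≤ 2) {t : ℝ} (ht : 0 < t) (htT : t < T')
    (hmass : K0 * (t / T) ^ (1 / (1 - m)) < ∫ y in closedBall x r, v 0 y) :
    c * (t / (2 * T)) ^ (1 / (1 - m)) ≤ v t x := by
  have hm1' : 0 < 1 - m := by linarith
  have hball : ∀ y ∈ closedBall x 1, y ∈ closedBall (0 : EuclideanSpace ℝ (Fin d)) 3 := by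
    intro y hy
    rw [mem_closedBall, dist_eq_norm] at hy
    rw [mem_closedBall_zero_iff]
    have := norm_add_le (y - x) x
    rw [sub_add_cancel] at this
    linarith
  have hballr : ∀ y ∈ closedBall x r, y ∈ closedBall (0 : EuclideanSpace ℝ (Fin d)) 3 :=
    fun y hy => hball y (closedBall_subset_closedBall hr1 hy)
  have hsl : ∀ s ∈ Ico 0 T', IntegrableOn (v s) (closedBall x r) := by
    intro s hs
    refine ContinuousOn.integrableOn_compact (isCompact_closedBall _ _) ?_
    exact hcont.comp (f := fun y : EuclideanSpace ℝ (Fin d) => (s, y)) (by fun_prop)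
      (fun y hy => ⟨hs, hballr y hy⟩)
  -- small time shift
  obtain ⟨V, hV⟩ : ∃ V : ℝ, V = (volume (closedBall x r)).toReal := ⟨_, rfl⟩
  have hV0 : 0 ≤ V := by rw [hV]; exact ENNReal.toReal_nonneg
  obtain ⟨gap, hgap⟩ : ∃ g : ℝ, g = (∫ y in closedBall x r, v 0 y) - K0 * (t / T) ^ (1 / (1 - m)) :=
    ⟨_, rfl⟩
  have hgap0 : 0 < gap := by rw [hgap]; linarith
  have hη : 0 < gap / (V + 1) := by positivity
  have hKc : IsCompact (Icc 0 t ×ˢ closedBall x r) := isCompact_Icc.prod (isCompact_closedBall _ _)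
  obtain ⟨δ0, hδ0, hUC⟩ := Metric.uniformContinuousOn_iff.1
    (hKc.uniformContinuousOn_of_continuous (hcont.mono
      (fun p hp => ⟨⟨hp.1.1, hp.1.2.trans_lt htT⟩, hballr _ hp.2⟩))) _ hη
  obtain ⟨δ, hδ⟩ : ∃ δ : ℝ, δ = min (t / 2) (δ0 / 2) := ⟨_, rfl⟩
  have hδp : 0 < δ := by rw [hδ]; apply lt_min <;> positivity
  have hδt : δ ≤ t / 2 := by rw [hδ]; exact min_le_left _ _
  have hδδ : δ ≤ δ0 / 2 := by rw [hδ]; exact min_le_right _ _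
  have hint : K0 * (t / T) ^ (1 / (1 - m)) ≤ ∫ y in closedBall x r, v δ y := by
    have h1 : ∫ y in closedBall x r, (v 0 y - gap / (V + 1)) ≤ ∫ y in closedBall x r, v δ y := by
      apply setIntegral_mono_on _ (hsl δ ⟨hδp.le, by linarith⟩) measurableSet_closedBall
      · intro y hy
        have := hUC (0, y) ⟨⟨le_rfl, ht.le⟩, hy⟩ (δ, y) ⟨⟨hδp.le, by linarith⟩, hy⟩ (by
          rw [Prod.dist_eq]; simp only [dist_self]
          rw [max_lt_iff, Real.dist_eq]; refine ⟨?_, hδ0⟩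
          rw [abs_lt]; constructor <;> linarith)
        rw [Real.dist_eq, abs_lt] at this
        simp only at this
        linarith
      · exact (hsl 0 ⟨le_rfl, by linarith⟩).sub (integrableOn_const measure_closedBall_lt_top.ne)
    rw [integral_sub (hsl 0 ⟨le_rfl, by linarith⟩) (integrableOn_const measure_closedBall_lt_top.ne),
      setIntegral_const, smul_eq_mul, Measure.real, ← hV] at h1
    have h2 : V * (gap / (V + 1)) ≤ gap := by
      rw [mul_div_assoc', div_le_iff₀ (by linarith)]; nlinarith
    linarith
  obtain ⟨A, hAd⟩ : ∃ A : ℝ, A = ((t - δ) / T) ^ (1 / (1 - m)) := ⟨_, rfl⟩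
  have htδ : 0 < (t - δ) / T := div_pos (by linarith) hT
  have hA0 : 0 < A := by rw [hAd]; exact Real.rpow_pos_of_pos htδ _
  have hApow : A ^ (1 - m) = (t - δ) / T := by
    rw [hAd, ← Real.rpow_mul htδ.le, one_div_mul_cancel hm1'.ne', Real.rpow_one]
  have hApowT : A ^ (1 - m) * T = t - δ := by rw [hApow]; field_simp
  have hAle : A ≤ (t / T) ^ (1 / (1 - m)) := by
    rw [hAd]; apply Real.rpow_le_rpow htδ.le _ (by positivity)
    apply div_le_div_of_nonneg_right _ hT.le; linarith
  have hAge : (t / (2 * T)) ^ (1 / (1 - m)) ≤ A := by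
    rw [hAd]; apply Real.rpow_le_rpow (by positivity) _ (by positivity)
    rw [← div_div]; apply div_le_div_of_nonneg_right _ hT.le; linarith
  obtain ⟨ut', W', D', hcl'⟩ := hcl.scale A 1 δ x hA0 one_pos
    (Q' := Icc 0 T ×ˢ closedBall 0 1) (by
      rintro ⟨s, y⟩ ⟨hs, hy⟩
      simp only at hs hy
      have hAp : 0 < A ^ (1 - m) := Real.rpow_pos_of_pos hA0 _
      have h1 : A ^ (1 - m) * s ≤ A ^ (1 - m) * T := mul_le_mul_of_nonneg_left hs.2 hAp.le
      have h2 : 0 ≤ A ^ (1 - m) * s := mul_nonneg hAp.le hs.1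
      refine ⟨⟨?_, ?_⟩, ?_⟩
      · simp only [one_pow, mul_one]; linarith
      · simp only [one_pow, mul_one]; linarith
      · apply hball
        simp only [one_smul, mem_closedBall, dist_eq_norm, add_sub_cancel_left]
        simpa using hy)
  have hfin := hA _ _ _ _ hcl' (by
    simp only [mul_zero, add_zero, one_smul]
    rw [integral_const_mul]
    have e : ∫ y in closedBall (0 : EuclideanSpace ℝ (Fin d)) r, v δ (x + y) =
        ∫ y in closedBall x r, v δ y := by
      have mp := measurePreserving_add_left (volume : Measure (EuclideanSpace ℝ (Fin d))) x
      have := mp.setIntegral_preimage_emb (measurableEmbedding_addLeft x) (v δ) (closedBall x r)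
      rw [← this]
      congr 2
      ext y; simp
    rw [e, le_inv_mul_iff₀ hA0]
    refine le_trans ?_ hint
    rw [mul_comm]; exact mul_le_mul_of_nonneg_left hAle hK0.le)
  simp only [one_pow, mul_one, hApowT, smul_zero, add_zero, add_sub_cancel] at hfin
  rw [le_inv_mul_iff₀ hA0] at hfin
  calc c * (t / (2 * T)) ^ (1 / (1 - m)) ≤ c * A := mul_le_mul_of_nonneg_left hAge hc.le
    _ ≤ v t x := by rw [mul_comm]; exact hfin

/-- normalized theorem -/
lemma normalized {d : ℕ} (hd : 3 ≤ d) {m : ℝ} (hmc : (d - 2 : ℝ) / d < m) (hm1 : m < 1) :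
    ∃ c0 c : ℝ, 0 < c0 ∧ 0 < c ∧
    ∀ (v : ℝ → EuclideanSpace ℝ (Fin d) → ℝ) (T' : ℝ) ut W D,
    Cl m (Ioo 0 T' ×ˢ closedBall 0 3) v ut W D →
    ContinuousOn (fun p : ℝ × EuclideanSpace ℝ (Fin d) => v p.1 p.2) (Ico 0 T' ×ˢ closedBall 0 3) →
    (∀ x ∈ closedBall (0 : EuclideanSpace ℝ (Fin d)) 3, 0 ≤ v 0 x) →
    0 < ∫ x in ball 0 1, v 0 x → ∀ t, 0 < t → t < T' →
    t < c0 * (∫ x in ball 0 1, v 0 x) ^ (1 - m) → c * t ^ (1 / (1 - m)) ≤ v t 0 := by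
  have hd3 : (3:ℝ) ≤ d := by exact_mod_cast hd
  have hm0 : 0 < m := lt_of_le_of_lt (by apply div_nonneg <;> linarith) hmc
  have hm1' : 0 < 1 - m := by linarith
  obtain ⟨r, T, c, K0, hr, hr1, hT, hc, hK0, hA⟩ := propA hd hmc hm1
  obtain ⟨Z, hZsub, hZf, hZ⟩ := finite_cover_balls_of_compact
    (isCompact_closedBall (0 : EuclideanSpace ℝ (Fin d)) 1) (half_pos hr)
  lift Z to Finset (EuclideanSpace ℝ (Fin d)) using hZf
  have hZn : Z.Nonempty := by
    have := hZ (show (0 : EuclideanSpace ℝ (Fin d)) ∈ closedBall 0 1 by simp)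
    simp only [mem_iUnion] at this
    obtain ⟨z, hz, _⟩ := this
    exact ⟨z, hz⟩
  have hn0 : (0:ℝ) < Z.card := by exact_mod_cast hZn.card_pos
  obtain ⟨c4, hc4, hbar⟩ := barrier (d := d) (ρ := r / 2) (c3 := c * (1 / (2 * T)) ^ (1 / (1 - m)))
    hm0 hm1 (half_pos hr) (by positivity)
  refine ⟨T * (1 / (K0 * Z.card)) ^ (1 - m), c4, by positivity, hc4, ?_⟩
  intro v T' ut W D hcl hcont h0 hI t ht htT htc
  obtain ⟨I, hId⟩ : ∃ I : ℝ, I = ∫ x in ball 0 1, v 0 x := ⟨_, rfl⟩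
  rw [← hId] at hI htc
  have hT'0 : 0 < T' := ht.trans htT
  have hc0 : ContinuousOn (v 0) (closedBall (0 : EuclideanSpace ℝ (Fin d)) 3) :=
    hcont.comp (f := fun y : EuclideanSpace ℝ (Fin d) => ((0:ℝ), y)) (by fun_prop)
      (fun y hy => ⟨⟨le_rfl, hT'0⟩, hy⟩)
  have hint3 : IntegrableOn (v 0) (closedBall (0 : EuclideanSpace ℝ (Fin d)) 3) :=
    hc0.integrableOn_compact (isCompact_closedBall _ _)
  have hz1 : ∀ z ∈ Z, ‖z‖ ≤ 1 := fun z hz => by simpa using hZsub hz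
  have hs3 : ∀ z : EuclideanSpace ℝ (Fin d), ‖z‖ ≤ 2 → ∀ s ≤ (1:ℝ), closedBall z s ⊆ closedBall 0 3 := by
    intro z hz s hs y hy
    rw [mem_closedBall, dist_eq_norm] at hy
    rw [mem_closedBall_zero_iff]
    have := norm_add_le (y - z) z
    rw [sub_add_cancel] at this
    linarith
  -- choose a ball
  obtain ⟨z, hzZ, hzI⟩ : ∃ z ∈ Z, I / Z.card ≤ ∫ y in closedBall z (r / 2), v 0 y := by
    by_contra hcon
    push Not at hcon
    have h1 : ∑ z ∈ Z, ∫ y in closedBall z (r / 2), v 0 y < ∑ z ∈ Z, I / Z.card :=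
      Finset.sum_lt_sum_of_nonempty hZn hcon
    have h2 : ∑ z ∈ Z, I / Z.card = I := by
      rw [Finset.sum_const, nsmul_eq_mul]; field_simp
    rw [h2] at h1
    set f : EuclideanSpace ℝ (Fin d) → ℝ := (closedBall 0 3).indicator (v 0) with hf
    have hf0 : ∀ y, 0 ≤ f y := fun y => indicator_nonneg h0 y
    have hfi : Integrable f := hint3.integrable_indicator measurableSet_closedBall
    have hfe : ∀ y ∈ closedBall (0 : EuclideanSpace ℝ (Fin d)) 3, f y = v 0 y :=
      fun y hy => indicator_of_mem hy _
    have hU : MeasurableSet (⋃ z ∈ Z, closedBall z (r / 2)) :=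
      Finset.measurableSet_biUnion _ (fun _ _ => measurableSet_closedBall)
    have h3 : I ≤ ∑ z ∈ Z, ∫ y in closedBall z (r / 2), v 0 y := by
      calc I = ∫ y in ball 0 1, f y := by
            rw [hId]
            apply setIntegral_congr_fun measurableSet_ball
            intro y hy
            exact (hfe y (ball_subset_closedBall.trans (closedBall_subset_closedBall (by norm_num)) hy)).symm
        _ = ∫ y, (ball 0 1).indicator f y := (integral_indicator measurableSet_ball).symm
        _ ≤ ∫ y, ∑ z ∈ Z, (closedBall z (r / 2)).indicator f y := by
            apply integral_mono (hfi.indicator measurableSet_ball)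
              (integrable_finsetSum _ fun z _ => hfi.indicator measurableSet_closedBall)
            intro y
            by_cases hy : y ∈ ball (0 : EuclideanSpace ℝ (Fin d)) 1
            · have := hZ (ball_subset_closedBall hy)
              simp only [mem_iUnion] at this
              obtain ⟨z, hz, hyz⟩ := this
              simp only
              rw [indicator_of_mem hy]
              rw [← indicator_of_mem (ball_subset_closedBall hyz) f]
              exact Finset.single_le_sum (f := fun z => (closedBall z (r / 2)).indicator f y)
                (fun z _ => indicator_nonneg (fun y _ => hf0 y) y) hz
            · simp only
              rw [indicator_of_notMem hy]
              exact Finset.sum_nonneg (fun z _ => indicator_nonneg (fun y _ => hf0 y) y)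
        _ = ∑ z ∈ Z, ∫ y, (closedBall z (r / 2)).indicator f y :=
            integral_finsetSum _ fun z _ => hfi.indicator measurableSet_closedBall
        _ = ∑ z ∈ Z, ∫ y in closedBall z (r / 2), v 0 y := by
            apply Finset.sum_congr rfl
            intro z hz
            rw [integral_indicator measurableSet_closedBall]
            apply setIntegral_congr_fun measurableSet_closedBall
            intro y hy
            exact hfe y (hs3 z (by linarith [hz1 z hz]) (r / 2) (by linarith) hy)
    linarith
  have hzn := hz1 z hzZ
  apply hbar v T' ut W D hcl hcont h0 z hzn t ht htT
  intro s hs hst x hx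
  have hxn : ‖x‖ ≤ 2 := by
    rw [mem_closedBall, dist_eq_norm] at hx
    have := norm_add_le (x - z) z
    rw [sub_add_cancel] at this
    linarith
  have hJ : I / Z.card ≤ ∫ y in closedBall x r, v 0 y := by
    refine hzI.trans ?_
    have hsub : closedBall z (r / 2) ⊆ closedBall x r := by
      intro y hy
      rw [mem_closedBall] at *
      have := dist_triangle_right y x z
      linarith
    apply setIntegral_mono_set (hint3.mono_set (hs3 x hxn r hr1))
    · rw [Filter.EventuallyLE, ae_restrict_iff' measurableSet_closedBall]
      exact Filter.Eventually.of_forall (fun y hy => h0 y (hs3 x hxn r hr1 hy))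
    · exact hsub.eventuallyLE
  have hp : 0 < 1 / (1 - m) := by positivity
  have hlt : K0 * (s / T) ^ (1 / (1 - m)) < I / Z.card := by
    have h1 : s / T < (I / (K0 * Z.card)) ^ (1 - m) := by
      rw [div_lt_iff₀ hT]
      calc s ≤ t := hst
        _ < _ := htc
        _ = (I / (K0 * Z.card)) ^ (1 - m) * T := by
          rw [div_eq_mul_one_div I, Real.mul_rpow hI.le (by positivity)]; ring
    have h2 := Real.rpow_lt_rpow (by positivity) h1 hp
    rw [← Real.rpow_mul (by positivity), mul_one_div_cancel hm1'.ne', Real.rpow_one] at h2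
    calc K0 * (s / T) ^ (1 / (1 - m)) < K0 * (I / (K0 * Z.card)) := mul_lt_mul_of_pos_left h2 hK0
      _ = I / Z.card := by field_simp
  have := local_lb hm1 hr hr1 hT hc hK0 hA hcl hcont hxn hs (hst.trans_lt htT) (hlt.trans_le hJ)
  refine le_trans (le_of_eq ?_) this
  rw [div_eq_mul_one_div s, Real.mul_rpow hs.le (by positivity)]
  ring


/-- **Theorem 1.3(ii): lower Harnack inequality in the good fast diffusion range.** -/
theorem lower_harnack_good_fde
    (d : ℕ) (hd : 3 ≤ d) (m : ℝ) (hmc : (d - 2 : ℝ) / d < m) (hm1 : m < 1) :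
    ∃ c₀' c : ℝ, 0 < c₀' ∧ 0 < c ∧
      ∀ (Ω : Set (EuclideanSpace ℝ (Fin d))), IsOpen Ω →
      ∀ (u : ℝ → EuclideanSpace ℝ (Fin d) → ℝ) (u₀ : EuclideanSpace ℝ (Fin d) → ℝ) (T' : ℝ),
        0 < T' →
        IsFDESol m (Ioo 0 T' ×ˢ Ω) u →
        (∀ x ∈ Ω, 0 ≤ u₀ x) →
        LocallyIntegrableOn u₀ Ω →
        TakesInit T' Ω u u₀ →
      ∀ (x₀ : EuclideanSpace ℝ (Fin d)) (R : ℝ), 0 < R →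
        closedBall x₀ (3 * R) ⊆ Ω →
        0 < ∫ x in ball x₀ R, u₀ x →
      ∀ t : ℝ, 0 < t →
        t < min T' (c₀' * R ^ (2 - d * (1 - m)) * (∫ x in ball x₀ R, u₀ x) ^ (1 - m)) →
        u t x₀ ≥ c * (t / R ^ 2) ^ ((1 : ℝ) / (1 - m)) := by
  obtain ⟨c0, c, hc0, hc, hmain⟩ := normalized hd hmc hm1
  refine ⟨c0, c, hc0, hc, ?_⟩
  intro Ω hΩ u u₀ T' hT' hsol hu0 _ hinit x₀ R hR hball hI t ht htlt
  obtain ⟨ut, W, D, hcl⟩ := cl_of_sol hΩ hsol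
  have hm1' : 0 < 1 - m := by linarith
  have hR2 : 0 < R ^ 2 := by positivity
  have hmem : ∀ y ∈ closedBall (0 : EuclideanSpace ℝ (Fin d)) 3, x₀ + R • y ∈ Ω := by
    intro y hy
    apply hball
    rw [mem_closedBall, dist_eq_norm, add_sub_cancel_left, norm_smul, Real.norm_of_nonneg hR.le]
    rw [mem_closedBall_zero_iff] at hy
    rw [mul_comm]; exact mul_le_mul_of_nonneg_right hy hR.le
  obtain ⟨ut', W', D', hcl'⟩ := hcl.scale 1 R 0 x₀ one_pos hR
    (Q' := Ioo 0 (T' / R ^ 2) ×ˢ closedBall 0 3) (by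
      rintro ⟨s, y⟩ ⟨hs, hy⟩
      simp only at hs hy
      refine ⟨⟨?_, ?_⟩, hmem y hy⟩
      · simp only [one_rpow, one_mul, zero_add]; exact mul_pos hR2 hs.1
      · simp only [one_rpow, one_mul, zero_add]
        have := hs.2
        rw [lt_div_iff₀ hR2] at this; linarith)
  simp only [one_rpow, one_mul, zero_add, inv_one] at hcl'
  obtain ⟨J, hJ⟩ : ∃ J : ℝ, J = ∫ x in ball x₀ R, u₀ x := ⟨_, rfl⟩
  rw [← hJ] at hI htlt
  have hint : ∫ x in ball (0 : EuclideanSpace ℝ (Fin d)) 1, u (R ^ 2 * 0) (x₀ + R • x) =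
      (R ^ d)⁻¹ * J := by
    have e1 : ∫ x in ball (0 : EuclideanSpace ℝ (Fin d)) 1, u (R ^ 2 * 0) (x₀ + R • x) =
        ∫ x in ball (0 : EuclideanSpace ℝ (Fin d)) 1, u₀ (x₀ + R • x) := by
      apply setIntegral_congr_fun measurableSet_ball
      intro y hy
      simp only [mul_zero]
      exact hinit.2 _ (hmem y (ball_subset_closedBall.trans
        (closedBall_subset_closedBall (by norm_num)) hy))
    rw [e1, hJ]
    have e2 := Measure.setIntegral_comp_smul_of_pos (volume : Measure (EuclideanSpace ℝ (Fin d)))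
      (fun x => u₀ (x₀ + x)) (ball 0 1) hR
    rw [e2, finrank_euclideanSpace_fin, smul_unitBall_of_pos hR, smul_eq_mul]
    congr 1
    have mp := measurePreserving_add_left (volume : Measure (EuclideanSpace ℝ (Fin d))) x₀
    have := mp.setIntegral_preimage_emb (measurableEmbedding_addLeft x₀) u₀ (ball x₀ R)
    rw [← this]
    congr 2
    ext y; simp
  have hRd : 0 < (R ^ d)⁻¹ := by positivity
  have htT : t / R ^ 2 < T' / R ^ 2 := div_lt_div_of_pos_right (htlt.trans_le (min_le_left _ _)) hR2
  have h2 := htlt.trans_le (min_le_right _ _)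
  have key := hmain _ (T' / R ^ 2) _ _ _ hcl'
    (by
      apply hinit.1.comp (f := fun p : ℝ × EuclideanSpace ℝ (Fin d) => (R ^ 2 * p.1, x₀ + R • p.2))
        (by fun_prop)
      rintro ⟨s, y⟩ ⟨hs, hy⟩
      simp only at hs hy
      refine ⟨⟨mul_nonneg hR2.le hs.1, ?_⟩, hmem y hy⟩
      have := hs.2
      rw [lt_div_iff₀ hR2] at this
      simp only
      linarith)
    (by
      intro y hy
      rw [mul_zero, hinit.2 _ (hmem y hy)]
      exact hu0 _ (hmem y hy))
    (by rw [hint]; positivity) (t / R ^ 2) (by positivity) htT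
    (by
      rw [hint, div_lt_iff₀ hR2]
      refine h2.trans_le (le_of_eq ?_)
      rw [Real.mul_rpow hRd.le hI.le, Real.rpow_sub hR, Real.inv_rpow (by positivity),
        ← Real.rpow_natCast R d, ← Real.rpow_mul hR.le, ← Real.rpow_natCast R 2]
      push_cast
      field_simp)
  have e3 : R ^ 2 * (t / R ^ 2) = t := by field_simp
  rw [e3, smul_zero, add_zero] at key
  exact key
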